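/- arXiv:2506.05194 — 2 statements merged into one kernel-verified Lean document; each statement's English description precedes it below -/
import Mathlib

section
/- Let d and k be integers with 2 ≤ k and 2k + 2 < d (i.e. k < d/2 − 1). Set s = ⌊d/(2k)⌋ and β = d/(2k) − s. Then for every δ > 0 there exists N₀ such that for every integer N ≥ N₀ with 2k ∣ N·d and every set A ⊆ {1,…,N} with |A| = β·N, the number of d-regular simple graphs on the vertex set {1,…,N} that admit a k-star decomposition with exactly s+1 stars centered at every vertex in A and exactly s stars centered at every vertex not in A is at least (1−δ) times the total number of d-regular simple graphs on {1,…,N}. -/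
/-- A graph is `d`-regular: every vertex has exactly `d` neighbors. -/
def IsRegularGraph {V : Type*} (G : SimpleGraph V) (d : ℕ) : Prop :=
  ∀ v, (G.neighborSet v).ncard = d

/-- `G` has a decomposition of its edge set into `k`-stars with exactly `m v`
stars centered at each vertex `v`.  A star is recorded as a pair `(center, edges)`. -/
def HasStarDecomp {V : Type*} [DecidableEq V] (G : SimpleGraph V) (k : ℕ)
    (m : V → ℕ) : Prop :=
  ∃ S : Finset (V × Finset (Sym2 V)),
    (∀ p ∈ S, p.2.card = k ∧ (↑p.2 : Set (Sym2 V)) ⊆ G.edgeSet ∧ ∀ e ∈ p.2, p.1 ∈ e) ∧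
    (∀ e ∈ G.edgeSet, ∃! p, p ∈ S ∧ e ∈ p.2) ∧
    (∀ v, (S.filter fun p => p.1 = v).card = m v)

/-! By Hall's theorem for edges and the slots of the prescribed stars, a graph with the right number
of edges has the required decomposition iff every vertex set `T` spans at most `∑ v ∈ T, k * m v`
edges. Violations are counted in the configuration model: a switching argument shows that a
proportion of configurations bounded below in terms of `d` is simple, so it suffices that a
proportion `o(1)` of all configurations contains a violating set. If `#T ≤ ε * N` or
`#Tᶜ ≤ ε * N`, then `T` or `Tᶜ` spans more than twice as many edges as it has vertices, which a
crude union bound excludes. For the remaining `T` the union bound is taken over the pairs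
`(#(T ∩ A), #(T \ A))`, and the exponential moment of the number of edges spanned by `T` beats the
entropy of the choice of `T`. Monotonicity and scaling reduce this last inequality to a few
parameters, for which it is verified by rational choices of the dual variables on finitely many
intervals; by convexity it is enough to check the endpoints. -/

section Hall

variable {V : Type*} {G : SimpleGraph V} {k : ℕ} {m : V → ℕ}

/-- The star with center `v` and index `i` in an assignment `F` of the edges of `G` to slots
`⟨v, i, j⟩`, the slot `j` of that star. -/
def starAt (F : G.edgeSet ≃ Σ v : V, Fin (m v) × Fin k) (c : Σ v : V, Fin (m v)) :
    Finset (Sym2 V) :=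
  Finset.univ.map ⟨fun j => (F.symm ⟨c.1, c.2, j⟩ : Sym2 V), fun j j' h => by
    simpa using F.symm.injective (Subtype.ext h)⟩

lemma card_starAt (F : G.edgeSet ≃ Σ v : V, Fin (m v) × Fin k) (c : Σ v : V, Fin (m v)) :
    (starAt F c).card = k := by
  simp [starAt]

lemma starAt_subset_edgeSet (F : G.edgeSet ≃ Σ v : V, Fin (m v) × Fin k)
    (c : Σ v : V, Fin (m v)) : (starAt F c : Set (Sym2 V)) ⊆ G.edgeSet := by
  rintro e he
  obtain ⟨j, -, rfl⟩ := Finset.mem_map.1 he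
  exact Subtype.property _

lemma coe_mem_starAt (F : G.edgeSet ≃ Σ v : V, Fin (m v) × Fin k) (c : Σ v : V, Fin (m v))
    (e : G.edgeSet) : (e : Sym2 V) ∈ starAt F c ↔ ⟨(F e).1, (F e).2.1⟩ = c := by
  constructor
  · intro he
    obtain ⟨j, -, hj⟩ := Finset.mem_map.1 he
    rw [← Subtype.ext hj, Equiv.apply_symm_apply]
  · rintro rfl
    exact Finset.mem_map.2 ⟨(F e).2.2, Finset.mem_univ _,
      congrArg Subtype.val (F.symm_apply_apply e)⟩

lemma starAt_injective (hk : 0 < k) (F : G.edgeSet ≃ Σ v : V, Fin (m v) × Fin k) :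
    Function.Injective (starAt F) := by
  intro c c' h
  let e := F.symm ⟨c.1, c.2, ⟨0, hk⟩⟩
  have he : ⟨(F e).1, (F e).2.1⟩ = c := by rw [Equiv.apply_symm_apply]
  exact he.symm.trans ((coe_mem_starAt F c' e).1 (h ▸ (coe_mem_starAt F c e).2 he))

variable [DecidableEq V]

lemma HasStarDecomp.of_equiv [Finite V] (hk : 0 < k) (F : G.edgeSet ≃ Σ v : V, Fin (m v) × Fin k)
    (hF : ∀ e : G.edgeSet, (F e).1 ∈ (e : Sym2 V)) : HasStarDecomp G k m := by
  cases nonempty_fintype V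
  let star : (Σ v : V, Fin (m v)) ↪ V × Finset (Sym2 V) :=
    ⟨fun c => (c.1, starAt F c), fun c c' h => starAt_injective hk F (congrArg Prod.snd h)⟩
  refine ⟨Finset.univ.map star, ?_, ?_, ?_⟩
  · simp only [Finset.mem_map, Finset.mem_univ, true_and]
    rintro _ ⟨c, rfl⟩
    refine ⟨card_starAt F c, starAt_subset_edgeSet F c, fun e he => ?_⟩
    lift e to G.edgeSet using starAt_subset_edgeSet F c he
    obtain rfl := (coe_mem_starAt F c e).1 he
    exact hF e
  · intro e he
    lift e to G.edgeSet using he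
    refine ⟨star ⟨(F e).1, (F e).2.1⟩, ⟨by simp, (coe_mem_starAt F _ e).2 rfl⟩, ?_⟩
    simp only [Finset.mem_map, Finset.mem_univ, true_and]
    rintro _ ⟨⟨c, rfl⟩, hc⟩
    rw [(coe_mem_starAt F c e).1 hc]
  · intro v
    rw [Finset.filter_map, Finset.card_map]
    have centered_at_v : (Finset.univ.filter fun c => (star c).1 = v) =
        Finset.univ.map (Function.Embedding.sigmaMk v) := by
      ext ⟨w, i⟩
      simp only [Finset.mem_filter, Finset.mem_univ, true_and, Finset.mem_map,
        Function.Embedding.sigmaMk_apply, star]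
      exact ⟨by rintro rfl; exact ⟨i, rfl⟩, by rintro ⟨_, h⟩; exact (congrArg Sigma.fst h).symm⟩
    exact (congrArg Finset.card centered_at_v).trans (by simp)

variable [Fintype V]

lemma card_filter_slots (T : Finset V) :
    (Finset.univ.filter fun σ : Σ v : V, Fin (m v) × Fin k => σ.1 ∈ T).card =
      ∑ v ∈ T, k * m v := by
  have : (Finset.univ.filter fun σ : Σ v : V, Fin (m v) × Fin k => σ.1 ∈ T) =
      T.sigma fun v => Finset.univ := by
    ext; simp
  simp [this, Finset.card_sigma, mul_comm]

lemma HasStarDecomp.of_card_le [DecidableRel G.Adj] (hk : 0 < k)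
    (hE : G.edgeFinset.card = ∑ v, k * m v)
    (h : ∀ T : Finset V, (G.edgeFinset.filter fun e => ∀ v ∈ e, v ∈ T).card ≤ ∑ v ∈ T, k * m v) :
    HasStarDecomp G k m := by
  let slots : G.edgeSet → Finset (Σ v : V, Fin (m v) × Fin k) := fun e =>
    Finset.univ.filter fun σ => σ.1 ∈ (e : Sym2 V)
  have hall : ∀ X : Finset G.edgeSet, X.card ≤ (X.biUnion slots).card := by
    intro X
    let T : Finset V := Finset.univ.filter fun v => ∃ e ∈ X, v ∈ (e : Sym2 V)
    have slots_X : X.biUnion slots = Finset.univ.filter fun σ => σ.1 ∈ T := by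
      ext σ; simp [slots, T]
    rw [slots_X, card_filter_slots, ← Finset.card_map (Function.Embedding.subtype _)]
    refine (Finset.card_le_card fun e he => ?_).trans (h T)
    obtain ⟨e, heX, rfl⟩ := Finset.mem_map.1 he
    simp only [Finset.mem_filter, SimpleGraph.mem_edgeFinset, T, Finset.mem_univ, true_and]
    exact ⟨e.2, fun v hv => ⟨e, heX, hv⟩⟩
  obtain ⟨f, hf, hf_slots⟩ := (Finset.all_card_le_biUnion_card_iff_exists_injective slots).1 hall
  have hbij : Function.Bijective f := by
    rw [Fintype.bijective_iff_injective_and_card, ← SimpleGraph.edgeFinset_card, hE,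
      ← card_filter_slots Finset.univ]
    simpa using hf
  exact .of_equiv hk (Equiv.ofBijective f hbij) fun e => by simpa [slots] using hf_slots e

end Hall

section Configurations

variable {ι V : Type*} {g : ι × Bool → V} {G : SimpleGraph V}

/-- The edge `i` of the configuration `g`: in the configuration model a multigraph with edges
indexed by `ι` is a map `g` sending each half-edge `(i, b)` to the vertex it is attached to. -/
def link (g : ι × Bool → V) (i : ι) : Sym2 V := s(g (i, false), g (i, true))

lemma mem_link {i : ι} {v : V} : v ∈ link g i ↔ ∃ b, g (i, b) = v := by
  simp [link, eq_comm]

/-- The configuration `g` enumerates the edges of the graph `G`, each exactly once. -/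
def Represents (g : ι × Bool → V) (G : SimpleGraph V) : Prop :=
  Function.Injective (link g) ∧ Set.range (link g) = G.edgeSet

/-- The configuration has neither loops nor repeated edges. -/
def IsSimpleConfig (g : ι × Bool → V) : Prop :=
  Function.Injective (link g) ∧ ∀ i, g (i, false) ≠ g (i, true)

lemma IsSimpleConfig.represents (h : IsSimpleConfig g) :
    Represents g (SimpleGraph.fromEdgeSet (Set.range (link g))) := by
  refine ⟨h.1, ?_⟩
  rw [SimpleGraph.edgeSet_fromEdgeSet, eq_comm, sdiff_eq_left, Set.disjoint_left]
  rintro _ ⟨i, rfl⟩ hi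
  exact h.2 i (by simpa [link] using hi)

namespace Represents

lemma eq {G' : SimpleGraph V} (h : Represents g G) (h' : Represents g G') : G = G' :=
  SimpleGraph.edgeSet_injective (h.2.symm.trans h'.2)

lemma link_mem_edgeSet (h : Represents g G) (i : ι) : link g i ∈ G.edgeSet :=
  h.2 ▸ Set.mem_range_self i

lemma exists_link_eq (h : Represents g G) {e : Sym2 V} (he : e ∈ G.edgeSet) :
    ∃ i, link g i = e :=
  (h.2 ▸ he : e ∈ Set.range (link g))

lemma ne (h : Represents g G) (i : ι) : g (i, false) ≠ g (i, true) :=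
  SimpleGraph.Adj.ne (h.link_mem_edgeSet i)

lemma card_fiber [Fintype ι] [Finite V] [DecidableEq V] (h : Represents g G) (v : V) :
    (Finset.univ.filter fun σ => g σ = v).card = (G.neighborSet v).ncard := by
  classical
  cases nonempty_fintype V
  rw [Set.ncard_eq_toFinset_card', ← SimpleGraph.neighborFinset_def,
    SimpleGraph.card_neighborFinset_eq_degree, ← SimpleGraph.card_incidenceFinset_eq_degree]
  refine Finset.card_bij (fun σ _ => link g σ.1) ?_ ?_ ?_
  · rintro ⟨i, b⟩ hσ
    rw [SimpleGraph.mem_incidenceFinset]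
    exact ⟨h.link_mem_edgeSet i, mem_link.2 ⟨b, (Finset.mem_filter.1 hσ).2⟩⟩
  · rintro ⟨i, b⟩ hσ ⟨i', b'⟩ hσ' hl
    obtain rfl : i = i' := h.1 hl
    have hgb : g (i, b) = g (i, b') :=
      (Finset.mem_filter.1 hσ).2.trans (Finset.mem_filter.1 hσ').2.symm
    have := h.ne i
    cases b <;> cases b' <;> simp_all
  · intro e he
    rw [SimpleGraph.mem_incidenceFinset] at he
    obtain ⟨i, rfl⟩ := h.exists_link_eq he.1
    obtain ⟨b, hb⟩ := mem_link.1 he.2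
    exact ⟨(i, b), by simpa using hb, rfl⟩

end Represents

/-- The number of edges of the configuration `g` with both ends in `S`. -/
def innerCount [Fintype ι] [DecidableEq V] (g : ι × Bool → V) (S : Finset V) : ℕ :=
  (Finset.univ.filter fun i => g (i, false) ∈ S ∧ g (i, true) ∈ S).card

lemma Represents.innerCount_eq [Fintype ι] [Fintype V] [DecidableEq V] [DecidableRel G.Adj]
    (h : Represents g G) (T : Finset V) :
    innerCount g T = (G.edgeFinset.filter fun e => ∀ v ∈ e, v ∈ T).card := by
  have link_inside : ∀ i, (∀ v ∈ link g i, v ∈ T) ↔ g (i, false) ∈ T ∧ g (i, true) ∈ T := by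
    simp [link]
  refine Finset.card_bij (fun i _ => link g i) ?_ (fun _ _ _ _ hl => h.1 hl) ?_
  · intro i hi
    rw [Finset.mem_filter, SimpleGraph.mem_edgeFinset, link_inside]
    exact ⟨h.link_mem_edgeSet i, (Finset.mem_filter.1 hi).2⟩
  · intro e he
    rw [Finset.mem_filter, SimpleGraph.mem_edgeFinset] at he
    obtain ⟨i, rfl⟩ := h.exists_link_eq he.1
    exact ⟨i, by simpa using (link_inside i).1 he.2, rfl⟩

/-- The configuration that labels the edges of `G` by `e` and orients the edge `e i` by `o i`,
relative to the orientation chosen by `Quot.out`. -/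
noncomputable def configOf (e : ι ≃ G.edgeSet) (o : ι → Bool) (σ : ι × Bool) : V :=
  if σ.2 = o σ.1 then (Quot.out (e σ.1 : Sym2 V)).1 else (Quot.out (e σ.1 : Sym2 V)).2

lemma mk_quot_out (e : Sym2 V) : s((Quot.out e).1, (Quot.out e).2) = e := Quot.out_eq e

lemma link_configOf (e : ι ≃ G.edgeSet) (o : ι → Bool) (i : ι) : link (configOf e o) i = e i := by
  rw [← mk_quot_out (e i : Sym2 V)]
  cases h : o i
  · simp [link, configOf, h]
  · simp only [link, configOf, h]
    exact Sym2.eq_swap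

lemma represents_configOf (e : ι ≃ G.edgeSet) (o : ι → Bool) : Represents (configOf e o) G := by
  have link_eq : link (configOf e o) = Subtype.val ∘ e := funext (link_configOf e o)
  rw [Represents, link_eq]
  exact ⟨Subtype.val_injective.comp e.injective, by simp [Set.range_comp]⟩

lemma configOf_inj {e e' : ι ≃ G.edgeSet} {o o' : ι → Bool} (h : configOf e o = configOf e' o') :
    e = e' ∧ o = o' := by
  obtain rfl : e = e' := by
    ext i
    rw [← link_configOf e o, h, link_configOf]
  refine ⟨rfl, funext fun i => ?_⟩
  have hne : (Quot.out (e i : Sym2 V)).1 ≠ (Quot.out (e i : Sym2 V)).2 := by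
    have hadj := (e i).2
    rw [← mk_quot_out (e i : Sym2 V)] at hadj
    exact SimpleGraph.Adj.ne hadj
  have hi := congrFun h (i, true)
  cases ho : o i <;> cases ho' : o' i <;> simp_all [configOf]

lemma Represents.exists_configOf_eq (h : Represents g G) :
    ∃ (e : ι ≃ G.edgeSet) (o : ι → Bool), configOf e o = g := by
  let e : ι ≃ G.edgeSet := Equiv.ofBijective (fun i => ⟨link g i, h.link_mem_edgeSet i⟩)
    ⟨fun i j hij => h.1 (congrArg Subtype.val hij), fun e =>
      (h.exists_link_eq e.2).imp fun _ hi => Subtype.ext hi⟩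
  classical
  refine ⟨e, fun i => decide ((Quot.out (link g i)).1 = g (i, true)), ?_⟩
  funext ⟨i, b⟩
  have hne := h.ne i
  have hi : (e i : Sym2 V) = link g i := rfl
  rcases Sym2.eq_iff.1 (mk_quot_out (link g i)) with ⟨h₁, h₂⟩ | ⟨h₁, h₂⟩ <;>
    cases b <;> simp [configOf, hi, h₁, h₂, hne]

variable [Fintype ι]

lemma natCard_represents [Finite V] (hG : Nat.card G.edgeSet = Fintype.card ι) :
    Nat.card {g : ι × Bool → V // Represents g G} =
      (Fintype.card ι).factorial * 2 ^ Fintype.card ι := by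
  classical
  have := Fintype.ofFinite G.edgeSet
  obtain ⟨e₀⟩ : Nonempty (ι ≃ G.edgeSet) := by
    rw [← Fintype.card_eq, ← hG, Nat.card_eq_fintype_card]
  let Φ : (ι ≃ G.edgeSet) × (ι → Bool) → {g : ι × Bool → V // Represents g G} :=
    fun p => ⟨configOf p.1 p.2, represents_configOf p.1 p.2⟩
  have hΦ : Function.Bijective Φ := by
    refine ⟨fun p p' h => Prod.ext_iff.2 (configOf_inj (congrArg Subtype.val h)), fun g => ?_⟩
    obtain ⟨e, o, h⟩ := g.2.exists_configOf_eq
    exact ⟨(e, o), Subtype.ext h⟩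
  rw [← Nat.card_congr (Equiv.ofBijective Φ hΦ), Nat.card_eq_fintype_card, Fintype.card_prod,
    Fintype.card_equiv e₀]
  simp

lemma natCard_sigma_represents [Finite V] {P : SimpleGraph V → Prop}
    (hP : ∀ G, P G → Nat.card G.edgeSet = Fintype.card ι) :
    Nat.card (Σ G : {G : SimpleGraph V // P G}, {g : ι × Bool → V // Represents g G.1}) =
      (Fintype.card ι).factorial * 2 ^ Fintype.card ι * Nat.card {G : SimpleGraph V // P G} := by
  have := Fintype.ofFinite {G : SimpleGraph V // P G}
  rw [Nat.card_sigma, Finset.sum_congr rfl fun G _ => natCard_represents (ι := ι) (hP G.1 G.2)]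
  simp [mul_comm]

lemma mul_natCard_le_card [Finite V] {P : SimpleGraph V → Prop} {S : Finset (ι × Bool → V)}
    (hP : ∀ G, P G → Nat.card G.edgeSet = Fintype.card ι)
    (hPS : ∀ g G, P G → Represents g G → g ∈ S) :
    (Fintype.card ι).factorial * 2 ^ Fintype.card ι * Nat.card {G : SimpleGraph V // P G} ≤
      S.card := by
  rw [← natCard_sigma_represents hP, ← Fintype.card_coe, ← Nat.card_eq_fintype_card]
  refine Nat.card_le_card_of_injective (fun x => ⟨x.2.1, hPS _ _ x.1.2 x.2.2⟩) ?_
  rintro ⟨⟨G, hG⟩, g, hg⟩ ⟨⟨G', hG'⟩, g', hg'⟩ h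
  obtain rfl : g = g' := congrArg Subtype.val h
  obtain rfl := hg.eq hg'
  rfl

lemma card_le_mul_natCard [Finite V] {P : SimpleGraph V → Prop} {S : Finset (ι × Bool → V)}
    (hP : ∀ G, P G → Nat.card G.edgeSet = Fintype.card ι)
    (hSP : ∀ g ∈ S, ∃ G, P G ∧ Represents g G) :
    S.card ≤
      (Fintype.card ι).factorial * 2 ^ Fintype.card ι * Nat.card {G : SimpleGraph V // P G} := by
  choose! G hG using hSP
  rw [← natCard_sigma_represents hP, ← Fintype.card_coe, ← Nat.card_eq_fintype_card]
  refine Nat.card_le_card_of_injective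
    (fun g : S => (⟨⟨G g, (hG g g.2).1⟩, g, (hG g g.2).2⟩ :
      Σ G : {G : SimpleGraph V // P G}, {g : ι × Bool → V // Represents g G.1})) fun g g' h => ?_
  exact Subtype.ext (congrArg (fun x => x.2.1) h)

variable [Fintype V]

lemma IsRegularGraph.natCard_edgeSet {d : ℕ} (hG : IsRegularGraph G d) :
    2 * Nat.card G.edgeSet = Fintype.card V * d := by
  classical
  have hdeg : ∀ v, G.degree v = d := fun v => by
    rw [← hG v, Set.ncard_eq_toFinset_card', ← SimpleGraph.neighborFinset_def,
      SimpleGraph.card_neighborFinset_eq_degree]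
  rw [Nat.card_eq_fintype_card, ← SimpleGraph.edgeFinset_card,
    ← SimpleGraph.sum_degrees_eq_twice_card_edges]
  simp [hdeg]

variable [DecidableEq ι] [DecidableEq V] {d : ℕ}

/-- The configurations in which every vertex carries exactly `d` half-edges. -/
def configs (ι V : Type*) [Fintype ι] [DecidableEq ι] [Fintype V] [DecidableEq V] (d : ℕ) :
    Finset (ι × Bool → V) :=
  Finset.univ.filter fun g => ∀ v, (Finset.univ.filter fun σ => g σ = v).card = d

lemma Represents.mem_configs_iff (h : Represents g G) :
    g ∈ configs ι V d ↔ IsRegularGraph G d := by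
  simp [configs, IsRegularGraph, h.card_fiber]

lemma card_simple_le_mul_natCard_regular [DecidablePred (IsSimpleConfig (ι := ι) (V := V))]
    (hc : 2 * Fintype.card ι = Fintype.card V * d) :
    ((configs ι V d).filter IsSimpleConfig).card ≤ (Fintype.card ι).factorial *
      2 ^ Fintype.card ι * Nat.card {G : SimpleGraph V // IsRegularGraph G d} := by
  refine card_le_mul_natCard (fun G hG => ?_) fun g hg => ?_
  · have := hG.natCard_edgeSet
    omega
  · have hrep := (Finset.mem_filter.1 hg).2.represents
    exact ⟨_, hrep.mem_configs_iff.1 (Finset.mem_filter.1 hg).1, hrep⟩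

end Configurations

section Switching

variable {ι V : Type*} {g : ι × Bool → V}

/-- The edge `s(u, v)` is neither a loop nor an edge of the configuration `g`. -/
def IsFresh (g : ι × Bool → V) (u v : V) : Prop := u ≠ v ∧ s(u, v) ∉ Set.range (link g)

lemma IsFresh.symm {u v : V} (h : IsFresh g u v) : IsFresh g v u := by
  rwa [IsFresh, ne_comm, Sym2.eq_swap]

/-- The edge `i` is a loop or parallel to another edge. -/
def Redundant (g : ι × Bool → V) (i : ι) : Prop :=
  g (i, false) = g (i, true) ∨ ∃ j ≠ i, link g j = link g i

/-- Both edges produced by the switching of the edges `p.1` and `p.2` are fresh. -/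
def Switchable (g : ι × Bool → V) (p : ι × ι) : Prop :=
  IsFresh g (g (p.1, false)) (g (p.2, true)) ∧ IsFresh g (g (p.2, false)) (g (p.1, true))

section Switch

variable [DecidableEq ι]

/-- The switching of the edges `p.1` and `p.2`: it exchanges their second half-edges. -/
def switch (p : ι × ι) (g : ι × Bool → V) : ι × Bool → V :=
  fun σ => if σ.2 then g (Equiv.swap p.1 p.2 σ.1, true) else g σ

@[simp] lemma switch_switch (p : ι × ι) (g : ι × Bool → V) : switch p (switch p g) = g := by
  funext ⟨l, b⟩
  cases b <;> simp [switch]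

@[simp] lemma switch_false (p : ι × ι) (g : ι × Bool → V) (l : ι) :
    switch p g (l, false) = g (l, false) := by
  simp [switch]

@[simp] lemma switch_left (i j : ι) (g : ι × Bool → V) :
    switch (i, j) g (i, true) = g (j, true) := by
  simp [switch]

@[simp] lemma switch_right (i j : ι) (g : ι × Bool → V) :
    switch (i, j) g (j, true) = g (i, true) := by
  simp [switch]

lemma link_switch_of_ne {i j l : ι} (g : ι × Bool → V) (hi : l ≠ i) (hj : l ≠ j) :
    link (switch (i, j) g) l = link g l := by
  simp [link, switch, Equiv.swap_apply_of_ne_of_ne hi hj]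

end Switch

lemma card_filter_prod [Fintype ι] (R : ι × ι → Prop) [DecidablePred R] :
    (Finset.univ.filter R).card = ∑ i, (Finset.univ.filter fun j => R (i, j)).card := by
  simp only [Finset.card_filter, Fintype.sum_prod_type]

variable [Fintype ι] [DecidableEq V]

/-- The non-loop edges of a configuration, without multiplicity. -/
def properEdges (g : ι × Bool → V) : Finset (Sym2 V) :=
  (Finset.univ.image (link g)).filter fun e => ¬ e.IsDiag

/-- The number of edges that a configuration loses to loops and repetitions. -/
def defect (g : ι × Bool → V) : ℕ := Fintype.card ι - (properEdges g).card

lemma mem_properEdges {e : Sym2 V} :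
    e ∈ properEdges g ↔ e ∈ Set.range (link g) ∧ ¬ e.IsDiag := by
  simp [properEdges]

lemma IsFresh.notMem_properEdges {u v : V} (h : IsFresh g u v) : s(u, v) ∉ properEdges g :=
  fun he => h.2 (mem_properEdges.1 he).1

lemma isSimpleConfig_of_defect_eq_zero (h : defect g = 0) : IsSimpleConfig g := by
  have card_le : Fintype.card ι ≤ (properEdges g).card := Nat.sub_eq_zero_iff_le.1 h
  have card_image : (Finset.univ.image (link g)).card = (Finset.univ : Finset ι).card :=
    le_antisymm Finset.card_image_le (card_le.trans (Finset.card_filter_le _ _))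
  have properEdges_eq : properEdges g = Finset.univ.image (link g) :=
    Finset.eq_of_subset_of_card_le (Finset.filter_subset _ _) (card_image.le.trans card_le)
  refine ⟨by simpa using Finset.card_image_iff.1 card_image, fun i => ?_⟩
  have link_mem : link g i ∈ properEdges g := by
    rw [properEdges_eq]; exact Finset.mem_image_of_mem _ (Finset.mem_univ i)
  simpa [link] using (mem_properEdges.1 link_mem).2

open Classical in
lemma defect_le_card_redundant (g : ι × Bool → V) :
    defect g ≤ (Finset.univ.filter (Redundant g)).card := by
  have card_not_redundant_le :
      (Finset.univ.filter fun i => ¬ Redundant g i).card ≤ (properEdges g).card := by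
    refine Finset.card_le_card_of_injOn (link g) ?_ ?_
    · intro i hi
      have hi := (Finset.mem_filter.1 hi).2
      exact mem_properEdges.2 ⟨⟨i, rfl⟩, fun hd => hi (Or.inl (by simpa [link] using hd))⟩
    · intro i _ j hj hij
      by_contra hne
      exact (Finset.mem_filter.1 hj).2 (Or.inr ⟨i, hne, hij⟩)
  have := Finset.card_filter_add_card_filter_not (s := (Finset.univ : Finset ι)) (Redundant g)
  rw [Finset.card_univ] at this
  unfold defect
  omega

/-- The vertex `v` together with all vertices joined to it by an edge of the configuration `g`. -/
def closedNbhd (g : ι × Bool → V) (v : V) : Finset V :=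
  insert v ((Finset.univ.filter fun σ => g σ = v).image fun σ => g (σ.1, !σ.2))

lemma mem_closedNbhd_of_mem_range {u v : V} (h : s(v, u) ∈ Set.range (link g)) :
    u ∈ closedNbhd g v := by
  obtain ⟨i, hi⟩ := h
  refine Finset.mem_insert_of_mem (Finset.mem_image.2 ?_)
  rcases Sym2.eq_iff.1 hi with ⟨hv, hu⟩ | ⟨hu, hv⟩
  · exact ⟨(i, false), by simpa using hv, hu⟩
  · exact ⟨(i, true), by simpa using hv, hu⟩

lemma isFresh_of_notMem_closedNbhd {u v : V} (h : u ∉ closedNbhd g v) : IsFresh g v u :=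
  ⟨fun hvu => h (hvu ▸ Finset.mem_insert_self _ _), fun he => h (mem_closedNbhd_of_mem_range he)⟩

variable [DecidableEq ι]

lemma Redundant.erase_properEdges_subset {i : ι} (hi : Redundant g i) (j : ι) :
    (properEdges g).erase (link g j) ⊆ properEdges (switch (i, j) g) := by
  intro e he
  obtain ⟨hej, he⟩ := Finset.mem_erase.1 he
  obtain ⟨⟨l, hl⟩, hd⟩ := mem_properEdges.1 he
  obtain ⟨l, hli, rfl⟩ : ∃ l, l ≠ i ∧ link g l = e := by
    by_cases hli : l = i
    · subst hli
      rcases hi with hi | ⟨l', hl', hll'⟩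
      · exact absurd (by rw [← hl]; simpa [link] using hi) hd
      · exact ⟨l', hl', hll'.trans hl⟩
    · exact ⟨l, hli, hl⟩
  have hlj : l ≠ j := by rintro rfl; exact hej rfl
  exact mem_properEdges.2 ⟨⟨l, link_switch_of_ne g hli hlj⟩, hd⟩

lemma card_properEdges_lt_card_properEdges_switch {i j : ι} (hi : Redundant g i)
    (h : Switchable g (i, j)) : (properEdges g).card < (properEdges (switch (i, j) g)).card := by
  obtain ⟨fresh_i, fresh_j⟩ := h
  have new_i : s(g (i, false), g (j, true)) ∈ properEdges (switch (i, j) g) :=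
    mem_properEdges.2 ⟨⟨i, by simp [link]⟩, by simpa using fresh_i.1⟩
  have new_j : s(g (j, false), g (i, true)) ∈ properEdges (switch (i, j) g) :=
    mem_properEdges.2 ⟨⟨j, by simp [link]⟩, by simpa using fresh_j.1⟩
  have old := hi.erase_properEdges_subset j
  by_cases heq : s(g (i, false), g (j, true)) = s(g (j, false), g (i, true))
  · -- If the two new edges coincide, then `j` was a loop and no proper edge gets lost.
    have loop_j : g (j, false) = g (j, true) := by
      rcases Sym2.eq_iff.1 heq with ⟨-, hij⟩ | ⟨-, hj⟩
      · exact absurd ⟨i, by simp [link, hij]⟩ fresh_i.2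
      · exact hj.symm
    have hj : link g j ∉ properEdges g := fun h =>
      (mem_properEdges.1 h).2 (by simpa [link] using loop_j)
    rw [Finset.erase_eq_of_notMem hj] at old
    rw [← Nat.succ_le_iff, Nat.succ_eq_add_one,
      ← Finset.card_insert_of_notMem fresh_i.notMem_properEdges]
    exact Finset.card_le_card (Finset.insert_subset new_i old)
  · have card_le := Finset.card_le_card
      (Finset.insert_subset new_i (Finset.insert_subset new_j old))
    have card_erase := Finset.pred_card_le_card_erase (s := properEdges g) (a := link g j)
    rw [Finset.card_insert_of_notMem, Finset.card_insert_of_notMem] at card_le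
    · omega
    · exact fun h => fresh_j.notMem_properEdges (Finset.mem_of_mem_erase h)
    · rw [Finset.mem_insert, not_or]
      exact ⟨heq, fun h => fresh_i.notMem_properEdges (Finset.mem_of_mem_erase h)⟩

lemma mem_closedNbhd_of_redundant_switch {i j : ι} (hr : Redundant (switch (i, j) g) i)
    (hs : Switchable (switch (i, j) g) (i, j)) :
    g (j, true) ∈ closedNbhd g (g (i, false)) ∨ g (j, false) = g (i, false) := by
  have hne : g (i, false) ≠ g (i, true) := by simpa using hs.1.1
  rcases hr with loop | ⟨l, hli, hl⟩
  · simp only [switch_false, switch_left] at loop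
    exact Or.inl (loop ▸ Finset.mem_insert_self _ _)
  · by_cases hlj : l = j
    · subst hlj
      simp only [link, switch_false, switch_left, switch_right] at hl
      rcases Sym2.eq_iff.1 hl with ⟨hj, -⟩ | ⟨-, hi⟩
      · exact Or.inr hj
      · exact absurd hi.symm hne
    · rw [link_switch_of_ne g hli hlj] at hl
      exact Or.inl (mem_closedNbhd_of_mem_range ⟨l, hl.trans (by simp [link])⟩)

variable [Fintype V] {d : ℕ}

lemma card_fiber_of_mem_configs (hg : g ∈ configs ι V d) (v : V) :
    (Finset.univ.filter fun σ => g σ = v).card = d :=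
  (Finset.mem_filter.1 hg).2 v

lemma card_filter_mem_le (hg : g ∈ configs ι V d) (b : Bool) (W : Finset V) :
    (Finset.univ.filter fun i => g (i, b) ∈ W).card ≤ d * W.card := by
  have : (Finset.univ.filter fun i => g (i, b) ∈ W).card ≤
      (W.biUnion fun v => Finset.univ.filter fun σ => g σ = v).card := by
    refine Finset.card_le_card_of_injOn (fun i => (i, b)) ?_ fun i _ j _ h => (Prod.ext_iff.1 h).1
    intro i hi
    simpa using hi
  refine this.trans (Finset.card_biUnion_le.trans ?_)
  simp [card_fiber_of_mem_configs hg, mul_comm]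

lemma card_closedNbhd_le (hg : g ∈ configs ι V d) (v : V) : (closedNbhd g v).card ≤ d + 1 :=
  (Finset.card_insert_le _ _).trans
    (Nat.succ_le_succ (Finset.card_image_le.trans (card_fiber_of_mem_configs hg v).le))

lemma card_filter_mem_closedNbhd_le (hg : g ∈ configs ι V d) (b : Bool) (v : V) :
    (Finset.univ.filter fun i => g (i, b) ∈ closedNbhd g v).card ≤ d * (d + 1) :=
  (card_filter_mem_le hg b _).trans (Nat.mul_le_mul_left d (card_closedNbhd_le hg v))

open Classical in
lemma card_not_switchable_le (hg : g ∈ configs ι V d) (i : ι) :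
    (Finset.univ.filter fun j => ¬ Switchable g (i, j)).card ≤ 2 * (d * (d + 1)) := by
  have hsub : (Finset.univ.filter fun j => ¬ Switchable g (i, j)) ⊆
      (Finset.univ.filter fun j => g (j, true) ∈ closedNbhd g (g (i, false))) ∪
        Finset.univ.filter fun j => g (j, false) ∈ closedNbhd g (g (i, true)) := by
    intro j hj
    by_contra hn
    simp only [Finset.mem_union, Finset.mem_filter, Finset.mem_univ, true_and, not_or] at hn hj
    exact hj ⟨isFresh_of_notMem_closedNbhd hn.1, (isFresh_of_notMem_closedNbhd hn.2).symm⟩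
  refine (Finset.card_le_card hsub).trans ((Finset.card_union_le _ _).trans ?_)
  have := card_filter_mem_closedNbhd_le hg true (g (i, false))
  have := card_filter_mem_closedNbhd_le hg false (g (i, true))
  omega

open Classical in
lemma defect_mul_le_card_redundant_switchable (hg : g ∈ configs ι V d) :
    defect g * (Fintype.card ι - 2 * (d * (d + 1))) ≤
      (Finset.univ.filter fun p : ι × ι => Redundant g p.1 ∧ Switchable g p).card := by
  have card_switchable : ∀ i, Fintype.card ι - 2 * (d * (d + 1)) ≤
      (Finset.univ.filter fun j => Switchable g (i, j)).card := fun i => by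
    have := card_not_switchable_le hg i
    have := Finset.card_filter_add_card_filter_not (s := (Finset.univ : Finset ι))
      fun j => Switchable g (i, j)
    rw [Finset.card_univ] at this
    omega
  calc defect g * (Fintype.card ι - 2 * (d * (d + 1)))
      ≤ (Finset.univ.filter (Redundant g)).card * (Fintype.card ι - 2 * (d * (d + 1))) :=
        Nat.mul_le_mul_right _ (defect_le_card_redundant g)
    _ ≤ ∑ i with Redundant g i, (Finset.univ.filter fun j => Switchable g (i, j)).card :=
        Finset.card_nsmul_le_sum _ _ _ fun i _ => card_switchable i
    _ = ∑ i, (Finset.univ.filter fun j => Redundant g i ∧ Switchable g (i, j)).card := by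
        rw [Finset.sum_filter]
        refine Finset.sum_congr rfl fun i _ => ?_
        by_cases hi : Redundant g i <;> simp [hi]
    _ = (Finset.univ.filter fun p : ι × ι => Redundant g p.1 ∧ Switchable g p).card :=
        (card_filter_prod fun p => Redundant g p.1 ∧ Switchable g p).symm

open Classical in
lemma card_redundant_switchable_switch_le (hg : g ∈ configs ι V d) :
    (Finset.univ.filter fun p : ι × ι => Redundant (switch p g) p.1 ∧
      Switchable (switch p g) p).card ≤ Fintype.card ι * (d * (d + 2)) := by
  rw [card_filter_prod]
  refine Finset.sum_le_card_nsmul _ _ _ fun i _ => ?_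
  have hsub : (Finset.univ.filter fun j =>
        Redundant (switch (i, j) g) i ∧ Switchable (switch (i, j) g) (i, j)) ⊆
      (Finset.univ.filter fun j => g (j, true) ∈ closedNbhd g (g (i, false))) ∪
        Finset.univ.filter fun j => g (j, false) ∈ ({g (i, false)} : Finset V) := by
    intro j hj
    obtain ⟨hr, hs⟩ := (Finset.mem_filter.1 hj).2
    simpa using mem_closedNbhd_of_redundant_switch hr hs
  refine (Finset.card_le_card hsub).trans ((Finset.card_union_le _ _).trans ?_)
  have card_fst := card_filter_mem_closedNbhd_le hg true (g (i, false))
  have card_snd := card_filter_mem_le hg false {g (i, false)}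
  rw [Finset.card_singleton] at card_snd
  linarith

lemma switch_mem_configs (hg : g ∈ configs ι V d) (p : ι × ι) : switch p g ∈ configs ι V d := by
  refine Finset.mem_filter.2 ⟨Finset.mem_univ _, fun v => ?_⟩
  rw [← card_fiber_of_mem_configs hg v]
  let f : ι × Bool → ι × Bool := fun σ => if σ.2 then (Equiv.swap p.1 p.2 σ.1, true) else σ
  have switch_eq : ∀ σ, switch p g σ = g (f σ) := by
    rintro ⟨l, b⟩; cases b <;> simp [switch, f]
  have f_f : ∀ σ, f (f σ) = σ := by
    rintro ⟨l, b⟩; cases b <;> simp [f]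
  refine Finset.card_bij' (fun σ _ => f σ) (fun σ _ => f σ) ?_ ?_
    (fun σ _ => f_f σ) fun σ _ => f_f σ
  · intro σ hσ; simpa [switch_eq] using hσ
  · intro σ hσ; simpa [switch_eq, f_f] using hσ

-- Count the pairs of a configuration in `X` and a switching of it that destroys a redundant edge.
lemma sum_defect_mul_le {X Y : Finset (ι × Bool → V)} (hX : X ⊆ configs ι V d)
    (hY : Y ⊆ configs ι V d)
    (hXY : ∀ g ∈ X, ∀ p : ι × ι, Redundant g p.1 → Switchable g p → switch p g ∈ Y) :
    (∑ g ∈ X, defect g) * (Fintype.card ι - 2 * (d * (d + 1))) ≤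
      Y.card * (Fintype.card ι * (d * (d + 2))) := by
  classical
  let R : (ι × Bool → V) → ι × ι → Prop := fun g p => Redundant g p.1 ∧ Switchable g p
  calc (∑ g ∈ X, defect g) * (Fintype.card ι - 2 * (d * (d + 1)))
      ≤ ∑ g ∈ X, (Finset.univ.filter fun p => R g p).card := by
        rw [Finset.sum_mul]
        exact Finset.sum_le_sum fun g hg => defect_mul_le_card_redundant_switchable (hX hg)
    _ = ∑ p, (X.filter fun g => R g p).card :=
        Finset.sum_card_bipartiteAbove_eq_sum_card_bipartiteBelow R
    _ ≤ ∑ p, (Y.filter fun g => R (switch p g) p).card := by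
        refine Finset.sum_le_sum fun p _ => Finset.card_le_card_of_injOn (switch p) ?_ ?_
        · intro g hg
          obtain ⟨hg, hR⟩ := Finset.mem_filter.1 hg
          exact Finset.mem_filter.2 ⟨hXY g hg p hR.1 hR.2, by rwa [switch_switch]⟩
        · intro g _ g' _ h
          rw [← switch_switch p g, h, switch_switch]
    _ = ∑ g ∈ Y, (Finset.univ.filter fun p => R (switch p g) p).card :=
        (Finset.sum_card_bipartiteAbove_eq_sum_card_bipartiteBelow
          (fun g p => R (switch p g) p)).symm
    _ ≤ Y.card * (Fintype.card ι * (d * (d + 2))) :=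
        Finset.sum_le_card_nsmul _ _ _ fun g hg => card_redundant_switchable_switch_le (hY hg)

lemma sum_defect_le {X Y : Finset (ι × Bool → V)} (hι : 4 * (d * (d + 1)) < Fintype.card ι)
    (hX : X ⊆ configs ι V d) (hY : Y ⊆ configs ι V d)
    (hXY : ∀ g ∈ X, ∀ p : ι × ι, Redundant g p.1 → Switchable g p → switch p g ∈ Y) :
    ∑ g ∈ X, defect g ≤ 2 * (d * (d + 2)) * Y.card := by
  refine Nat.le_of_mul_le_mul_right (c := Fintype.card ι) ?_ (by omega)
  calc (∑ g ∈ X, defect g) * Fintype.card ι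
      ≤ (∑ g ∈ X, defect g) * (2 * (Fintype.card ι - 2 * (d * (d + 1)))) :=
        Nat.mul_le_mul_left _ (by omega)
    _ = 2 * ((∑ g ∈ X, defect g) * (Fintype.card ι - 2 * (d * (d + 1)))) := by ring
    _ ≤ 2 * (Y.card * (Fintype.card ι * (d * (d + 2)))) :=
        Nat.mul_le_mul_left _ (sum_defect_mul_le hX hY hXY)
    _ = 2 * (d * (d + 2)) * Y.card * Fintype.card ι := by ring

/-- The configurations that lose at most `b` edges to loops and repetitions. -/
def lowDefect (ι V : Type*) [Fintype ι] [DecidableEq ι] [Fintype V] [DecidableEq V] (d b : ℕ) :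
    Finset (ι × Bool → V) :=
  (configs ι V d).filter fun g => defect g ≤ b

lemma card_lowDefect_succ_le (hι : 4 * (d * (d + 1)) < Fintype.card ι) (b : ℕ) :
    (lowDefect ι V d (b + 1)).card ≤ (1 + 2 * (d * (d + 2))) * (lowDefect ι V d b).card := by
  let X := (configs ι V d).filter fun g => defect g = b + 1
  have hsub : lowDefect ι V d (b + 1) ⊆ lowDefect ι V d b ∪ X := by
    intro g hg
    simp only [lowDefect, X, Finset.mem_union, Finset.mem_filter] at hg ⊢
    have : defect g ≤ b ∨ defect g = b + 1 := by omega
    tauto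
  have sum_le : ∑ g ∈ X, defect g ≤ 2 * (d * (d + 2)) * (lowDefect ι V d b).card := by
    refine sum_defect_le hι (Finset.filter_subset _ _) (Finset.filter_subset _ _) ?_
    rintro g hg ⟨i, j⟩ hr hs
    obtain ⟨hg, hb⟩ := Finset.mem_filter.1 hg
    refine Finset.mem_filter.2 ⟨switch_mem_configs hg _, ?_⟩
    have : (properEdges g).card < (properEdges (switch (i, j) g)).card :=
      card_properEdges_lt_card_properEdges_switch hr hs
    unfold defect at hb ⊢
    omega
  have card_le_sum : X.card ≤ ∑ g ∈ X, defect g := by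
    rw [Finset.card_eq_sum_ones]
    refine Finset.sum_le_sum fun g hg => ?_
    have := (Finset.mem_filter.1 hg).2
    omega
  linarith [(Finset.card_le_card hsub).trans (Finset.card_union_le _ _)]

lemma card_lowDefect_le_pow_mul (hι : 4 * (d * (d + 1)) < Fintype.card ι) (b : ℕ) :
    (lowDefect ι V d b).card ≤ (1 + 2 * (d * (d + 2))) ^ b * (lowDefect ι V d 0).card := by
  induction b with
  | zero => simp
  | succ b ih =>
    refine (card_lowDefect_succ_le hι b).trans ((Nat.mul_le_mul_left _ ih).trans_eq ?_)
    ring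

lemma card_configs_le_two_mul_card_lowDefect (hι : 4 * (d * (d + 1)) < Fintype.card ι) :
    (configs ι V d).card ≤ 2 * (lowDefect ι V d (4 * (d * (d + 2)))).card := by
  set C := d * (d + 2)
  have sum_le : ∑ g ∈ configs ι V d, defect g ≤ 2 * C * (configs ι V d).card :=
    sum_defect_le hι subset_rfl subset_rfl fun g hg p _ _ => switch_mem_configs hg p
  have markov : ((configs ι V d).filter fun g => ¬ defect g ≤ 4 * C).card * (4 * C + 1) ≤
      ∑ g ∈ configs ι V d, defect g := by
    rw [← smul_eq_mul]
    refine (Finset.card_nsmul_le_sum _ _ _ fun g hg => ?_).trans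
      (Finset.sum_le_sum_of_subset (Finset.filter_subset _ _))
    have := (Finset.mem_filter.1 hg).2
    omega
  have := Finset.card_filter_add_card_filter_not (s := configs ι V d) fun g => defect g ≤ 4 * C
  unfold lowDefect
  by_contra!
  nlinarith

/-- A bound on the ratio of the number of all configurations to that of the simple ones, obtained
from `4 * d * (d + 2)` rounds of switching. -/
def switchingConstant (d : ℕ) : ℕ := 2 * (1 + 2 * (d * (d + 2))) ^ (4 * (d * (d + 2)))

lemma card_configs_le_mul_card_simple [DecidablePred (IsSimpleConfig (ι := ι) (V := V))]
    (hι : 4 * (d * (d + 1)) < Fintype.card ι) :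
    (configs ι V d).card ≤ switchingConstant d * ((configs ι V d).filter IsSimpleConfig).card := by
  have lowDefect_zero_subset : lowDefect ι V d 0 ⊆ (configs ι V d).filter IsSimpleConfig :=
    Finset.monotone_filter_right _ fun g _ (h : defect g ≤ 0) =>
      isSimpleConfig_of_defect_eq_zero (Nat.le_zero.1 h)
  refine (card_configs_le_two_mul_card_lowDefect hι).trans ?_
  rw [switchingConstant, mul_assoc]
  exact Nat.mul_le_mul_left _ ((card_lowDefect_le_pow_mul hι _).trans
    (Nat.mul_le_mul_left _ (Finset.card_le_card lowDefect_zero_subset)))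

end Switching

open Real

section LogCertificates

/-- The value of a list of terms `c * log q`, each stored as the pair `(c, q)`. -/
noncomputable def logSum (l : List (ℚ × ℚ)) : ℝ := (l.map fun p => (p.1 : ℝ) * log (p.2 : ℝ)).sum

/-- The exponent `t * c` of `q` in `exp (t * (c * log q))`, rounded to an integer in the direction
that increases the result. -/
def roundedExponent (t : ℕ) (p : ℚ × ℚ) : ℤ :=
  if p.2.den ≤ p.2.num then ⌈p.1 * (t : ℚ)⌉ else ⌊p.1 * (t : ℚ)⌋

/-- The part of `q ^ roundedExponent t (c, q)` that is left in the numerator when all exponents are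
made natural numbers. -/
def powNum (t : ℕ) (p : ℚ × ℚ) : ℕ :=
  p.2.num.toNat ^ (roundedExponent t p).toNat * p.2.den ^ (-roundedExponent t p).toNat

/-- The denominator that goes with `powNum`. -/
def powDen (t : ℕ) (p : ℚ × ℚ) : ℕ :=
  p.2.num.toNat ^ (-roundedExponent t p).toNat * p.2.den ^ (roundedExponent t p).toNat

/-- A check in integer arithmetic that `exp (t * logSum l) < 1`, with rounded exponents. -/
def logSumCheck (t : ℕ) (l : List (ℚ × ℚ)) : Bool :=
  l.all (fun p => 0 < p.2.num) && decide ((l.map (powNum t)).prod < (l.map (powDen t)).prod)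

lemma mul_log_le_roundedExponent_mul_log (t : ℕ) {p : ℚ × ℚ} (hp : 0 < p.2) :
    (t : ℝ) * (p.1 * log p.2) ≤ roundedExponent t p * log p.2 := by
  have hp' : (0 : ℝ) < p.2 := by exact_mod_cast hp
  rw [roundedExponent, ← mul_assoc, mul_comm (t : ℝ)]
  split_ifs with h
  · have one_le : (1 : ℚ) ≤ p.2 := by
      rw [← Rat.num_div_den p.2, one_le_div (by exact_mod_cast p.2.den_pos)]
      exact_mod_cast h
    exact mul_le_mul_of_nonneg_right (by exact_mod_cast Int.le_ceil (p.1 * (t : ℚ)))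
      (log_nonneg (by exact_mod_cast one_le))
  · have le_one : p.2 ≤ (1 : ℚ) := by
      rw [← Rat.num_div_den p.2, div_le_one (by exact_mod_cast p.2.den_pos)]
      exact_mod_cast (not_le.1 h).le
    exact mul_le_mul_of_nonpos_right (by exact_mod_cast Int.floor_le (p.1 * (t : ℚ)))
      (log_nonpos hp'.le (by exact_mod_cast le_one))

lemma powNum_pos (t : ℕ) {p : ℚ × ℚ} (hp : 0 < p.2.num) : 0 < powNum t p := by
  have : 0 < p.2.num.toNat := by omega
  have := p.2.den_pos
  unfold powNum; positivity

lemma powDen_pos (t : ℕ) {p : ℚ × ℚ} (hp : 0 < p.2.num) : 0 < powDen t p := by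
  have : 0 < p.2.num.toNat := by omega
  have := p.2.den_pos
  unfold powDen; positivity

lemma roundedExponent_mul_log (t : ℕ) {p : ℚ × ℚ} (hp : 0 < p.2.num) :
    (roundedExponent t p : ℝ) * log p.2 = log (powNum t p) - log (powDen t p) := by
  have num_pos : 0 < p.2.num.toNat := by omega
  have := p.2.den_pos
  have log_eq : log (p.2 : ℝ) = log (p.2.num.toNat : ℝ) - log (p.2.den : ℝ) := by
    have num_eq : (p.2.num.toNat : ℝ) = (p.2.num : ℝ) := by
      exact_mod_cast congrArg (Int.cast (R := ℝ)) (Int.toNat_of_nonneg hp.le)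
    rw [← log_div (by positivity) (by positivity), num_eq]
    exact_mod_cast congrArg (fun q : ℚ => log (q : ℝ)) (Rat.num_div_den p.2).symm
  have exponent_eq : (roundedExponent t p : ℝ) =
      ((roundedExponent t p).toNat : ℝ) - ((-roundedExponent t p).toNat : ℝ) := by
    exact_mod_cast (Int.toNat_sub_toNat_neg (roundedExponent t p)).symm
  simp only [powNum, powDen, Nat.cast_mul, Nat.cast_pow]
  rw [log_mul (by positivity) (by positivity), log_mul (by positivity) (by positivity), log_pow,
    log_pow, log_pow, log_pow, log_eq, exponent_eq]
  ring

lemma prod_map_pos {α : Type*} {f : α → ℕ} {l : List α} (hf : ∀ p ∈ l, 0 < f p) :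
    0 < (l.map f).prod :=
  List.prod_pos fun x hx => by
    obtain ⟨p, hp, rfl⟩ := List.mem_map.1 hx
    exact hf p hp

lemma mul_logSum_le (t : ℕ) {l : List (ℚ × ℚ)} (hl : ∀ p ∈ l, 0 < p.2.num) :
    (t : ℝ) * logSum l ≤ log ((l.map (powNum t)).prod : ℕ) - log ((l.map (powDen t)).prod : ℕ) := by
  induction l with
  | nil => simp [logSum]
  | cons p l ih =>
    have hp := hl p List.mem_cons_self
    have hl' := fun q hq => hl q (List.mem_cons_of_mem _ hq)
    have num_pos := powNum_pos t hp
    have den_pos := powDen_pos t hp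
    have prod_num_pos := prod_map_pos fun q hq => powNum_pos t (hl' q hq)
    have prod_den_pos := prod_map_pos fun q hq => powDen_pos t (hl' q hq)
    have head_le := mul_log_le_roundedExponent_mul_log t (Rat.num_pos.1 hp)
    rw [roundedExponent_mul_log t hp] at head_le
    have logSum_cons : logSum (p :: l) = p.1 * log p.2 + logSum l := by simp [logSum]
    rw [logSum_cons, List.map_cons, List.map_cons, List.prod_cons, List.prod_cons, Nat.cast_mul,
      Nat.cast_mul, log_mul (by positivity) (by positivity),
      log_mul (by positivity) (by positivity)]
    linarith [ih hl']

lemma logSum_neg_of_check {t : ℕ} (ht : 0 < t) {l : List (ℚ × ℚ)} (h : logSumCheck t l = true) :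
    logSum l < 0 := by
  simp only [logSumCheck, Bool.and_eq_true, List.all_eq_true, decide_eq_true_eq] at h
  obtain ⟨hpos, hlt⟩ := h
  have log_lt : log ((l.map (powNum t)).prod : ℕ) < log ((l.map (powDen t)).prod : ℕ) :=
    log_lt_log (by exact_mod_cast prod_map_pos fun p hp => powNum_pos t (hpos p hp))
      (by exact_mod_cast hlt)
  have ht' : (0 : ℝ) < t := by exact_mod_cast ht
  have := mul_logSum_le t hpos
  exact neg_of_mul_neg_right (by linarith) ht'.le

end LogCertificates

section Entropy

lemma binEntropy_eq_neg_mul_log_sub (p : ℝ) :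
    binEntropy p = -(p * log p) - (1 - p) * log (1 - p) := by
  simp only [binEntropy, log_inv]; ring

-- Gibbs' inequality for the distributions `(p, 1 - p)` and `(u, 1) / (1 + u)`.
lemma binEntropy_add_mul_log_le {p u : ℝ} (hp : 0 ≤ p) (hp1 : p ≤ 1) (hu : 0 < u) :
    binEntropy p + p * log u ≤ log (1 + u) := by
  have : 0 < 1 + u := by linarith
  rcases hp.eq_or_lt with rfl | hp
  · simpa using log_nonneg (by linarith : 1 ≤ 1 + u)
  rcases hp1.eq_or_lt with rfl | hp1
  · simpa using log_le_log hu (by linarith)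
  have hq : 0 < 1 - p := by linarith
  have bound_p := mul_le_mul_of_nonneg_left
    (log_le_sub_one_of_pos (x := u / (p * (1 + u))) (by positivity)) hp.le
  have bound_q := mul_le_mul_of_nonneg_left
    (log_le_sub_one_of_pos (x := 1 / ((1 - p) * (1 + u))) (by positivity)) hq.le
  rw [log_div (by positivity) (by positivity), log_mul (by positivity) (by positivity)]
    at bound_p bound_q
  have weights : p * (u / (p * (1 + u)) - 1) + (1 - p) * (1 / ((1 - p) * (1 + u)) - 1) = 0 := by
    field_simp; ring
  rw [log_one] at bound_q
  rw [binEntropy_eq_neg_mul_log_sub]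
  linarith

lemma binEntropy_le_mul_log_inv_add {z : ℝ} (hz1 : z < 1) : binEntropy z ≤ z * log z⁻¹ + z := by
  have hz : 0 < 1 - z := by linarith
  have := mul_le_mul_of_nonneg_left (log_le_sub_one_of_pos (inv_pos.2 hz)) hz.le
  rw [mul_sub, mul_inv_cancel₀ hz.ne'] at this
  rw [binEntropy]; linarith

lemma mul_binEntropy_add_le {a b p q : ℝ} (ha : 0 ≤ a) (hb : 0 ≤ b) (hab : a + b = 1)
    (hp : 0 ≤ p) (hp1 : p ≤ 1) (hq : 0 ≤ q) (hq1 : q ≤ 1) :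
    a * binEntropy p + b * binEntropy q ≤ binEntropy (a * p + b * q) := by
  simpa using strictConcave_binEntropy.concaveOn.2 ⟨hp, hp1⟩ ⟨hq, hq1⟩ ha hb hab

lemma convexOn_affine_sub_binEntropy {a b c : ℝ} (hc : 0 ≤ c) :
    ConvexOn ℝ (Set.Icc 0 1) fun z => a + b * z - c * binEntropy z := by
  have affine : ConvexOn ℝ (Set.Icc (0 : ℝ) 1) fun z => a + b * z :=
    ⟨convex_Icc 0 1, fun x _ y _ s t _ _ hst => by
      simp only [smul_eq_mul]
      exact (by linear_combination (-a) * hst : _ = _).le⟩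
  exact affine.sub (strictConcave_binEntropy.concaveOn.smul hc)

lemma affine_sub_binEntropy_neg {a b c z z₁ z₂ : ℝ} (hc : 0 ≤ c) (hz₁ : 0 ≤ z₁) (hz₂ : z₂ ≤ 1)
    (hz₁z : z₁ ≤ z) (hzz₂ : z ≤ z₂) (h₁ : a + b * z₁ - c * binEntropy z₁ < 0)
    (h₂ : a + b * z₂ - c * binEntropy z₂ < 0) : a + b * z - c * binEntropy z < 0 :=
  ((convexOn_affine_sub_binEntropy hc).le_max_of_mem_Icc ⟨hz₁, by linarith⟩ ⟨by linarith, hz₂⟩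
    ⟨hz₁z, hzz₂⟩).trans_lt (max_lt h₁ h₂)

end Entropy

section Rates

/-- For `x > 0` this bounds, per edge, the exponential growth rate of the expectation of
`w ^ (number of edges spanned)` for a set of relative size `z` in a random regular multigraph. -/
noncomputable def logMoment (w x z : ℝ) : ℝ :=
  log (1 + 2 * x + w * x ^ 2) - 2 * z * log x - 2 * binEntropy z

lemma logMoment_one_sub {w x : ℝ} (hw : 0 < w) (hx : 0 < x) (z : ℝ) :
    logMoment w (w * x)⁻¹ (1 - z) = logMoment w x z + (1 - 2 * z) * log w := by
  have quadratic_eq :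
      1 + 2 * (w * x)⁻¹ + w * ((w * x)⁻¹) ^ 2 = (1 + 2 * x + w * x ^ 2) / (w * x ^ 2) := by
    field_simp; ring
  have quadratic_ne_zero : 1 + 2 * x + w * x ^ 2 ≠ 0 := by positivity
  unfold logMoment
  rw [quadratic_eq, log_div quadratic_ne_zero (by positivity), log_inv,
    log_mul (by positivity) (by positivity), log_mul (by positivity) (by positivity), log_pow,
    binEntropy_one_sub]
  push_cast
  ring

lemma logMoment_odds {w z : ℝ} (hw : 1 ≤ w) (hz : 0 < z) (hz1 : z < 1) :
    logMoment w (z / (1 - z)) z = log (1 + (w - 1) * z ^ 2) := by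
  have hz' : 0 < 1 - z := by linarith
  have quadratic_eq :
      1 + 2 * (z / (1 - z)) + w * (z / (1 - z)) ^ 2 = (1 + (w - 1) * z ^ 2) / (1 - z) ^ 2 := by
    field_simp; ring
  have numerator_pos : 0 < 1 + (w - 1) * z ^ 2 := by
    have := mul_nonneg (sub_nonneg.2 hw) (sq_nonneg z)
    linarith
  unfold logMoment
  rw [quadratic_eq, log_div numerator_pos.ne' (by positivity), log_pow,
    log_div hz.ne' hz'.ne', binEntropy_eq_neg_mul_log_sub]
  push_cast
  ring

lemma logMoment_odds_le {w z : ℝ} (hw : 1 ≤ w) (hz : 0 < z) (hz1 : z < 1) :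
    logMoment w (z / (1 - z)) z ≤ (w - 1) * z ^ 2 := by
  have : 0 ≤ (w - 1) * z ^ 2 := mul_nonneg (sub_nonneg.2 hw) (sq_nonneg z)
  rw [logMoment_odds hw hz hz1]
  linarith [log_le_sub_one_of_pos (x := 1 + (w - 1) * z ^ 2) (by linarith)]

lemma logMoment_sqrt_odds {t z : ℝ} (ht : 0 < t) (hz : 0 < z) (hz1 : z < 1) :
    logMoment (t ^ 2)⁻¹ (√(z / (1 - z)) * t) z =
      log (1 + 2 * (1 - z) * √(z / (1 - z)) * t) - 2 * z * log t - binEntropy z := by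
  have hz' : 0 < 1 - z := by linarith
  have odds_pos : 0 < z / (1 - z) := div_pos hz hz'
  have quadratic_eq : 1 + 2 * (√(z / (1 - z)) * t) + (t ^ 2)⁻¹ * (√(z / (1 - z)) * t) ^ 2 =
      (1 + 2 * (1 - z) * √(z / (1 - z)) * t) / (1 - z) := by
    rw [mul_pow, sq_sqrt odds_pos.le]; field_simp; ring
  have numerator_pos : 0 < 1 + 2 * (1 - z) * √(z / (1 - z)) * t := by positivity
  unfold logMoment
  rw [quadratic_eq, log_div numerator_pos.ne' hz'.ne',
    log_mul (sqrt_pos.2 odds_pos).ne' ht.ne', log_sqrt odds_pos.le, log_div hz.ne' hz'.ne',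
    binEntropy_eq_neg_mul_log_sub]
  ring

lemma logMoment_sqrt_odds_le {t z : ℝ} (ht : 0 < t) (hz : 0 < z) (hz1 : z < 1) :
    logMoment (t ^ 2)⁻¹ (√(z / (1 - z)) * t) z ≤ t - 2 * z * log t - binEntropy z := by
  have hz' : 0 < 1 - z := by linarith
  have sqrt_le : √(z / (1 - z)) ≤ 1 / (2 * (1 - z)) := by
    rw [sqrt_le_left (by positivity), div_pow, div_le_div_iff₀ hz' (by positivity)]
    nlinarith [mul_nonneg hz'.le (sq_nonneg (1 - 2 * z))]
  have coefficient_le : 2 * (1 - z) * √(z / (1 - z)) ≤ 1 :=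
    calc 2 * (1 - z) * √(z / (1 - z)) ≤ 2 * (1 - z) * (1 / (2 * (1 - z))) := by gcongr
      _ = 1 := by field_simp
  have log_le := log_le_sub_one_of_pos (x := 1 + 2 * (1 - z) * √(z / (1 - z)) * t) (by positivity)
  rw [logMoment_sqrt_odds ht hz hz1]
  linarith [mul_le_mul_of_nonneg_right coefficient_le ht.le]

/-- The Chernoff exponent, with dual variable `w`, of the event that a set of relative size `z` in a
random `2 * D`-regular multigraph spans more than `m` (times the number of vertices) edges. -/
noncomputable def dualRate (w x m z D : ℝ) : ℝ := m * log w - D * logMoment w x z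

lemma dualRate_mul (c w x m z D : ℝ) :
    dualRate w x (c * m) z (c * D) = c * dualRate w x m z D := by
  unfold dualRate; ring

/-- Some choice of the dual variables `w`, `x` makes the rate exceed `H`. -/
def RateExceeds (H m z D : ℝ) : Prop := ∃ w x, 1 ≤ w ∧ 0 < x ∧ H < dualRate w x m z D

namespace RateExceeds

variable {H m z D : ℝ}

lemma mono (h : RateExceeds H m z D) {H' m' : ℝ} (hH : H' ≤ H) (hm : m ≤ m') :
    RateExceeds H' m' z D := by
  obtain ⟨w, x, hw, hx, h⟩ := h
  refine ⟨w, x, hw, hx, ?_⟩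
  have := mul_le_mul_of_nonneg_right hm (log_nonneg hw)
  unfold dualRate at *
  linarith

-- A `2 * D`-regular graph has `D * (1 - 2 * z)` more edges inside the complement of a set of
-- relative size `z` than inside the set.
lemma flip (h : RateExceeds H m z D) : RateExceeds H (m + D * (1 - 2 * z)) (1 - z) D := by
  obtain ⟨w, x, hw, hx, h⟩ := h
  have hw0 : 0 < w := by linarith
  refine ⟨w, (w * x)⁻¹, hw, by positivity, h.trans_eq ?_⟩
  rw [dualRate, dualRate, logMoment_one_sub hw0 hx]
  ring

lemma mul (h : RateExceeds H m z D) (hH : 0 ≤ H) {c : ℝ} (hc : 1 ≤ c) :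
    RateExceeds H (c * m) z (c * D) := by
  obtain ⟨w, x, hw, hx, h⟩ := h
  refine ⟨w, x, hw, hx, ?_⟩
  rw [dualRate_mul]
  nlinarith

-- For a fixed deviation `c` the rate is affine in `D` and nonpositive at `D = 0`.
lemma increase {c : ℝ} (h : RateExceeds H (D * z - c) z D) (hH : 0 ≤ H) (hc : 0 ≤ c) (hD : 0 < D)
    {D' : ℝ} (hD' : D ≤ D') : RateExceeds H (D' * z - c) z D' := by
  obtain ⟨w, x, hw, hx, h⟩ := h
  refine ⟨w, x, hw, hx, ?_⟩
  have rate_eq (D : ℝ) :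
      dualRate w x (D * z - c) z D = D * (z * log w - logMoment w x z) - c * log w := by
    unfold dualRate; ring
  rw [rate_eq] at h ⊢
  have := mul_nonneg hc (log_nonneg hw)
  have slope_pos : 0 < z * log w - logMoment w x z := pos_of_mul_pos_right (by linarith) hD.le
  linarith [mul_le_mul_of_nonneg_right hD' slope_pos.le]

lemma of_average (hz : 0 < z) (hz1 : z < 1) (hD : 1 < D) (hH : H ≤ binEntropy z)
    (hm : D * z ≤ m) : RateExceeds H m z D := by
  have : 0 < 1 - z := by linarith
  have entropy_pos := binEntropy_pos hz hz1
  have entropy_lt_one : binEntropy z < 1 :=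
    binEntropy_le_log_two.trans_lt (by linarith [log_two_lt_d9])
  set t := (D - 1) * binEntropy z / (2 * D) with t_eq
  have D_mul_t : 2 * (D * t) = (D - 1) * binEntropy z := by rw [t_eq]; field_simp
  have t_pos : 0 < t := by
    have : 0 < D - 1 := by linarith
    positivity
  have t_le_one : t ≤ 1 := by nlinarith
  refine RateExceeds.mono ⟨(t ^ 2)⁻¹, √(z / (1 - z)) * t, ?_, by positivity, ?_⟩ hH hm
  · rw [one_le_inv₀ (by positivity)]
    exact pow_le_one₀ t_pos.le t_le_one
  have moment_le := mul_le_mul_of_nonneg_left (logMoment_sqrt_odds_le t_pos hz hz1)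
    (by linarith : 0 ≤ D)
  rw [dualRate, log_inv, log_pow]
  push_cast
  linarith [mul_pos (by linarith : 0 < D - 1) entropy_pos]

lemma of_small {g : ℝ} (hz : 0 < z) (hz1 : z < 1) (hg : 1 < g) (hgD : g ≤ D)
    (hsmall : 1 + g + g * log (D / g) < (g - 1) * log z⁻¹) (hH : H ≤ binEntropy z)
    (hm : g * z ≤ m) : RateExceeds H m z D := by
  have : 0 < 1 - z := by linarith
  have : 0 < D := by linarith
  have : 0 ≤ log (D / g) := log_nonneg (by rwa [one_le_div (by linarith)])
  set w := g / (D * z) with w_eq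
  have w_pos : 0 < w := by positivity
  have log_w : log w = log z⁻¹ - log (D / g) := by
    rw [← log_div (by positivity) (by positivity), w_eq]; congr 1; field_simp
  have hw : 1 ≤ w := by
    rw [← log_nonneg_iff w_pos, log_w]
    by_contra!
    nlinarith
  refine RateExceeds.mono ⟨w, z / (1 - z), hw, by positivity, ?_⟩ hH hm
  have moment_le : D * logMoment w (z / (1 - z)) z ≤ g * z :=
    calc D * logMoment w (z / (1 - z)) z ≤ D * (w * z ^ 2) := by
          gcongr
          linarith [logMoment_odds_le hw hz hz1, sq_nonneg z]
      _ = g * z := by rw [w_eq]; field_simp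
  rw [dualRate, log_w]
  linarith [binEntropy_le_mul_log_inv_add hz1, mul_lt_mul_of_pos_right hsmall hz]

end RateExceeds

end Rates

section TwoClasses

/-- A vertex set of relative size `z` meets two classes of relative sizes `α` and `1 - α` in the
proportions `p ≥ q`. -/
structure IsMix (α p q z : ℝ) : Prop where
  nonneg : 0 ≤ α
  le_one : α ≤ 1
  q_nonneg : 0 ≤ q
  q_le_p : q ≤ p
  p_le_one : p ≤ 1
  z_eq : z = α * p + (1 - α) * q
  z_pos : 0 < z
  z_lt_one : z < 1

namespace IsMix

variable {α p q z : ℝ}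

lemma p_nonneg (h : IsMix α p q z) : 0 ≤ p := h.q_nonneg.trans h.q_le_p

lemma q_le_one (h : IsMix α p q z) : q ≤ 1 := h.q_le_p.trans h.p_le_one

lemma compl (h : IsMix α p q z) : IsMix (1 - α) (1 - q) (1 - p) (1 - z) where
  nonneg := sub_nonneg.2 h.le_one
  le_one := sub_le_self _ h.nonneg
  q_nonneg := sub_nonneg.2 h.p_le_one
  q_le_p := sub_le_sub_left h.q_le_p 1
  p_le_one := sub_le_self _ h.q_nonneg
  z_eq := by rw [h.z_eq]; ring
  z_pos := sub_pos.2 h.z_lt_one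
  z_lt_one := sub_lt_self _ h.z_pos

lemma entropy_nonneg (h : IsMix α p q z) : 0 ≤ α * binEntropy p + (1 - α) * binEntropy q :=
  add_nonneg (mul_nonneg h.nonneg (binEntropy_nonneg h.p_nonneg h.p_le_one))
    (mul_nonneg (sub_nonneg.2 h.le_one) (binEntropy_nonneg h.q_nonneg h.q_le_one))

lemma entropy_le (h : IsMix α p q z) :
    α * binEntropy p + (1 - α) * binEntropy q ≤ binEntropy z := by
  rw [h.z_eq]
  exact mul_binEntropy_add_le h.nonneg (sub_nonneg.2 h.le_one) (by ring) h.p_nonneg h.p_le_one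
    h.q_nonneg h.q_le_one

lemma mul_le (h : IsMix α p q z) : α * p ≤ z := by
  linarith [h.z_eq, mul_nonneg (sub_nonneg.2 h.le_one) h.q_nonneg]

lemma le_p (h : IsMix α p q z) : z ≤ p := by
  linarith [h.z_eq, mul_nonneg (sub_nonneg.2 h.le_one) (sub_nonneg.2 h.q_le_p)]

lemma mul_sub_le (h : IsMix α p q z) : α * (p - z) ≤ z * (1 - z) :=
  calc α * (p - z) ≤ α * (p * (1 - z)) := by
        have := h.nonneg
        gcongr
        linarith [mul_nonneg h.z_pos.le (sub_nonneg.2 h.p_le_one)]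
    _ = α * p * (1 - z) := by ring
    _ ≤ z * (1 - z) := mul_le_mul_of_nonneg_right h.mul_le (sub_nonneg.2 h.z_lt_one.le)

end IsMix

/-- The rate inequality for a vertex set that meets two classes of relative sizes `α` and `1 - α` in
the proportions `p` and `q`; each vertex of the first class has `k` fewer slots than a vertex of the
second one, and the mean number of slots is `D`. -/
def MixRateExceeds (α k D p q z : ℝ) : Prop :=
  RateExceeds (α * binEntropy p + (1 - α) * binEntropy q) (D * z - k * (α * (p - z))) z D

lemma MixRateExceeds.of_compl {α k D p q z : ℝ} (hz : z = α * p + (1 - α) * q)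
    (h : MixRateExceeds (1 - α) k D (1 - q) (1 - p) (1 - z)) : MixRateExceeds α k D p q z := by
  have := RateExceeds.flip h
  simp only [binEntropy_one_sub, sub_sub_cancel] at this
  refine RateExceeds.mono this (le_of_eq (by ring)) (le_of_eq ?_)
  rw [hz]; ring

lemma IsMix.mixRateExceeds_of_small {α k D p q z : ℝ} (h : IsMix α p q z) (hk : 0 ≤ k)
    (hg : 1 < D + k * α - k) (hsmall : 1 + (D + k * α - k) +
      (D + k * α - k) * log (D / (D + k * α - k)) < (D + k * α - k - 1) * log z⁻¹) :
    MixRateExceeds α k D p q z :=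
  RateExceeds.of_small h.z_pos h.z_lt_one hg
    (by linarith [mul_nonneg hk (sub_nonneg.2 h.le_one)]) hsmall h.entropy_le
    (by linarith [mul_le_mul_of_nonneg_left h.mul_le hk])

/-- The rate inequality holds for all vertex sets that are denser in the class with fewer slots. -/
def Favorable (α k D : ℝ) : Prop := ∀ p q z, IsMix α p q z → MixRateExceeds α k D p q z

namespace Favorable

variable {α k D : ℝ}

lemma flip (h : Favorable α k D) : Favorable (1 - α) k D := fun p q z hmix => by
  refine .of_compl hmix.z_eq ?_
  have := hmix.compl
  rw [sub_sub_cancel] at this ⊢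
  exact h _ _ _ this

lemma mul (h : Favorable α k D) {c : ℝ} (hc : 1 ≤ c) : Favorable α (c * k) (c * D) :=
  fun p q z hmix =>
    (RateExceeds.mul (h p q z hmix) hmix.entropy_nonneg hc).mono le_rfl (le_of_eq (by ring))

lemma increase (h : Favorable α k D) (hk : 0 ≤ k) (hD : 0 < D) {D' : ℝ} (hD' : D ≤ D') :
    Favorable α k D' := fun p q z hmix =>
  RateExceeds.increase (h p q z hmix) hmix.entropy_nonneg
    (mul_nonneg hk (mul_nonneg hmix.nonneg (sub_nonneg.2 hmix.le_p))) hD hD'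

end Favorable

/-- The rate inequality without reference to the two classes, when the number of slots of a set of
relative size `z` falls short of its mean by the factor `1 - (1 - z) / c` at worst. -/
def CrudeBound (c D : ℝ) : Prop :=
  ∀ z, 0 < z → z < 1 → RateExceeds (binEntropy z) (D * (z - z * (1 - z) / c)) z D

namespace CrudeBound

variable {c D : ℝ}

lemma of_le_half (h : ∀ z, 0 < z → z ≤ 1 / 2 →
    RateExceeds (binEntropy z) (D * (z - z * (1 - z) / c)) z D) : CrudeBound c D := by
  intro z hz hz1
  rcases le_total z (1 / 2) with hz2 | hz2
  · exact h z hz hz2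
  · have := (h (1 - z) (by linarith) (by linarith)).flip
    rw [sub_sub_cancel, binEntropy_one_sub] at this
    exact this.mono le_rfl (le_of_eq (by ring))

lemma mixRateExceeds (h : CrudeBound c D) (hD : 0 < D) {α k D' p q z : ℝ} (hmix : IsMix α p q z)
    (hD' : D ≤ D') (hdev : k * (α * (p - z)) ≤ D' * (z * (1 - z) / c)) :
    MixRateExceeds α k D' p q z := by
  have := (h z hmix.z_pos hmix.z_lt_one).mul
    (binEntropy_nonneg hmix.z_pos.le hmix.z_lt_one.le) (c := D' / D) ((one_le_div hD).2 hD')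
  rw [← mul_assoc, div_mul_cancel₀ _ hD.ne'] at this
  exact this.mono hmix.entropy_le (by linarith)

lemma mixRateExceeds_of_mul_le (h : CrudeBound c D) (hD : 0 < D) (hc : 0 < c) {α k D' p q z : ℝ}
    (hmix : IsMix α p q z) (hk : 0 ≤ k) (hD' : D ≤ D') (hz : c * (k * α) ≤ D' * z) :
    MixRateExceeds α k D' p q z := by
  have z_lt_one := sub_nonneg.2 hmix.z_lt_one.le
  have deviation_le : k * (α * (p - z)) ≤ D' * (z * (1 - z) / c) :=
    calc k * (α * (p - z)) ≤ k * (α * (1 - z)) := by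
          have := hmix.nonneg
          have := hmix.p_le_one
          gcongr
      _ = c * (k * α) * ((1 - z) / c) := by field_simp
      _ ≤ D' * z * ((1 - z) / c) := by gcongr
      _ = D' * (z * (1 - z) / c) := by ring
  exact h.mixRateExceeds hD hmix hD' deviation_le

lemma favorable (h : CrudeBound c D) (hD : 0 < D) (hc : 0 < c) {α k D' : ℝ} (hk : 0 ≤ k)
    (hD' : D ≤ D') (hkD : c * k ≤ D') : Favorable α k D' := by
  intro p q z hmix
  have variance_nonneg := mul_nonneg hmix.z_pos.le (sub_nonneg.2 hmix.z_lt_one.le)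
  have deviation_le : k * (α * (p - z)) ≤ D' * (z * (1 - z) / c) :=
    calc k * (α * (p - z)) ≤ k * (z * (1 - z)) := mul_le_mul_of_nonneg_left hmix.mul_sub_le hk
      _ = c * k * (z * (1 - z) / c) := by field_simp
      _ ≤ D' * (z * (1 - z) / c) := by gcongr
  exact h.mixRateExceeds hD hmix hD' deviation_le

end CrudeBound

end TwoClasses

section IntervalCertificates

/-- The terms of `(1 + g) * c + g * log (D / g) - (g - 1) * log z⁻¹`, where `c * log 2` with the
rational `c = 10000 / 6931` stands for an upper bound of `1`. -/
def smallSetList (g D z : ℚ) : List (ℚ × ℚ) :=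
  [((1 + g) * (10000 / 6931), 2), (g, D / g), (g - 1, z)]

lemma smallSet_bound_of_check {t : ℕ} (ht : 0 < t) {g D z₀ : ℚ} (hg : 1 < g)
    (h : logSumCheck t (smallSetList g D z₀) = true) {z : ℝ} (hz : 0 < z) (hzz : z ≤ z₀) :
    1 + (g : ℝ) + g * log (D / g) < (g - 1) * log z⁻¹ := by
  have check_neg := logSum_neg_of_check ht h
  simp only [logSum, smallSetList, List.map_cons, List.map_nil, List.sum_cons, List.sum_nil]
    at check_neg
  push_cast at check_neg
  have log_le := log_le_log hz hzz
  have one_lt_g : (1 : ℝ) < g := by exact_mod_cast hg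
  rw [log_inv]
  nlinarith [log_two_gt_d9]

/-- Each entry of the list is a right endpoint with a certificate for the interval that ends there;
the intervals are consecutive and cover `[a, b)`. -/
def covers {γ : Type*} (check : ℚ → ℚ → γ → Bool) : ℚ → ℚ → List (ℚ × γ) → Bool
  | a, b, [] => decide (b ≤ a)
  | a, b, (c, g) :: l => check a c g && covers check c b l

lemma exists_of_covers {γ : Type*} {check : ℚ → ℚ → γ → Bool} {b : ℚ} {z : ℝ} (hb : z < b) :
    ∀ {l : List (ℚ × γ)} {a : ℚ}, covers check a b l = true → (a : ℝ) ≤ z →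
      ∃ a' c g, check a' c g = true ∧ (a' : ℝ) ≤ z ∧ z ≤ c
  | [], a, h, ha => by
    have : (b : ℝ) ≤ a := by simpa [covers] using h
    linarith
  | (c, g) :: l, a, h, ha => by
    simp only [covers, Bool.and_eq_true] at h
    rcases le_total z c with hc | hc
    · exact ⟨a, c, g, h.1, ha, hc⟩
    · exact exists_of_covers hb h.2 hc

end IntervalCertificates

section CrudeCertificates

/-- The terms of `binEntropy z - dualRate w x m z D` with `m = D * (z - z * (1 - z) / c)`, except
that `z * (1 - z)` is replaced by its tangent at `z₀`. -/
def crudeList (c D w x z₀ z : ℚ) : List (ℚ × ℚ) :=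
  [((2 * D - 1) * z, z), ((2 * D - 1) * (1 - z), 1 - z),
    (-(D * (z - (z₀ ^ 2 + z * (1 - 2 * z₀)) / c)), w), (-(2 * D * z), x),
    (D, 1 + 2 * x + w * x ^ 2)]

/-- The check of a certificate `(w, x, z₀)` on `[a, b]`, at the endpoints only. -/
def crudeCheck (c D a b : ℚ) : ℚ × ℚ × ℚ → Bool
  | (w, x, z₀) => decide (0 < a ∧ b < 1 ∧ 1 ≤ w ∧ 0 < x) &&
      (logSumCheck 10000 (crudeList c D w x z₀ a) && logSumCheck 10000 (crudeList c D w x z₀ b))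

lemma mul_one_sub_le_tangent (z z₀ : ℝ) : z * (1 - z) ≤ z₀ ^ 2 + z * (1 - 2 * z₀) := by
  linarith [sq_nonneg (z - z₀)]

lemma rateExceeds_of_crudeCheck {c D a b : ℚ} (hc : 0 < c) (hD : 1 ≤ D) {g : ℚ × ℚ × ℚ}
    (h : crudeCheck c D a b g = true) {z : ℝ} (ha : a ≤ z) (hb : z ≤ b) :
    RateExceeds (binEntropy z) (D * (z - z * (1 - z) / c)) z D := by
  obtain ⟨w, x, z₀⟩ := g
  simp only [crudeCheck, Bool.and_eq_true, decide_eq_true_eq] at h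
  obtain ⟨⟨ha0, hb1, hw, hx⟩, check_a, check_b⟩ := h
  have neg_a := logSum_neg_of_check (by norm_num) check_a
  have neg_b := logSum_neg_of_check (by norm_num) check_b
  simp only [logSum, crudeList, List.map_cons, List.map_nil, List.sum_cons, List.sum_nil]
    at neg_a neg_b
  push_cast at neg_a neg_b
  have one_le_w : (1 : ℝ) ≤ w := by exact_mod_cast hw
  have : (0 : ℝ) < c := by exact_mod_cast hc
  have one_le_D : (1 : ℝ) ≤ D := by exact_mod_cast hD
  have neg_z := affine_sub_binEntropy_neg (z := z) (z₁ := a) (z₂ := b) (c := 2 * D - 1)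
    (a := D * (z₀ ^ 2 / c) * log w + D * log (1 + 2 * x + w * x ^ 2))
    (b := -(D * (1 - (1 - 2 * z₀) / c)) * log w - 2 * D * log x) (by linarith)
    (by exact_mod_cast ha0.le) (by exact_mod_cast hb1.le) ha hb
    (by rw [binEntropy_eq_neg_mul_log_sub]; refine lt_of_eq_of_lt ?_ neg_a; ring)
    (by rw [binEntropy_eq_neg_mul_log_sub]; refine lt_of_eq_of_lt ?_ neg_b; ring)
  have tangent_le : D * (z * (1 - z) / c) * log w ≤
      D * ((z₀ ^ 2 + z * (1 - 2 * z₀)) / c) * log w := by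
    have := log_nonneg one_le_w
    have := mul_one_sub_le_tangent z z₀
    gcongr
  refine ⟨w, x, one_le_w, by exact_mod_cast hx, ?_⟩
  rw [dualRate, logMoment]
  ring_nf at neg_z tangent_le ⊢
  linarith

/-- The check of a proof of `CrudeBound c D`, which treats `z ≤ z₀` as a small set. -/
def crudeCertificate (c D z₀ : ℚ) (l : List (ℚ × ℚ × ℚ × ℚ)) : Bool :=
  decide (1 < c ∧ 1 ≤ D ∧ 1 < D * (1 - 1 / c)) &&
    (logSumCheck 10000 (smallSetList (D * (1 - 1 / c)) D z₀) &&
      covers (crudeCheck c D) z₀ (51 / 100) l)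

lemma CrudeBound.of_certificate {c D z₀ : ℚ} {l : List (ℚ × ℚ × ℚ × ℚ)}
    (h : crudeCertificate c D z₀ l = true) : CrudeBound c D := by
  simp only [crudeCertificate, Bool.and_eq_true, decide_eq_true_eq] at h
  obtain ⟨⟨hc, hD, hg⟩, hsmall, hcovers⟩ := h
  have : (1 : ℝ) < c := by exact_mod_cast hc
  have one_le_D : (1 : ℝ) ≤ D := by exact_mod_cast hD
  refine CrudeBound.of_le_half fun z hz hz2 => ?_
  rcases le_total z z₀ with hzz | hzz
  · refine RateExceeds.of_small hz (by linarith) (by exact_mod_cast hg) ?_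
      (smallSet_bound_of_check (by norm_num) hg hsmall hz hzz) le_rfl ?_
    · push_cast
      exact mul_le_of_le_one_right (by linarith) (sub_le_self _ (by positivity))
    · push_cast
      have : z * (1 - z) / c ≤ z / c := by
        gcongr
        exact mul_le_of_le_one_right hz.le (by linarith)
      calc (D : ℝ) * (1 - 1 / c) * z = D * (z - z / c) := by ring
        _ ≤ D * (z - z * (1 - z) / c) := by gcongr
  · obtain ⟨a, b, g, hcheck, ha, hb⟩ := exists_of_covers (by push_cast; linarith) hcovers hzz
    exact rateExceeds_of_crudeCheck (by linarith) hD hcheck ha hb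

lemma crudeBound_nine_fifths : CrudeBound (9 / 5 : ℚ) (15 / 2 : ℚ) :=
  .of_certificate (z₀ := 49 / 1000)
    (l := [(123/1000, 211/10, 469/10000, 433/5000), (227/1000, 109/10, 27/250, 22/125),
      (337/1000, 807/100, 47/250, 57/200), (221/500, 188/25, 269/1000, 99/250),
      (51/100, 677/100, 9/25, 477/1000)])
    (by decide +kernel)

lemma crudeBound_two : CrudeBound (2 : ℚ) (11 / 2 : ℚ) :=
  .of_certificate (z₀ := 39 / 1000)
    (l := [(49/500, 341/10, 167/5000, 647/10000), (97/500, 18, 77/1000, 151/1000),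
      (73/250, 117/10, 141/1000, 247/1000), (19/50, 991/100, 41/200, 17/50),
      (57/125, 921/100, 133/500, 421/1000), (51/100, 9, 319/1000, 483/1000)])
    (by decide +kernel)

lemma crudeBound_nine_fourths : CrudeBound (9 / 4 : ℚ) (9 / 2 : ℚ) :=
  .of_certificate (z₀ := 36 / 1000)
    (l := [(9/100, 262/5, 53/2000, 581/10000), (197/1000, 119/5, 339/5000, 143/1000),
      (313/1000, 157/10, 13/100, 259/1000), (211/500, 131/10, 197/1000, 371/1000),
      (51/100, 123/10, 131/500, 467/1000)])
    (by decide +kernel)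

end CrudeCertificates

section TwoClassCertificates

/-- A bound for the entropy minus the rate when a vertex of the first class, of relative size `α`,
has `a` slots. Here `β` stands for the relative size of the second class, and `Y` and `V` are the
odds used for the two classes in Gibbs' inequality. -/
noncomputable def mixBound (α β a D w x Y V z : ℝ) : ℝ :=
  α * log (1 + Y) + β * log (1 + V) - z * log Y - a * z * log w + D * logMoment w x z

lemma IsMix.mixRateExceeds_of_mixBound_neg {α k D p q z w x Y : ℝ} (h : IsMix α p q z)
    (hw : 1 ≤ w) (hx : 0 < x) (hY : 0 < Y)
    (hneg : mixBound α (1 - α) (D + k * α - k) D w x Y (Y * w ^ (-k)) z < 0) :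
    MixRateExceeds α k D p q z := by
  have w_pos : 0 < w := by linarith
  have gibbs_p := mul_le_mul_of_nonneg_left
    (binEntropy_add_mul_log_le h.p_nonneg h.p_le_one hY) h.nonneg
  have gibbs_q := mul_le_mul_of_nonneg_left
    (binEntropy_add_mul_log_le (u := Y * w ^ (-k)) h.q_nonneg h.q_le_one (by positivity))
    (sub_nonneg.2 h.le_one)
  rw [log_mul hY.ne' (by positivity), log_rpow w_pos] at gibbs_q
  have q_terms : (1 - α) * (binEntropy q + q * (log Y + -k * log w)) =
      (1 - α) * binEntropy q + (z - α * p) * (log Y - k * log w) := by rw [h.z_eq]; ring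
  rw [q_terms] at gibbs_q
  refine ⟨w, x, hw, hx, ?_⟩
  unfold mixBound at hneg
  unfold dualRate
  linarith

/-- The terms of `mixBound` with `w = ω ^ 2` and `V = Y / ω ^ e`. -/
def mixList (α β a D : ℚ) (e : ℕ) (ω x Y z : ℚ) : List (ℚ × ℚ) :=
  [(α, 1 + Y), (β, 1 + Y / ω ^ e), (-z, Y), (-(2 * a * z), ω), (-(2 * D * z), x),
    (D, 1 + 2 * x + ω ^ 2 * x ^ 2), (2 * D * z, z), (2 * D * (1 - z), 1 - z)]

/-- The check of a certificate `(ω, x, Y)` on `[z₁, z₂]`, at the endpoints only. -/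
def mixCheck (α β a D : ℚ) (e : ℕ) (z₁ z₂ : ℚ) : ℚ × ℚ × ℚ → Bool
  | (ω, x, Y) => decide (0 < z₁ ∧ z₂ < 1 ∧ 1 ≤ ω ∧ 0 < x ∧ 0 < Y) &&
      (logSumCheck 6000 (mixList α β a D e ω x Y z₁) &&
        logSumCheck 6000 (mixList α β a D e ω x Y z₂))

lemma pos_of_mixCheck {α β a D ω x Y z₁ z₂ : ℚ} {e : ℕ}
    (h : mixCheck α β a D e z₁ z₂ (ω, x, Y) = true) :
    (1 : ℝ) ≤ ω ∧ (0 : ℝ) < x ∧ (0 : ℝ) < Y := by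
  simp only [mixCheck, Bool.and_eq_true, decide_eq_true_eq] at h
  exact_mod_cast h.1.2.2

lemma mixBound_neg_of_mixCheck {α β a D ω x Y z₁ z₂ : ℚ} {e : ℕ} (hD : 0 ≤ D)
    (h : mixCheck α β a D e z₁ z₂ (ω, x, Y) = true) {z : ℝ} (hz₁ : z₁ ≤ z) (hz₂ : z ≤ z₂) :
    mixBound α β a D ((ω : ℝ) ^ 2) x Y (Y / (ω : ℝ) ^ e) z < 0 := by
  simp only [mixCheck, Bool.and_eq_true, decide_eq_true_eq] at h
  obtain ⟨⟨z₁_pos, z₂_lt_one, -⟩, check₁, check₂⟩ := h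
  have neg₁ := logSum_neg_of_check (by norm_num) check₁
  have neg₂ := logSum_neg_of_check (by norm_num) check₂
  simp only [logSum, mixList, List.map_cons, List.map_nil, List.sum_cons, List.sum_nil] at neg₁ neg₂
  push_cast at neg₁ neg₂
  have neg_z := affine_sub_binEntropy_neg (z := z) (z₁ := z₁) (z₂ := z₂) (c := 2 * D)
    (a := α * log (1 + Y) + β * log (1 + Y / (ω : ℝ) ^ e) +
      D * log (1 + 2 * x + (ω : ℝ) ^ 2 * x ^ 2))
    (b := -log Y - 2 * a * log ω - 2 * D * log x) (by exact_mod_cast mul_nonneg zero_le_two hD)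
    (by exact_mod_cast z₁_pos.le) (by exact_mod_cast z₂_lt_one.le) hz₁ hz₂
    (by rw [binEntropy_eq_neg_mul_log_sub]; refine lt_of_eq_of_lt ?_ neg₁; ring)
    (by rw [binEntropy_eq_neg_mul_log_sub]; refine lt_of_eq_of_lt ?_ neg₂; ring)
  rw [mixBound, logMoment, log_pow]
  push_cast
  linarith

lemma rpow_neg_of_two_mul_eq {ω : ℝ} (hω : 0 < ω) {k : ℝ} {e : ℕ} (he : (e : ℝ) = 2 * k) :
    (ω ^ 2) ^ (-k) = (ω ^ e)⁻¹ := by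
  rw [← rpow_natCast ω 2, ← rpow_mul hω.le, ← rpow_natCast ω e, ← rpow_neg hω.le, he]
  congr 1; push_cast; ring

/-- The check of a proof of `Favorable α k D`, where `e = 2 * k`: sets with `z ≤ z₀` and complements
of sets with `z ≥ z₁` are treated as small sets. -/
def mixCertificate (α k D z₀ z₁ : ℚ) (e : ℕ) (l : List (ℚ × ℚ × ℚ × ℚ)) : Bool :=
  decide (0 ≤ k ∧ 0 ≤ D ∧ 1 < D + k * α - k ∧ 1 < D - k * α ∧ (e : ℚ) = 2 * k) &&
    (logSumCheck 10000 (smallSetList (D + k * α - k) D z₀) &&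
      (logSumCheck 10000 (smallSetList (D - k * α) D (1 - z₁)) &&
        covers (mixCheck α (1 - α) (D + k * α - k) D e) z₀ z₁ l))

lemma Favorable.of_certificate {α k D z₀ z₁ : ℚ} {e : ℕ} {l : List (ℚ × ℚ × ℚ × ℚ)}
    (h : mixCertificate α k D z₀ z₁ e l = true) : Favorable α k D := by
  intro p q z hmix
  simp only [mixCertificate, Bool.and_eq_true, decide_eq_true_eq] at h
  obtain ⟨⟨hk, hD, hsmall, hlarge, he⟩, check_small, check_large, hcovers⟩ := h
  have k_nonneg : (0 : ℝ) ≤ k := by exact_mod_cast hk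
  rcases le_total z z₀ with hz₀ | hz₀
  · have bound := smallSet_bound_of_check (by norm_num) hsmall check_small hmix.z_pos hz₀
    push_cast at bound
    exact hmix.mixRateExceeds_of_small k_nonneg (by exact_mod_cast hsmall) bound
  rcases le_or_gt (z₁ : ℝ) z with hz₁ | hz₁
  · have bound := smallSet_bound_of_check (by norm_num) hlarge check_large hmix.compl.z_pos
      (by push_cast; linarith)
    have slots_eq : (D : ℝ) + k * (1 - α) - k = D - k * α := by ring
    push_cast at bound
    refine .of_compl hmix.z_eq (hmix.compl.mixRateExceeds_of_small k_nonneg ?_ ?_)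
    · rw [slots_eq]; exact_mod_cast hlarge
    · rw [slots_eq]; exact bound
  obtain ⟨a, b, ⟨ω, x, Y⟩, hcheck, ha, hb⟩ := exists_of_covers hz₁ hcovers hz₀
  obtain ⟨hω, hx, hY⟩ := pos_of_mixCheck hcheck
  have neg := mixBound_neg_of_mixCheck hD hcheck ha hb
  push_cast at neg
  refine hmix.mixRateExceeds_of_mixBound_neg (one_le_pow₀ (n := 2) hω) hx hY ?_
  rwa [rpow_neg_of_two_mul_eq (e := e) (by linarith) (by exact_mod_cast he), ← div_eq_mul_inv]

lemma favorable_quarter : Favorable (1 / 4 : ℚ) (2 : ℚ) (7 / 2 : ℚ) :=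
  .of_certificate (z₀ := 2 / 125) (z₁ := 9 / 10) (e := 4)
    (l := [(1/25, 59/5, 119/12500, 471/5000), (1/10, 137/20, 57/2000, 161/500),
      (1/4, 102/25, 171/2000, 42/25), (563/1000, 433/100, 81/500, 313/5),
      (9/10, 56/5, 167/1000, 32100)])
    (by decide +kernel)

lemma favorable_sixth : Favorable (1 / 6 : ℚ) (3 : ℚ) (11 / 2 : ℚ) :=
  .of_certificate (z₀ := 1 / 50) (z₁ := 9 / 10) (e := 6)
    (l := [(1/20, 51/5, 29/2500, 87/500), (1/8, 143/25, 23/625, 767/1000),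
      (313/1000, 94/25, 961/10000, 331/10), (783/1000, 51/5, 101/1000, 805000),
      (9/10, 313/10, 1/10, 6900000000)])
    (by decide +kernel)

lemma favorable_third : Favorable (1 / 3 : ℚ) (3 : ℚ) (5 : ℚ) :=
  .of_certificate (z₀ := 1 / 50) (z₁ := 9 / 10) (e := 6)
    (l := [(1/20, 61/5, 101/10000, 789/10000), (1/8, 167/25, 21/625, 291/1000),
      (313/1000, 351/100, 61/500, 41/25), (5/8, 169/50, 61/250, 250),
      (9/10, 207/25, 1/4, 669000)])
    (by decide +kernel)

end TwoClassCertificates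

section OneParameterFamily

lemma quadratic_neg_of_endpoints {P R C a b t : ℝ} (hP : 0 ≤ P) (ha : a ≤ t) (hb : t ≤ b)
    (neg_a : P * a ^ 2 + R * a + C < 0) (neg_b : P * b ^ 2 + R * b + C < 0) :
    P * t ^ 2 + R * t + C < 0 := by
  have convex : ConvexOn ℝ Set.univ fun t : ℝ => P * t ^ 2 + t * R + C :=
    ((even_two.convexOn_pow.smul hP).add
      ((LinearMap.toSpanSingleton ℝ ℝ R).convexOn convex_univ)).add_const C
  have le_max := convex.le_max_of_mem_Icc (Set.mem_univ a) (Set.mem_univ b) ⟨ha, hb⟩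
  simp only [mul_comm _ R] at le_max
  exact le_max.trans_lt (max_lt neg_a neg_b)

lemma mixBound_mono {α β β' a D w x Y V V' z : ℝ} (hβ : 0 ≤ β) (hββ' : β ≤ β') (hV : 0 ≤ V)
    (hVV' : V ≤ V') : mixBound α β a D w x Y V z ≤ mixBound α β' a D w x Y V' z := by
  have : 0 ≤ β' := hβ.trans hββ'
  have : 0 ≤ log (1 + V) := log_nonneg (by linarith)
  unfold mixBound
  gcongr

-- Multiplied by `α`, the bound is a convex quadratic polynomial in `α`.
lemma mixBound_neg_of_endpoints {α₁ α₂ α β w x Y V z : ℝ} (hα₁ : 0 < α₁) (h₁ : α₁ ≤ α)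
    (h₂ : α ≤ α₂) (hY : 0 ≤ Y) (neg₁ : mixBound α₁ β 3 (3 / (2 * α₁) + 3 / 2) w x Y V z < 0)
    (neg₂ : mixBound α₂ β 3 (3 / (2 * α₂) + 3 / 2) w x Y V z < 0) :
    mixBound α β 3 (3 / (2 * α) + 3 / 2) w x Y V z < 0 := by
  have mul_eq {t : ℝ} (ht : 0 < t) : t * mixBound t β 3 (3 / (2 * t) + 3 / 2) w x Y V z =
      log (1 + Y) * t ^ 2 + (β * log (1 + V) - z * log Y - 3 * z * log w +
        3 / 2 * logMoment w x z) * t + 3 / 2 * logMoment w x z := by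
    unfold mixBound; field_simp; ring
  have α_pos : 0 < α := by linarith
  have α₂_pos : 0 < α₂ := by linarith
  refine neg_of_mul_neg_right ?_ α_pos.le
  rw [mul_eq α_pos]
  refine quadratic_neg_of_endpoints (log_nonneg (by linarith)) h₁ h₂ ?_ ?_
  · rw [← mul_eq hα₁]; exact mul_neg_of_pos_of_neg hα₁ neg₁
  · rw [← mul_eq α₂_pos]; exact mul_neg_of_pos_of_neg α₂_pos neg₂

/-- The check of a certificate `(ω, x, Y)` that serves all `α` in `[α₁, α₂]` at once. -/
def intervalCheck (α₁ α₂ : ℚ) (e : ℕ) (z₁ z₂ : ℚ) (g : ℚ × ℚ × ℚ) : Bool :=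
  mixCheck α₁ (1 - α₁) 3 (3 / (2 * α₁) + 3 / 2) e z₁ z₂ g &&
    mixCheck α₂ (1 - α₁) 3 (3 / (2 * α₂) + 3 / 2) e z₁ z₂ g

lemma IsMix.mixRateExceeds_of_intervalCheck {α₁ α₂ a b : ℚ} {e : ℕ} {g : ℚ × ℚ × ℚ}
    (h : intervalCheck α₁ α₂ e a b g = true) (hα₁ : 0 < α₁) (he : (e : ℚ) = 3 / α₂)
    {α p q z : ℝ} (hmix : IsMix α p q z) (h₁ : α₁ ≤ α) (h₂ : α ≤ α₂) (ha : a ≤ z) (hb : z ≤ b) :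
    MixRateExceeds α (3 / (2 * α)) (3 / (2 * α) + 3 / 2) p q z := by
  have α₁_pos : (0 : ℝ) < α₁ := by exact_mod_cast hα₁
  have α_pos : 0 < α := by linarith
  have hα₂ : 0 < α₂ := by exact_mod_cast h₂.trans_lt' α_pos
  obtain ⟨ω, x, Y⟩ := g
  simp only [intervalCheck, Bool.and_eq_true] at h
  obtain ⟨check₁, check₂⟩ := h
  obtain ⟨hω, hx, hY⟩ := pos_of_mixCheck check₁
  have neg₁ := mixBound_neg_of_mixCheck (by positivity) check₁ ha hb
  have neg₂ := mixBound_neg_of_mixCheck (by positivity) check₂ ha hb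
  push_cast at neg₁ neg₂
  have neg := mixBound_neg_of_endpoints α₁_pos h₁ h₂ hY.le neg₁ neg₂
  have ω_pos : (0 : ℝ) < ω := by linarith
  have odds_le : Y * ((ω : ℝ) ^ 2) ^ (-(3 / (2 * α))) ≤ Y / (ω : ℝ) ^ e := by
    rw [div_eq_mul_inv (Y : ℝ), ← rpow_neg_of_two_mul_eq (e := e) (k := 3 / (2 * α₂)) ω_pos]
    · gcongr
      exact one_le_pow₀ hω
    · have : (e : ℝ) = 3 / α₂ := by exact_mod_cast he
      rw [this]; field_simp
  have slots_eq : 3 / (2 * α) + 3 / 2 + 3 / (2 * α) * α - 3 / (2 * α) = 3 := by field_simp; ring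
  refine hmix.mixRateExceeds_of_mixBound_neg (one_le_pow₀ (n := 2) hω) hx hY ?_
  rw [slots_eq]
  exact (mixBound_mono (sub_nonneg.2 hmix.le_one) (by linarith) (by positivity)
    odds_le).trans_lt neg

/-- The check of a proof that `3 / (2 * α)` and `3 / (2 * α) + 3 / 2` are favorable for `α` in
`[α₁, α₂]`, where `e = 3 / α₂`: sets with `z ≤ z₀` are treated as small sets, and sets with `z ≥ z₁`
by `CrudeBound c D₀`. -/
def intervalCertificate (c D₀ α₁ α₂ z₀ z₁ : ℚ) (e : ℕ) (l : List (ℚ × ℚ × ℚ × ℚ)) : Bool :=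
  decide (0 < c ∧ 0 < D₀ ∧ 0 < α₁ ∧ D₀ ≤ 3 / (2 * α₂) + 3 / 2 ∧
    c * (3 / 2) ≤ (3 / (2 * α₂) + 3 / 2) * z₁ ∧ (e : ℚ) = 3 / α₂) &&
    (logSumCheck 10000 (smallSetList 3 (3 / (2 * α₁) + 3 / 2) z₀) &&
      covers (intervalCheck α₁ α₂ e) z₀ z₁ l)

lemma CrudeBound.favorable_of_intervalCertificate {c D₀ α₁ α₂ z₀ z₁ : ℚ} {e : ℕ}
    {l : List (ℚ × ℚ × ℚ × ℚ)} (hc : CrudeBound c D₀)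
    (h : intervalCertificate c D₀ α₁ α₂ z₀ z₁ e l = true) {α : ℝ} (h₁ : α₁ ≤ α) (h₂ : α ≤ α₂) :
    Favorable α (3 / (2 * α)) (3 / (2 * α) + 3 / 2) := by
  intro p q z hmix
  simp only [intervalCertificate, Bool.and_eq_true, decide_eq_true_eq] at h
  obtain ⟨⟨c_pos, D₀_pos, hα₁, hD₀, hz₁, he⟩, hsmall, hcovers⟩ := h
  have α₁_pos : (0 : ℝ) < α₁ := by exact_mod_cast hα₁
  have α_pos : 0 < α := by linarith
  have k_mul_α : 3 / (2 * α) * α = 3 / 2 := by field_simp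
  have D_ge : 3 / (2 * (α₂ : ℝ)) + 3 / 2 ≤ 3 / (2 * α) + 3 / 2 := by gcongr
  rcases le_total z z₀ with hz₀ | hz₀
  · have bound := smallSet_bound_of_check (by norm_num) (by norm_num) hsmall hmix.z_pos hz₀
    have log_le : log ((3 / (2 * α) + 3 / 2) / 3) ≤ log ((3 / (2 * α₁) + 3 / 2) / 3) := by gcongr
    have slots_eq : 3 / (2 * α) + 3 / 2 + 3 / (2 * α) * α - 3 / (2 * α) = 3 := by
      rw [k_mul_α]; ring
    push_cast at bound
    refine hmix.mixRateExceeds_of_small (by positivity) (by rw [slots_eq]; norm_num) ?_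
    rw [slots_eq]
    linarith
  rcases le_or_gt (z₁ : ℝ) z with hz | hz
  · have D₀_le := (Rat.cast_le (K := ℝ)).2 hD₀
    have c_mul_le := (Rat.cast_le (K := ℝ)).2 hz₁
    push_cast at D₀_le c_mul_le
    have : (0 : ℝ) < α₂ := by linarith
    refine hc.mixRateExceeds_of_mul_le (by exact_mod_cast D₀_pos) (by exact_mod_cast c_pos) hmix
      (by positivity) (by linarith) ?_
    calc (c : ℝ) * (3 / (2 * α) * α) ≤ (3 / (2 * α₂) + 3 / 2) * z₁ := by rwa [k_mul_α]
      _ ≤ (3 / (2 * α₂) + 3 / 2) * z := by gcongr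
      _ ≤ (3 / (2 * α) + 3 / 2) * z := mul_le_mul_of_nonneg_right D_ge hmix.z_pos.le
  · obtain ⟨a, b, g, hcheck, ha, hb⟩ := exists_of_covers hz hcovers hz₀
    exact hmix.mixRateExceeds_of_intervalCheck hcheck hα₁ he h₁ h₂ ha hb

/-- For `α ≤ 3 / 20` and `w ≥ 2` this bounds the entropy minus the rate, relative to `α`, at
relative size `α * t`. -/
noncomputable def scaledBound (w Y t : ℝ) : ℝ :=
  log (1 + Y) + 20 / 3 * Y / w ^ 10 + 69 / 40 * (w - 1) * t ^ 2 - t * log Y - 3 * t * log w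

/-- The terms of `scaledBound`, where `c * log 2` with the rational `c = 10000 / 6931` stands for an
upper bound of `1`. -/
def scaledList (w Y t : ℚ) : List (ℚ × ℚ) :=
  [(1, 1 + Y), ((20 / 3 * Y / w ^ 10 + 69 / 40 * (w - 1) * t ^ 2) * (10000 / 6931), 2), (-t, Y),
    (-(3 * t), w)]

/-- The check of a certificate `(w, Y)` on `[a, b]`, at the endpoints only. -/
def scaledCheck (a b : ℚ) : ℚ × ℚ → Bool
  | (w, Y) => decide (2 ≤ w ∧ 0 < Y) &&
      (logSumCheck 8000 (scaledList w Y a) && logSumCheck 8000 (scaledList w Y b))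

lemma scaledBound_neg_of_check {a b w Y : ℚ} (h : scaledCheck a b (w, Y) = true) {t : ℝ}
    (ha : a ≤ t) (hb : t ≤ b) : (2 : ℝ) ≤ w ∧ (0 : ℝ) < Y ∧ scaledBound w Y t < 0 := by
  simp only [scaledCheck, Bool.and_eq_true, decide_eq_true_eq] at h
  obtain ⟨⟨hw, hY⟩, check_a, check_b⟩ := h
  have two_le_w : (2 : ℝ) ≤ w := by exact_mod_cast hw
  have Y_pos : (0 : ℝ) < Y := by exact_mod_cast hY
  have slope_nonneg : (0 : ℝ) ≤ 69 / 40 * ((w : ℝ) - 1) := by linarith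
  have neg_of_check {s : ℚ} (hs : logSumCheck 8000 (scaledList w Y s) = true) :
      scaledBound w Y s < 0 := by
    have neg := logSum_neg_of_check (by norm_num) hs
    simp only [logSum, scaledList, List.map_cons, List.map_nil, List.sum_cons, List.sum_nil] at neg
    push_cast at neg
    have : 0 ≤ 20 / 3 * Y / (w : ℝ) ^ 10 + 69 / 40 * (w - 1) * (s : ℝ) ^ 2 := by positivity
    unfold scaledBound
    nlinarith [log_two_gt_d9]
  have scaledBound_eq (s : ℝ) : scaledBound w Y s = 69 / 40 * (w - 1) * s ^ 2 +
      (-log Y - 3 * log w) * s + (log (1 + Y) + 20 / 3 * Y / (w : ℝ) ^ 10) := by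
    unfold scaledBound; ring
  refine ⟨two_le_w, Y_pos, ?_⟩
  rw [scaledBound_eq]
  refine quadratic_neg_of_endpoints slope_nonneg ha hb ?_ ?_ <;> rw [← scaledBound_eq]
  exacts [neg_of_check check_a, neg_of_check check_b]

lemma scaledBound_neg_of_small {t : ℝ} (ht : 0 < t) (ht1 : t ≤ 1 / 4) :
    scaledBound (2 / t) t t < 0 := by
  have log_one_add_le := log_le_sub_one_of_pos (x := 1 + t) (by linarith)
  have tail_le : 20 / 3 * t / (2 / t) ^ 10 ≤ t * (1 / 1000) :=
    calc 20 / 3 * t / (2 / t) ^ 10 = t * (20 / 3 * (t / 2) ^ 10) := by field_simp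
      _ ≤ t * (20 / 3 * (1 / 8) ^ 10) := by gcongr t * (20 / 3 * ?_ ^ 10); linarith
      _ ≤ t * (1 / 1000) := by gcongr; norm_num
  have square_eq : 69 / 40 * (2 / t - 1) * t ^ 2 = 69 / 40 * (2 * t - t ^ 2) := by field_simp
  have log_t_le : log t ≤ -(2 * log 2) := by
    have := log_le_log ht ht1
    rwa [show (1 / 4 : ℝ) = (2 ^ 2)⁻¹ by norm_num, log_inv, log_pow, Nat.cast_ofNat] at this
  rw [scaledBound, log_div (by norm_num) ht.ne', square_eq]
  have : t * log t ≤ t * (-(2 * log 2)) := by gcongr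
  have : t * 0.6931471803 ≤ t * log 2 := by gcongr; exact log_two_gt_d9.le
  nlinarith

-- `u ↦ u * w ^ (-(3 / 2 * u))` is decreasing for `u ≥ 20 / 3`.
lemma mul_rpow_neg_le {w u : ℝ} (hw : 2 ≤ w) (hu : 20 / 3 ≤ u) :
    u * w ^ (-(3 / 2 * u)) ≤ 20 / 3 / w ^ 10 := by
  have w_pos : 0 < w := by linarith
  have u_pos : 0 < u := by linarith
  have log_ratio_le := log_le_sub_one_of_pos (x := u / (20 / 3)) (by positivity)
  have log_two_le : log 2 ≤ log w := log_le_log (by norm_num) hw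
  rw [log_div u_pos.ne' (by norm_num)] at log_ratio_le
  rw [← log_le_log_iff (by positivity) (by positivity), log_mul u_pos.ne' (by positivity),
    log_div (by norm_num) (by positivity), log_rpow w_pos, log_pow]
  push_cast
  nlinarith [log_two_gt_d9]

lemma one_sub_mul_log_one_add_le {α w Y : ℝ} (hα : 0 < α) (hα1 : α ≤ 3 / 20) (hw : 2 ≤ w)
    (hY : 0 < Y) :
    (1 - α) * log (1 + Y * w ^ (-(3 / (2 * α)))) ≤ α * (20 / 3 * Y / w ^ 10) := by
  have : 0 < w := by linarith
  have odds_nonneg : 0 ≤ Y * w ^ (-(3 / (2 * α))) := by positivity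
  have rpow_le := mul_rpow_neg_le hw (u := 1 / α) (by rw [le_div_iff₀ hα]; linarith)
  rw [show -(3 / 2 * (1 / α)) = -(3 / (2 * α)) by field_simp] at rpow_le
  calc (1 - α) * log (1 + Y * w ^ (-(3 / (2 * α))))
      ≤ log (1 + Y * w ^ (-(3 / (2 * α)))) :=
        mul_le_of_le_one_left (log_nonneg (by linarith)) (by linarith)
    _ ≤ Y * w ^ (-(3 / (2 * α))) := by
        linarith [log_le_sub_one_of_pos (x := 1 + Y * w ^ (-(3 / (2 * α)))) (by linarith)]
    _ = α * Y * (1 / α * w ^ (-(3 / (2 * α)))) := by field_simp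
    _ ≤ α * Y * (20 / 3 / w ^ 10) := by gcongr
    _ = α * (20 / 3 * Y / w ^ 10) := by ring

lemma mixBound_le_mul_scaledBound {α w Y z : ℝ} (hα : 0 < α) (hα1 : α ≤ 3 / 20) (hw : 2 ≤ w)
    (hY : 0 < Y) (hz : 0 < z) (hz1 : z < 1) :
    mixBound α (1 - α) 3 (3 / (2 * α) + 3 / 2) w (z / (1 - z)) Y (Y * w ^ (-(3 / (2 * α)))) z ≤
      α * scaledBound w Y (z / α) := by
  have log_le := one_sub_mul_log_one_add_le hα hα1 hw hY
  have moment_le : (3 / (2 * α) + 3 / 2) * logMoment w (z / (1 - z)) z ≤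
      α * (69 / 40 * (w - 1) * (z / α) ^ 2) :=
    calc (3 / (2 * α) + 3 / 2) * logMoment w (z / (1 - z)) z
        ≤ (3 / (2 * α) + 3 / 2) * ((w - 1) * z ^ 2) := by
          gcongr; exact logMoment_odds_le (by linarith) hz hz1
      _ = 3 / 2 * (1 + α) * ((w - 1) * z ^ 2) / α := by field_simp
      _ ≤ 69 / 40 * ((w - 1) * z ^ 2) / α := by
          have : 0 ≤ w - 1 := by linarith
          gcongr; linarith
      _ = α * (69 / 40 * (w - 1) * (z / α) ^ 2) := by field_simp
  have scaledBound_eq : α * scaledBound w Y (z / α) = α * log (1 + Y) +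
      α * (20 / 3 * Y / w ^ 10) + α * (69 / 40 * (w - 1) * (z / α) ^ 2) - z * log Y -
        3 * z * log w := by
    unfold scaledBound; field_simp
  rw [scaledBound_eq]
  unfold mixBound
  linarith

lemma IsMix.mixRateExceeds_of_scaledBound_neg {α p q z w Y : ℝ} (h : IsMix α p q z) (hα : 0 < α)
    (hα1 : α ≤ 3 / 20) (hw : 2 ≤ w) (hY : 0 < Y) (hneg : scaledBound w Y (z / α) < 0) :
    MixRateExceeds α (3 / (2 * α)) (3 / (2 * α) + 3 / 2) p q z := by
  have slots_eq : 3 / (2 * α) + 3 / 2 + 3 / (2 * α) * α - 3 / (2 * α) = 3 := by field_simp; ring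
  refine h.mixRateExceeds_of_mixBound_neg (w := w) (x := z / (1 - z)) (by linarith)
    (div_pos h.z_pos (sub_pos.2 h.z_lt_one)) hY ?_
  rw [slots_eq]
  exact (mixBound_le_mul_scaledBound hα hα1 hw hY h.z_pos h.z_lt_one).trans_lt
    (mul_neg_of_pos_of_neg hα hneg)

lemma favorable_of_le_three_twentieths {α : ℝ} (hα : 0 < α) (hα1 : α ≤ 3 / 20) :
    Favorable α (3 / (2 * α)) (3 / (2 * α) + 3 / 2) := by
  intro p q z hmix
  rcases le_or_gt (z / α) (1 / 4) with hz | hz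
  · have t_pos : 0 < z / α := div_pos hmix.z_pos hα
    exact hmix.mixRateExceeds_of_scaledBound_neg hα hα1 (by rw [le_div_iff₀ t_pos]; linarith) t_pos
      (scaledBound_neg_of_small t_pos hz)
  rcases le_or_gt (9 / 5) (z / α) with hz' | hz'
  · have ten_le : 10 ≤ 3 / (2 * α) := by rw [le_div_iff₀ (by positivity)]; linarith
    refine crudeBound_nine_fifths.mixRateExceeds_of_mul_le (by norm_num) (by norm_num) hmix
      (by positivity) (by push_cast; linarith) ?_
    calc ((9 / 5 : ℚ) : ℝ) * (3 / (2 * α) * α) = 3 / (2 * α) * (9 / 5 * α) := by push_cast; ring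
      _ ≤ (3 / (2 * α) + 3 / 2) * z := by
        rw [le_div_iff₀ hα] at hz'
        gcongr
        linarith
  · obtain ⟨a, b, ⟨w, Y⟩, hcheck, ha, hb⟩ := exists_of_covers (check := scaledCheck)
      (a := 1 / 4) (b := 9 / 5) (by push_cast; exact hz')
      (l := [(601/1000, 167/50, 417/500), (217/250, 239/100, 247/100), (9/5, 2, 25/2)])
      (by decide +kernel) (by push_cast; exact hz.le)
    obtain ⟨hw, hY, hneg⟩ := scaledBound_neg_of_check hcheck ha hb
    exact hmix.mixRateExceeds_of_scaledBound_neg hα hα1 hw hY hneg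

lemma favorable_of_mem_Icc_three_twentieths_quarter {α : ℝ} (h₁ : 3 / 20 ≤ α) (h₂ : α ≤ 1 / 4) :
    Favorable α (3 / (2 * α)) (3 / (2 * α) + 3 / 2) := by
  have of_interval {α₁ α₂ z₀ z₁ : ℚ} {e : ℕ} {l : List (ℚ × ℚ × ℚ × ℚ)} :=
    crudeBound_nine_fifths.favorable_of_intervalCertificate (α₁ := α₁) (α₂ := α₂) (z₀ := z₀)
      (z₁ := z₁) (e := e) (l := l) (α := α)
  rcases le_total α (3 / 16) with h | h
  · exact of_interval (α₁ := 3 / 20) (α₂ := 3 / 16) (e := 16) (z₀ := 7 / 400) (z₁ := 57 / 200)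
      (l := [(41/1000, 403/100, 217/10000, 229/1000), (73/1000, 11/4, 117/2500, 307/500),
        (109/1000, 21/10, 201/2500, 39/25), (149/1000, 91/50, 3/25, 31/10),
        (26/125, 33/20, 33/200, 141/10), (57/200, 39/20, 47/250, 1500)])
      (by decide +kernel) (by push_cast; exact h₁) (by push_cast; exact h)
  rcases le_total α (3 / 14) with h' | h'
  · exact of_interval (α₁ := 3 / 16) (α₂ := 3 / 14) (e := 14) (z₀ := 47 / 2000) (z₁ := 159 / 500)
      (l := [(59/1000, 4, 18/625, 53/200), (107/1000, 263/100, 133/2000, 803/1000),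
        (159/1000, 2, 117/1000, 47/20), (9/40, 87/50, 22/125, 813/100),
        (159/500, 193/100, 107/500, 360)])
      (by decide +kernel) (by push_cast; exact h) (by push_cast; exact h')
  · exact of_interval (α₁ := 3 / 14) (α₂ := 1 / 4) (e := 12) (z₀ := 7 / 250) (z₁ := 9 / 25)
      (l := [(7/100, 102/25, 327/10000, 279/1000), (129/1000, 53/20, 389/5000, 22/25),
        (191/1000, 101/50, 7/50, 257/100), (271/1000, 179/100, 21/100, 10),
        (9/25, 101/50, 249/1000, 265)])
      (by decide +kernel) (by push_cast; exact h') (by push_cast; exact h₂)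

lemma favorable_of_mem_Icc_quarter_half {α : ℝ} (h₁ : 1 / 4 ≤ α) (h₂ : α ≤ 1 / 2) :
    Favorable α (3 / (2 * α)) (3 / (2 * α) + 3 / 2) := by
  rcases le_total α (3 / 10) with h | h
  · exact crudeBound_two.favorable_of_intervalCertificate (α₁ := 1 / 4) (α₂ := 3 / 10) (e := 10)
      (z₀ := 17 / 500) (z₁ := 231 / 500)
      (l := [(17/200, 497/100, 353/10000, 129/500), (161/1000, 67/25, 233/2500, 99/100),
        (241/1000, 51/25, 7/40, 149/50), (17/50, 187/100, 261/1000, 141/10),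
        (231/500, 227/100, 309/1000, 507)])
      (by decide +kernel) (by push_cast; exact h₁) (by push_cast; exact h)
  rcases le_total α (3 / 8) with h' | h'
  · exact crudeBound_two.favorable_of_intervalCertificate (α₁ := 3 / 10) (α₂ := 3 / 8) (e := 8)
      (z₀ := 21 / 500) (z₁ := 273 / 500)
      (l := [(21/200, 113/25, 21/500, 151/500), (41/200, 14/5, 111/1000, 113/100),
        (153/500, 213/100, 219/1000, 69/20), (52/125, 201/100, 163/500, 77/5),
        (273/500, 117/50, 409/1000, 226)])
      (by decide +kernel) (by push_cast; exact h) (by push_cast; exact h')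
  rcases le_total α (3 / 7) with h'' | h''
  · exact crudeBound_nine_fourths.favorable_of_intervalCertificate (α₁ := 3 / 8) (α₂ := 3 / 7)
      (e := 7) (z₀ := 27 / 500) (z₁ := 27 / 40)
      (l := [(27/200, 523/100, 453/10000, 67/200), (69/250, 74/25, 137/1000, 127/100),
        (413/1000, 221/100, 291/1000, 537/100), (567/1000, 229/100, 419/1000, 266/5),
        (27/40, 147/50, 119/250, 1280)])
      (by decide +kernel) (by push_cast; exact h') (by push_cast; exact h'')
  · exact crudeBound_nine_fourths.favorable_of_intervalCertificate (α₁ := 3 / 7) (α₂ := 1 / 2)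
      (e := 6) (z₀ := 1 / 16) (z₁ := 3 / 4)
      (l := [(157/1000, 561/100, 119/2500, 313/1000), (329/1000, 157/50, 153/1000, 139/100),
        (483/1000, 47/20, 339/1000, 633/100), (313/500, 61/25, 491/1000, 242/5),
        (741/1000, 281/100, 127/200, 444), (3/4, 71/25, 149/200, 682)])
      (by decide +kernel) (by push_cast; exact h'') (by push_cast; exact h₂)

lemma favorable_of_le_half {α : ℝ} (hα : 0 < α) (hα1 : α ≤ 1 / 2) :
    Favorable α (3 / (2 * α)) (3 / (2 * α) + 3 / 2) := by
  rcases le_total α (3 / 20) with h₁ | h₁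
  · exact favorable_of_le_three_twentieths hα h₁
  rcases le_total α (1 / 4) with h₂ | h₂
  · exact favorable_of_mem_Icc_three_twentieths_quarter h₁ h₂
  · exact favorable_of_mem_Icc_quarter_half h₂ hα1

end OneParameterFamily

section Remainders

lemma favorable_of_three_le {k r : ℝ} (hr : 3 ≤ r) (hrk : r ≤ k) :
    Favorable (r / (2 * k)) k (k + r / 2) := by
  have : 0 < k := by linarith
  have α_le : r / (2 * k) ≤ 1 / 2 := by
    rw [div_le_div_iff₀ (by positivity) (by norm_num)]; linarith
  have scaled := (favorable_of_le_half (α := r / (2 * k)) (by positivity) α_le).mul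
    (c := r / 3) (by linarith)
  convert scaled using 1 <;> field_simp

lemma favorable_two_mul_sub {k r : ℕ} (hk : 2 ≤ k) (hr : 0 < r) (hrk : r ≤ k)
    (hr2 : r = 2 → k ≠ 2) : Favorable ((r : ℝ) / (2 * k)) k (2 * k - r / 2) := by
  have hrk' : (r : ℝ) ≤ k := by exact_mod_cast hrk
  by_cases hr3 : 3 ≤ r
  · have hr3' : (3 : ℝ) ≤ r := by exact_mod_cast hr3
    exact (favorable_of_three_le hr3' hrk').increase (by positivity) (by positivity) (by linarith)
  obtain rfl | rfl : r = 1 ∨ r = 2 := by omega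
  · obtain rfl | rfl | hk4 : k = 2 ∨ k = 3 ∨ 4 ≤ k := by omega
    · convert favorable_quarter using 1 <;> norm_num
    · convert favorable_sixth using 1 <;> norm_num
    · have hk4' : (4 : ℝ) ≤ k := by exact_mod_cast hk4
      refine crudeBound_nine_fifths.favorable (by norm_num) (by norm_num) (by positivity) ?_ ?_ <;>
        push_cast <;> linarith
  · obtain rfl | rfl | hk5 : k = 3 ∨ k = 4 ∨ 5 ≤ k := by have := hr2 rfl; omega
    · convert favorable_third using 1 <;> norm_num
    · convert favorable_quarter.mul (c := 2) (by norm_num) using 1 <;> norm_num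
    · have hk5' : (5 : ℝ) ≤ k := by exact_mod_cast hk5
      refine crudeBound_nine_fifths.favorable (by norm_num) (by norm_num) (by positivity) ?_ ?_ <;>
        push_cast <;> linarith

lemma favorable_of_remainder {k s r : ℕ} (hk : 2 ≤ k) (hs : 1 ≤ s) (hr : 0 < r) (hrk : r < 2 * k)
    (hd : 2 * k + 2 < 2 * k * s + r) : Favorable ((r : ℝ) / (2 * k)) k (k * s + r / 2) := by
  have one_le_r : (1 : ℝ) ≤ r := by exact_mod_cast hr
  obtain rfl | hs2 : s = 1 ∨ 2 ≤ s := by omega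
  · rcases le_or_gt r k with hr' | hr'
    · have hr3 : 3 ≤ r := by omega
      simpa using favorable_of_three_le (k := k) (r := r) (by exact_mod_cast hr3)
        (by exact_mod_cast hr')
    · have flipped := (favorable_two_mul_sub (k := k) (r := 2 * k - r) hk (by omega) (by omega)
        (by omega)).flip
      rw [Nat.cast_sub hrk.le] at flipped
      convert flipped using 1
      · push_cast; field_simp; ring
      · push_cast; ring
  have two_mul_le : (k : ℝ) * 2 ≤ k * s := by gcongr; exact_mod_cast hs2
  by_cases hk3 : 3 ≤ k
  · have three_le_k : (3 : ℝ) ≤ k := by exact_mod_cast hk3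
    refine crudeBound_two.favorable (by norm_num) (by norm_num) (by positivity) ?_ ?_ <;>
      push_cast <;> linarith
  · obtain rfl : k = 2 := by omega
    push_cast at two_mul_le
    refine crudeBound_nine_fourths.favorable (by norm_num) (by norm_num) (by positivity) ?_ ?_ <;>
      push_cast <;> linarith

lemma rateExceeds_of_remainder {k s r : ℕ} (hk : 2 ≤ k) (hs : 1 ≤ s) (hr : 0 < r) (hrk : r < 2 * k)
    (hd : 2 * k + 2 < 2 * k * s + r) {α p q z : ℝ} (hα : α = (r : ℝ) / (2 * k)) (hp : 0 ≤ p)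
    (hp1 : p ≤ 1) (hq : 0 ≤ q) (hq1 : q ≤ 1) (hz : z = α * p + (1 - α) * q) (hz0 : 0 < z)
    (hz1 : z < 1) :
    RateExceeds (α * binEntropy p + (1 - α) * binEntropy q) (k * s * z + k * α * p) z
      (k * s + r / 2) := by
  have hk2 : (2 : ℝ) ≤ k := by exact_mod_cast hk
  have hs1 : (1 : ℝ) ≤ s := by exact_mod_cast hs
  have hrk' : (r : ℝ) < 2 * k := by exact_mod_cast hrk
  have α_nonneg : 0 ≤ α := by rw [hα]; positivity
  have α_le_one : α ≤ 1 := by rw [hα, div_le_one (by positivity)]; linarith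
  have k_mul_α : (k : ℝ) * α = r / 2 := by rw [hα]; field_simp
  rcases le_total q p with hqp | hpq
  · have : 0 ≤ k * α * ((1 - α) * (p - q)) := by
      have := sub_nonneg.2 hqp
      have := sub_nonneg.2 α_le_one
      positivity
    refine .of_average hz0 hz1 (by nlinarith) ?_ ?_
    · rw [hz]; exact mul_binEntropy_add_le α_nonneg (by linarith) (by ring) hp hp1 hq hq1
    · rw [← k_mul_α, hz]; linarith
  · have mix : IsMix (1 - α) q p z :=
      ⟨by linarith, by linarith, hp, hpq, hq1, by rw [hz]; ring, hz0, hz1⟩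
    have favorable := (favorable_of_remainder hk hs hr hrk hd).flip
    rw [← hα] at favorable
    refine RateExceeds.mono (favorable q p z mix) (le_of_eq (by ring)) (le_of_eq ?_)
    rw [← k_mul_α, hz]; ring

end Remainders

section Binomial

/-- The probability of exactly `i` successes in `n` independent trials of probability `p`. -/
noncomputable def binomialProb (n : ℕ) (p : ℝ) (i : ℕ) : ℝ := n.choose i * p ^ i * (1 - p) ^ (n - i)

variable {n i : ℕ} {p : ℝ}

lemma binomialProb_nonneg (hp : 0 ≤ p) (hp1 : p ≤ 1) : 0 ≤ binomialProb n p i := by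
  have : 0 ≤ 1 - p := by linarith
  unfold binomialProb
  positivity

lemma sum_binomialProb (n : ℕ) (p : ℝ) : ∑ i ∈ Finset.range (n + 1), binomialProb n p i = 1 := by
  have binomial := add_pow p (1 - p) n
  rw [add_sub_cancel, one_pow] at binomial
  exact (Finset.sum_congr rfl fun i _ => by rw [binomialProb]; ring).trans binomial.symm

lemma exists_binomialProb_eq_mul (hp : 0 ≤ p) (hp1 : p ≤ 1) (hi : i < n) :
    ∃ c : ℝ, 0 ≤ c ∧ binomialProb n p i = c * ((i + 1) * (1 - p)) ∧
      binomialProb n p (i + 1) = c * ((n - i) * p) := by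
  have choose_succ : (n.choose (i + 1) : ℝ) * (i + 1) = n.choose i * (n - i) := by
    rw [← Nat.cast_sub hi.le]
    exact_mod_cast Nat.choose_succ_right_eq n i
  have : 0 ≤ 1 - p := by linarith
  refine ⟨n.choose i * p ^ i * (1 - p) ^ (n - (i + 1)) / (i + 1), by positivity, ?_, ?_⟩
  · rw [binomialProb, show n - i = n - (i + 1) + 1 by omega, pow_succ]
    field_simp
  · rw [binomialProb, pow_succ, div_mul_eq_mul_div, eq_div_iff (by positivity)]
    linear_combination p ^ i * p * (1 - p) ^ (n - (i + 1)) * choose_succ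

lemma binomialProb_le_succ (hp : 0 ≤ p) (hp1 : p ≤ 1) (hi : i < n) (h : i + 1 ≤ n * p) :
    binomialProb n p i ≤ binomialProb n p (i + 1) := by
  obtain ⟨c, hc, eq_i, eq_succ⟩ := exists_binomialProb_eq_mul hp hp1 hi
  rw [eq_i, eq_succ]
  exact mul_le_mul_of_nonneg_left (by linarith) hc

lemma binomialProb_succ_le (hp : 0 ≤ p) (hp1 : p ≤ 1) (hi : i < n) (h : n * p ≤ i) :
    binomialProb n p (i + 1) ≤ binomialProb n p i := by
  obtain ⟨c, hc, eq_i, eq_succ⟩ := exists_binomialProb_eq_mul hp hp1 hi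
  rw [eq_i, eq_succ]
  exact mul_le_mul_of_nonneg_left (by linarith) hc

lemma binomialProb_le_mode {j : ℕ} (hp : 0 ≤ p) (hp1 : p ≤ 1) (hj : (j : ℝ) = n * p)
    (hi : i ≤ n) : binomialProb n p i ≤ binomialProb n p j := by
  have hjn : j ≤ n := by
    exact_mod_cast hj.trans_le (mul_le_of_le_one_right (Nat.cast_nonneg n) hp1)
  rcases le_total i j with hij | hij
  · refine Nat.le_induction (P := fun t _ => t ≤ j → binomialProb n p i ≤ binomialProb n p t)
      (fun _ => le_rfl) (fun t _ ih ht => ?_) j hij le_rfl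
    exact (ih (by omega)).trans (binomialProb_le_succ hp hp1 (by omega) (hj ▸ mod_cast ht))
  · refine Nat.le_induction (P := fun t _ => t ≤ n → binomialProb n p t ≤ binomialProb n p j)
      (fun _ => le_rfl) (fun t hjt ih ht => ?_) i hij hi
    exact (binomialProb_succ_le hp hp1 (by omega) (hj ▸ mod_cast hjt)).trans (ih (by omega))

lemma one_le_mul_binomialProb {j : ℕ} (hp : 0 ≤ p) (hp1 : p ≤ 1) (hj : (j : ℝ) = n * p) :
    1 ≤ (n + 1) * binomialProb n p j :=
  calc 1 = ∑ i ∈ Finset.range (n + 1), binomialProb n p i := (sum_binomialProb n p).symm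
    _ ≤ (Finset.range (n + 1)).card • binomialProb n p j :=
        Finset.sum_le_card_nsmul _ _ _ fun i hi =>
          binomialProb_le_mode hp hp1 hj (Nat.lt_succ_iff.1 (Finset.mem_range.1 hi))
    _ = (n + 1) * binomialProb n p j := by simp

lemma binomialProb_eq_choose_mul_exp {j : ℕ} (hp : 0 ≤ p) (hp1 : p ≤ 1) (hj : (j : ℝ) = n * p) :
    binomialProb n p j = n.choose j * exp (-(n * binEntropy p)) := by
  rw [binomialProb, mul_assoc]
  congr 1
  rcases hp.eq_or_lt with rfl | hp0
  · obtain rfl : j = 0 := by simpa using hj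
    simp
  rcases hp1.eq_or_lt with rfl | hp1
  · obtain rfl : j = n := by simpa using hj
    simp
  have hq : 0 < 1 - p := by linarith
  have hjn : j ≤ n := by
    exact_mod_cast hj.trans_le (mul_le_of_le_one_right (Nat.cast_nonneg n) hp1.le)
  rw [← exp_log (pow_pos hp0 j), ← exp_log (pow_pos hq (n - j)), ← exp_add, log_pow, log_pow,
    binEntropy_eq_neg_mul_log_sub, Nat.cast_sub hjn, hj]
  congr 1
  ring

lemma choose_mul_exp_le_one {j : ℕ} (hp : 0 ≤ p) (hp1 : p ≤ 1) (hj : (j : ℝ) = n * p) :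
    n.choose j * exp (-(n * binEntropy p)) ≤ 1 := by
  have hjn : j ≤ n := by
    exact_mod_cast hj.trans_le (mul_le_of_le_one_right (Nat.cast_nonneg n) hp1)
  rw [← binomialProb_eq_choose_mul_exp hp hp1 hj, ← sum_binomialProb n p]
  exact Finset.single_le_sum (f := binomialProb n p) (fun i _ => binomialProb_nonneg hp hp1)
    (Finset.mem_range.2 (Nat.lt_succ_iff.2 hjn))

end Binomial

section HalfEdgeSets

variable {ι : Type*} [DecidableEq ι]

/-- The number of indices both of whose half-edges lie in `U`. -/
def pairCount [Fintype ι] (U : Finset (ι × Bool)) : ℕ :=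
  (Finset.univ.filter fun i => (i, false) ∈ U ∧ (i, true) ∈ U).card

lemma pow_pairCount_mul_pow_card [Fintype ι] {R : Type*} [CommSemiring R] (w x : R)
    (U : Finset (ι × Bool)) :
    w ^ pairCount U * x ^ U.card = ∏ i, (if (i, false) ∈ U ∧ (i, true) ∈ U then w else 1) *
      ((if (i, true) ∈ U then x else 1) * if (i, false) ∈ U then x else 1) := by
  have pow_card : x ^ U.card = ∏ σ : ι × Bool, if σ ∈ U then x else 1 := by
    rw [Finset.prod_ite_mem, Finset.univ_inter, Finset.prod_const]
  rw [Finset.prod_mul_distrib, pow_card, Fintype.prod_prod_type, pairCount, ← Finset.prod_const,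
    Finset.prod_filter]
  simp only [Fintype.prod_bool]

/-- Which of the two half-edges of each index lie in `U`. -/
def halfEdgeIndicator (U : Finset (ι × Bool)) (i : ι) : Bool × Bool :=
  (decide ((i, false) ∈ U), decide ((i, true) ∈ U))

lemma halfEdgeIndicator_bijective [Finite ι] : Function.Bijective (halfEdgeIndicator (ι := ι)) := by
  have := Fintype.ofFinite ι
  constructor
  · intro U U' h
    ext ⟨i, b⟩
    have := congrFun h i
    simp only [halfEdgeIndicator, Prod.mk.injEq, decide_eq_decide] at this
    cases b <;> tauto
  · intro f
    refine ⟨Finset.univ.filter fun σ => if σ.2 then (f σ.1).2 else (f σ.1).1, funext fun i => ?_⟩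
    simp [halfEdgeIndicator]

variable [Fintype ι]

lemma sum_pow_pairCount_mul_pow_card {R : Type*} [CommSemiring R] (w x : R) :
    ∑ U : Finset (ι × Bool), w ^ pairCount U * x ^ U.card =
      (1 + 2 * x + w * x ^ 2) ^ Fintype.card ι := by
  let weight : Bool × Bool → R := fun b =>
    (if b.1 ∧ b.2 then w else 1) * ((if b.2 then x else 1) * if b.1 then x else 1)
  calc ∑ U : Finset (ι × Bool), w ^ pairCount U * x ^ U.card
      = ∑ f : ι → Bool × Bool, ∏ i, weight (f i) :=
        Fintype.sum_bijective _ halfEdgeIndicator_bijective _ _ fun U => by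
          simp [pow_pairCount_mul_pow_card, weight, halfEdgeIndicator]
    _ = ∏ _i : ι, ∑ b, weight b := by rw [Finset.prod_univ_sum, Fintype.piFinset_univ]
    _ = (1 + 2 * x + w * x ^ 2) ^ Fintype.card ι := by
        rw [Finset.prod_const, Finset.card_univ]
        congr 1
        simp only [Fintype.sum_prod_type, Fintype.sum_bool, weight]
        simp
        ring

lemma card_pairCount_ge_mul_le {w x : ℝ} (hw : 1 ≤ w) (hx : 0 < x) (n m : ℕ) :
    (((Finset.powersetCard n (Finset.univ : Finset (ι × Bool))).filter
      fun U => m ≤ pairCount U).card : ℝ) * (w ^ m * x ^ n) ≤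
      (1 + 2 * x + w * x ^ 2) ^ Fintype.card ι := by
  have : 0 < w := by linarith
  rw [← sum_pow_pairCount_mul_pow_card, ← nsmul_eq_mul]
  refine (Finset.card_nsmul_le_sum _ (fun U => w ^ pairCount U * x ^ U.card) _
    fun U hU => ?_).trans (Finset.sum_le_sum_of_subset_of_nonneg (Finset.subset_univ _)
    fun U _ _ => by positivity)
  obtain ⟨hU, hm⟩ := Finset.mem_filter.1 hU
  rw [(Finset.mem_powersetCard.1 hU).2]
  gcongr

end HalfEdgeSets

section Tail

variable {ι V : Type*} [Fintype ι] [DecidableEq ι] [DecidableEq V]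

/-- The half-edges mapped into `S`. -/
def halfEdgesIn (S : Finset V) (g : ι × Bool → V) : Finset (ι × Bool) :=
  Finset.univ.filter fun σ => g σ ∈ S

lemma pairCount_halfEdgesIn (S : Finset V) (g : ι × Bool → V) :
    pairCount (halfEdgesIn S g) = innerCount g S := by
  simp [pairCount, halfEdgesIn, innerCount]

variable [Fintype V] {d : ℕ}

lemma card_halfEdgesIn {g : ι × Bool → V} (hg : g ∈ configs ι V d) (S : Finset V) :
    (halfEdgesIn S g).card = d * S.card := by
  rw [halfEdgesIn, Finset.card_eq_sum_card_fiberwise (f := g) (t := S) fun σ hσ => by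
    simpa using hσ, mul_comm, ← smul_eq_mul, ← Finset.sum_const]
  refine Finset.sum_congr rfl fun v hv => ?_
  rw [← card_fiber_of_mem_configs hg v, Finset.filter_filter]
  congr 1
  ext σ
  simp only [Finset.mem_filter, Finset.mem_univ, true_and]
  exact ⟨fun h => h.2, fun h => ⟨h ▸ hv, h⟩⟩

lemma card_filter_halfEdgesIn_le (S : Finset V) {U U' : Finset (ι × Bool)}
    (h : U.card = U'.card) :
    ((configs ι V d).filter fun g => halfEdgesIn S g = U).card ≤
      ((configs ι V d).filter fun g => halfEdgesIn S g = U').card := by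
  obtain ⟨e⟩ : Nonempty (U' ≃ U) := by
    rw [← Fintype.card_eq]; simpa using h.symm
  let τ : Equiv.Perm (ι × Bool) := e.extendSubtype
  have mem_iff : ∀ σ, τ σ ∈ U ↔ σ ∈ U' := by
    intro σ
    by_cases hσ : σ ∈ U'
    · exact iff_of_true (e.extendSubtype_mem σ hσ) hσ
    · exact iff_of_false (e.extendSubtype_not_mem σ hσ) hσ
  refine Finset.card_le_card_of_injOn (fun g => g ∘ τ) (fun g hg => ?_)
    fun g _ g' _ h => τ.surjective.injective_comp_right h
  obtain ⟨hg, hU⟩ := Finset.mem_filter.1 hg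
  refine Finset.mem_filter.2 ⟨Finset.mem_filter.2 ⟨Finset.mem_univ _, fun v => ?_⟩, ?_⟩
  · rw [← card_fiber_of_mem_configs hg v]
    refine Finset.card_bij' (fun σ _ => τ σ) (fun σ _ => τ.symm σ) ?_ ?_ ?_ ?_ <;> simp
  · ext σ
    rw [← mem_iff, ← hU]
    simp [halfEdgesIn]

lemma card_configs_eq_choose_mul (S : Finset V) {U : Finset (ι × Bool)}
    (hU : U.card = d * S.card) :
    (configs ι V d).card = (2 * Fintype.card ι).choose (d * S.card) *
      ((configs ι V d).filter fun g => halfEdgesIn S g = U).card := by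
  rw [Finset.card_eq_sum_card_fiberwise (f := halfEdgesIn S)
    (t := Finset.powersetCard (d * S.card) Finset.univ) fun g hg =>
      Finset.mem_powersetCard.2 ⟨Finset.subset_univ _, card_halfEdgesIn hg S⟩,
    Finset.sum_eq_card_nsmul fun U' hU' => ?_, Finset.card_powersetCard, smul_eq_mul,
    Finset.card_univ, Fintype.card_prod, Fintype.card_bool, mul_comm 2]
  have card_eq : U'.card = U.card := (Finset.mem_powersetCard.1 hU').2.trans hU.symm
  exact le_antisymm (card_filter_halfEdgesIn_le S card_eq)
    (card_filter_halfEdgesIn_le S card_eq.symm)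

lemma card_innerCount_ge_mul_choose_le (S : Finset V) (m : ℕ) :
    ((configs ι V d).filter fun g => m ≤ innerCount g S).card *
      (2 * Fintype.card ι).choose (d * S.card) ≤
      ((Finset.powersetCard (d * S.card) (Finset.univ : Finset (ι × Bool))).filter
        fun U => m ≤ pairCount U).card * (configs ι V d).card := by
  rw [Finset.card_eq_sum_card_fiberwise (f := halfEdgesIn S)
    (t := (Finset.powersetCard (d * S.card) (Finset.univ : Finset (ι × Bool))).filter fun U =>
      m ≤ pairCount U)
    fun g hg => ?_, Finset.sum_mul, ← smul_eq_mul]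
  · refine Finset.sum_le_card_nsmul _ _ _ fun U hU => ?_
    rw [card_configs_eq_choose_mul S (Finset.mem_powersetCard.1 (Finset.mem_filter.1 hU).1).2,
      mul_comm]
    exact Nat.mul_le_mul_left _
      (Finset.card_le_card (Finset.filter_subset_filter _ (Finset.filter_subset _ _)))
  · obtain ⟨hg, hm⟩ := Finset.mem_filter.1 hg
    exact Finset.mem_filter.2 ⟨Finset.mem_powersetCard.2 ⟨Finset.subset_univ _,
      card_halfEdgesIn hg S⟩, by rwa [pairCount_halfEdgesIn]⟩

lemma card_innerCount_ge_mul_le {w x : ℝ} (hw : 1 ≤ w) (hx : 0 < x) (S : Finset V) (m : ℕ) :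
    (((configs ι V d).filter fun g => m ≤ innerCount g S).card : ℝ) *
      ((2 * Fintype.card ι).choose (d * S.card) * (w ^ m * x ^ (d * S.card))) ≤
      (configs ι V d).card * (1 + 2 * x + w * x ^ 2) ^ Fintype.card ι := by
  have count_le := card_innerCount_ge_mul_choose_le (ι := ι) (d := d) S m
  replace count_le := Nat.cast_le (α := ℝ).2 count_le
  push_cast at count_le
  have weight_le := card_pairCount_ge_mul_le (ι := ι) hw hx (d * S.card) m
  have : 0 ≤ w ^ m * x ^ (d * S.card) := by positivity
  rw [← mul_assoc]
  refine (mul_le_mul_of_nonneg_right count_le this).trans ?_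
  rw [mul_comm (Nat.cast _) ((configs ι V d).card : ℝ), mul_assoc]
  gcongr

lemma pow_mul_exp_neg_binEntropy {w x z : ℝ} (hw : 0 < w) (hx : 0 < x) {M n : ℕ}
    (hn : (n : ℝ) = (2 * M : ℕ) * z) (m : ℕ) :
    (1 + 2 * x + w * x ^ 2) ^ M * exp (-((2 * M : ℕ) * binEntropy z)) =
      w ^ m * x ^ n * exp (-dualRate w x m z M) := by
  have quadratic_pos : 0 < 1 + 2 * x + w * x ^ 2 := by positivity
  rw [← exp_log (pow_pos quadratic_pos M), ← exp_log (pow_pos hw m), ← exp_log (pow_pos hx n),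
    ← exp_add, ← exp_add, ← exp_add, log_pow, log_pow, log_pow, hn, dualRate, logMoment]
  push_cast
  ring_nf

/-- Chernoff's bound: the configurations inducing many edges on `S` are counted by the sets of
half-edges attached to `S`, which are equidistributed among the sets of their size. -/
lemma card_innerCount_ge_le_exp {w x z : ℝ} (hw : 1 ≤ w) (hx : 0 < x) (hz : 0 ≤ z) (hz1 : z ≤ 1)
    (hc : 2 * Fintype.card ι = Fintype.card V * d) (S : Finset V)
    (hS : (S.card : ℝ) = Fintype.card V * z) (m : ℕ) :
    (((configs ι V d).filter fun g => m ≤ innerCount g S).card : ℝ) ≤ (configs ι V d).card *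
      ((Fintype.card V * d + 1) * exp (-dualRate w x m z (Fintype.card ι))) := by
  have hw0 : 0 < w := by linarith
  have half_edges : ((d * S.card : ℕ) : ℝ) = (2 * Fintype.card ι : ℕ) * z := by
    rw [hc]; push_cast; rw [hS]; ring
  have choose_ge := one_le_mul_binomialProb hz hz1 half_edges
  rw [binomialProb_eq_choose_mul_exp hz hz1 half_edges] at choose_ge
  have markov := card_innerCount_ge_mul_le (ι := ι) (d := d) hw hx S m
  set C : ℝ := ((2 * Fintype.card ι).choose (d * S.card) : ℝ)
  set E : ℝ := exp (-((2 * Fintype.card ι : ℕ) * binEntropy z))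
  set L : ℝ := (((configs ι V d).filter fun g => m ≤ innerCount g S).card : ℝ)
  have weight_pos : 0 < w ^ m * x ^ (d * S.card) := by positivity
  refine le_of_mul_le_mul_right ?_ weight_pos
  calc L * (w ^ m * x ^ (d * S.card))
      ≤ L * (w ^ m * x ^ (d * S.card)) * (((2 * Fintype.card ι : ℕ) + 1) * (C * E)) :=
        le_mul_of_one_le_right (by positivity) choose_ge
    _ = L * (C * (w ^ m * x ^ (d * S.card))) * (((2 * Fintype.card ι : ℕ) + 1) * E) := by ring
    _ ≤ (configs ι V d).card * (1 + 2 * x + w * x ^ 2) ^ Fintype.card ι *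
          (((2 * Fintype.card ι : ℕ) + 1) * E) := by gcongr
    _ = (configs ι V d).card * (((2 * Fintype.card ι : ℕ) + 1) *
          ((1 + 2 * x + w * x ^ 2) ^ Fintype.card ι * E)) := by ring
    _ = (configs ι V d).card * ((Fintype.card V * d + 1) *
          exp (-dualRate w x m z (Fintype.card ι))) * (w ^ m * x ^ (d * S.card)) := by
        rw [pow_mul_exp_neg_binEntropy hw0 hx half_edges m, hc]
        push_cast
        ring

end Tail

section UnionBound

open Classical in
lemma card_filter_exists_le_sum {α β : Type*} [Fintype β] (Ω : Finset α) (p : β → Prop)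
    (q : β → α → Prop) :
    ((Ω.filter fun g => ∃ S, p S ∧ q S g).card : ℝ) ≤
      ∑ S with p S, ((Ω.filter (q S)).card : ℝ) := by
  rw [← Nat.cast_sum]
  refine Nat.cast_le.2 ((Finset.card_le_card fun g hg => ?_).trans Finset.card_biUnion_le)
  obtain ⟨hg, S, hS, hSg⟩ := Finset.mem_filter.1 hg
  exact Finset.mem_biUnion.2
    ⟨S, Finset.mem_filter.2 ⟨Finset.mem_univ _, hS⟩, Finset.mem_filter.2 ⟨hg, hSg⟩⟩

end UnionBound

section SmallSets

lemma sq_mul_pow_le (n : ℕ) : (n : ℝ) ^ 2 * (1 / 16) ^ n ≤ (1 / 2) ^ n := by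
  have sq_le : (n : ℝ) ^ 2 ≤ 8 ^ n :=
    calc (n : ℝ) ^ 2 ≤ (2 ^ n) ^ 2 := by gcongr; exact_mod_cast Nat.lt_two_pow_self.le
      _ = (2 ^ 2) ^ n := by rw [← pow_mul, ← pow_mul, mul_comm]
      _ ≤ 8 ^ n := by gcongr; norm_num
  calc (n : ℝ) ^ 2 * (1 / 16) ^ n ≤ 8 ^ n * (1 / 16) ^ n := by gcongr
    _ = (1 / 2) ^ n := by rw [← mul_pow]; norm_num

lemma choose_le_exp_mul_pow {N n : ℕ} {z : ℝ} (hN : 0 < N) (hz : 0 < z) (hn : (n : ℝ) = N * z) :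
    (N.choose n : ℝ) ≤ exp 1 ^ n * z⁻¹ ^ n := by
  have : (0 : ℝ) < N := by exact_mod_cast hN
  have : (0 : ℝ) < n.factorial := by exact_mod_cast n.factorial_pos
  calc (N.choose n : ℝ) ≤ N ^ n / n.factorial := Nat.choose_le_pow_div n N
    _ = (n ^ n / n.factorial) * z⁻¹ ^ n := by
        rw [hn, mul_pow, inv_pow]; field_simp
    _ ≤ exp n * z⁻¹ ^ n := by
        gcongr
        exact pow_div_factorial_le_exp (n : ℝ) (Nat.cast_nonneg n) n
    _ = exp 1 ^ n * z⁻¹ ^ n := by rw [← exp_nat_mul, mul_one]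

/-- The expected number of sets of `n = N * z` vertices inducing at least `2 * n + 1` edges is at
most the left-hand side, by the bound of `card_innerCount_ge_le_mul_pow`. -/
lemma choose_mul_pow_le {N d n : ℕ} {z : ℝ} (hN : 0 < N) (hd : 0 < d) (hz : 0 < z)
    (hn0 : 0 < n) (hn : (n : ℝ) = N * z) (hsmall : (d : ℝ) ^ 2 * exp 3 * z ≤ 1) :
    (N.choose n : ℝ) * ((N * d + 1) * (exp 2 ^ n * (d * z / 4) ^ (2 * n + 1))) ≤
      d ^ 4 * exp 3 / (2 * N) * (1 / 2) ^ n := by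
  have : (0 : ℝ) < N := by exact_mod_cast hN
  have exp_three : exp 3 = exp 1 * exp 2 := by rw [← exp_add]; norm_num
  set y : ℝ := d ^ 2 * exp 3 * z with hy
  have hy0 : 0 < y := by positivity
  have pow_le : (y / 16) ^ n ≤ y * (1 / 16) ^ n := by
    rw [div_eq_mul_one_div, mul_pow]
    gcongr
    exact pow_le_of_le_one hy0.le hsmall hn0.ne'
  have one_le : (1 : ℝ) ≤ N * d := by exact_mod_cast Nat.mul_pos hN hd
  calc (N.choose n : ℝ) * ((N * d + 1) * (exp 2 ^ n * (d * z / 4) ^ (2 * n + 1)))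
      ≤ (exp 1 ^ n * z⁻¹ ^ n) * ((2 * N * d) * (exp 2 ^ n * (d * z / 4) ^ (2 * n + 1))) := by
        gcongr
        · exact choose_le_exp_mul_pow hN hz hn
        · linarith
    _ = d ^ 2 * n / 2 * (y / 16) ^ n := by
        have : y / 16 = exp 1 * z⁻¹ * (exp 2 * (d * z / 4) ^ 2) := by
          rw [hy, exp_three]; field_simp; norm_num
        rw [this, mul_pow, mul_pow, mul_pow, ← pow_mul, pow_succ, hn]
        ring
    _ ≤ d ^ 2 * n / 2 * (y * (1 / 16) ^ n) := by gcongr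
    _ = d ^ 4 * exp 3 / (2 * N) * (n ^ 2 * (1 / 16) ^ n) := by rw [hy, hn]; field_simp
    _ ≤ d ^ 4 * exp 3 / (2 * N) * (1 / 2) ^ n := by gcongr; exact sq_mul_pow_le n

variable {ι V : Type*} [Fintype ι] [DecidableEq ι] [Fintype V] [DecidableEq V] {d : ℕ}

/-- Chernoff's bound with `w = 4 / (d * z)`, which balances the two terms up to constants. -/
lemma card_innerCount_ge_le_mul_pow {z : ℝ} (hc : 2 * Fintype.card ι = Fintype.card V * d)
    (hd : 0 < d) (hz : 0 < z) (hz1 : z < 1) (hdz : d * z ≤ 4) (S : Finset V)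
    (hS : (S.card : ℝ) = Fintype.card V * z) (m : ℕ) :
    (((configs ι V d).filter fun g => m ≤ innerCount g S).card : ℝ) ≤ (configs ι V d).card *
      ((Fintype.card V * d + 1) * (exp 2 ^ S.card * (d * z / 4) ^ m)) := by
  set w := 4 / (d * z) with hw
  have hw1 : 1 ≤ w := (one_le_div (by positivity)).2 hdz
  have half_degree : (Fintype.card ι : ℝ) = Fintype.card V * d / 2 := by
    have : (2 * Fintype.card ι : ℝ) = Fintype.card V * d := by exact_mod_cast hc
    linarith
  have rate_ge : m * log w - 2 * S.card ≤ dualRate w (z / (1 - z)) m z (Fintype.card ι) := by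
    have moment_le : Fintype.card ι * logMoment w (z / (1 - z)) z ≤ 2 * S.card :=
      calc (Fintype.card ι : ℝ) * logMoment w (z / (1 - z)) z
          ≤ Fintype.card ι * (w * z ^ 2) := by
            gcongr
            linarith [logMoment_odds_le hw1 hz hz1, sq_nonneg z]
        _ = 2 * S.card := by rw [half_degree, hw, hS]; field_simp; norm_num
    rw [dualRate]
    linarith
  have odds_pos : 0 < z / (1 - z) := div_pos hz (sub_pos.2 hz1)
  refine (card_innerCount_ge_le_exp hw1 odds_pos hz.le hz1.le hc S hS m).trans ?_
  gcongr
  calc exp (-dualRate w (z / (1 - z)) m z (Fintype.card ι))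
      ≤ exp (S.card * 2 + m * log (d * z / 4)) := by
        gcongr
        rw [← inv_div 4, log_inv, ← hw]
        linarith
    _ = exp 2 ^ S.card * (d * z / 4) ^ m := by
        rw [exp_add, exp_nat_mul, exp_nat_mul, exp_log (by positivity)]

/-- Some nonempty set of at most `ε * |V|` vertices induces more than two edges per vertex. -/
def HasSmallDenseSet (ε : ℝ) (g : ι × Bool → V) : Prop :=
  ∃ S : Finset V, (S.Nonempty ∧ (S.card : ℝ) ≤ ε * Fintype.card V) ∧
    2 * S.card + 1 ≤ innerCount g S

/-- A bound, relative to the number of configurations, for the number of configurations in which a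
given set of `n` of the `N` vertices induces at least `2 * n + 1` edges, if `0 < n ≤ ε * N`. -/
noncomputable def smallSetBound (N d : ℕ) (ε : ℝ) (n : ℕ) : ℝ :=
  if 0 < n ∧ (n : ℝ) ≤ ε * N then
    (N * d + 1) * (exp 2 ^ n * (d * ((n : ℝ) / N) / 4) ^ (2 * n + 1)) else 0

lemma smallSetBound_nonneg (N d : ℕ) (ε : ℝ) (n : ℕ) : 0 ≤ smallSetBound N d ε n := by
  unfold smallSetBound
  positivity

lemma sum_choose_mul_smallSetBound_le {N : ℕ} {ε : ℝ} (hN : 0 < N) (hd : 0 < d)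
    (hε : (d : ℝ) ^ 2 * exp 3 * ε ≤ 1) :
    ∑ n ∈ Finset.range (N + 1), N.choose n * smallSetBound N d ε n ≤ d ^ 4 * exp 3 / N := by
  have hN' : (0 : ℝ) < N := by exact_mod_cast hN
  calc ∑ n ∈ Finset.range (N + 1), N.choose n * smallSetBound N d ε n
      ≤ ∑ n ∈ Finset.range (N + 1), d ^ 4 * exp 3 / (2 * N) * (1 / 2) ^ n := by
        refine Finset.sum_le_sum fun n _ => ?_
        unfold smallSetBound
        split_ifs with h
        · have hn : (0 : ℝ) < n := by exact_mod_cast h.1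
          have ratio_le : (n : ℝ) / N ≤ ε := (div_le_iff₀ hN').2 h.2
          exact choose_mul_pow_le hN hd (by positivity) h.1 (by field_simp)
            (hε.trans' (by gcongr))
        · rw [mul_zero]
          positivity
    _ ≤ d ^ 4 * exp 3 / (2 * N) * 2 := by
        rw [← Finset.mul_sum]
        gcongr
        exact sum_geometric_two_le _
    _ = d ^ 4 * exp 3 / N := by field_simp

lemma card_innerCount_ge_le_smallSetBound {ε : ℝ} (hc : 2 * Fintype.card ι = Fintype.card V * d)
    (hd : 0 < d) (hε : (d : ℝ) ^ 2 * exp 3 * ε ≤ 1) (hε1 : ε < 1) {S : Finset V}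
    (hS : S.Nonempty) (hSε : (S.card : ℝ) ≤ ε * Fintype.card V) :
    (((configs ι V d).filter fun g => 2 * S.card + 1 ≤ innerCount g S).card : ℝ) ≤
      (configs ι V d).card * smallSetBound (Fintype.card V) d ε S.card := by
  have : (0 : ℝ) < S.card := by exact_mod_cast hS.card_pos
  have hN : (0 : ℝ) < Fintype.card V := by
    exact_mod_cast hS.card_pos.trans_le (Finset.card_le_univ S)
  have hd1 : (1 : ℝ) ≤ d := by exact_mod_cast hd
  have ratio_le : (S.card : ℝ) / Fintype.card V ≤ ε := (div_le_iff₀ hN).2 hSε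
  have hε0 : 0 ≤ ε := ratio_le.trans' (by positivity)
  have degree_mul_le : d * ((S.card : ℝ) / Fintype.card V) ≤ 4 :=
    calc d * ((S.card : ℝ) / Fintype.card V) ≤ d * ε := by gcongr
      _ ≤ d ^ 2 * exp 3 * ε := by
          gcongr
          nlinarith [one_le_exp (by norm_num : (0 : ℝ) ≤ 3)]
      _ ≤ 4 := by linarith
  rw [smallSetBound, if_pos ⟨hS.card_pos, hSε⟩]
  exact card_innerCount_ge_le_mul_pow hc hd (by positivity) (by linarith) degree_mul_le S
    (by field_simp) _

open Classical in
lemma card_hasSmallDenseSet_le {ε : ℝ} (hε : (d : ℝ) ^ 2 * exp 3 * ε ≤ 1) (hε1 : ε < 1)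
    (hc : 2 * Fintype.card ι = Fintype.card V * d) (hpos : 0 < Fintype.card ι) :
    (((configs ι V d).filter (HasSmallDenseSet ε)).card : ℝ) ≤
      (configs ι V d).card * (d ^ 4 * exp 3 / Fintype.card V) := by
  have hN : 0 < Fintype.card V := Nat.pos_of_mul_pos_right (b := d) (by omega)
  have hd : 0 < d := Nat.pos_of_mul_pos_left (a := Fintype.card V) (by omega)
  calc (((configs ι V d).filter (HasSmallDenseSet ε)).card : ℝ)
      ≤ ∑ S : Finset V with S.Nonempty ∧ (S.card : ℝ) ≤ ε * Fintype.card V,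
          (((configs ι V d).filter fun g => 2 * S.card + 1 ≤ innerCount g S).card : ℝ) := by
        unfold HasSmallDenseSet
        convert card_filter_exists_le_sum (configs ι V d)
          (fun S : Finset V => S.Nonempty ∧ (S.card : ℝ) ≤ ε * Fintype.card V)
          fun S g => 2 * S.card + 1 ≤ innerCount g S
    _ ≤ ∑ S : Finset V, (configs ι V d).card * smallSetBound (Fintype.card V) d ε S.card :=
        (Finset.sum_le_sum fun S hS => card_innerCount_ge_le_smallSetBound hc hd hε hε1
          (Finset.mem_filter.1 hS).2.1 (Finset.mem_filter.1 hS).2.2).trans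
          (Finset.sum_le_sum_of_subset_of_nonneg (Finset.filter_subset _ _) fun S _ _ =>
            mul_nonneg (Nat.cast_nonneg _) (smallSetBound_nonneg _ _ _ _))
    _ = (configs ι V d).card * ∑ n ∈ Finset.range (Fintype.card V + 1),
          (Fintype.card V).choose n * smallSetBound (Fintype.card V) d ε n := by
        rw [← Finset.mul_sum, ← Finset.powerset_univ, Finset.sum_powerset_apply_card]
        simp only [Finset.card_univ, nsmul_eq_mul]
    _ ≤ (configs ι V d).card * (d ^ 4 * exp 3 / Fintype.card V) := by
        gcongr
        exact sum_choose_mul_smallSetBound_le hN hd hε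

end SmallSets

section Compactness

lemma RateExceeds.exists_eventually {X : Type*} [TopologicalSpace X] {H m z : X → ℝ} {D : ℝ}
    (hH : Continuous H) (hm : Continuous m) (hz : Continuous z) {x₀ : X}
    (h : RateExceeds (H x₀) (m x₀) (z x₀) D) :
    ∃ c > 0, ∀ᶠ x in nhds x₀, RateExceeds (H x + c) (m x) (z x) D := by
  obtain ⟨w, y, hw, hy, hlt⟩ := h
  let excess : X → ℝ := fun x => dualRate w y (m x) (z x) D - H x
  have excess_cont : Continuous excess := by
    simp only [excess, dualRate, logMoment]
    fun_prop
  have excess_pos : 0 < excess x₀ := sub_pos.2 hlt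
  refine ⟨excess x₀ / 2, half_pos excess_pos, ?_⟩
  filter_upwards [excess_cont.continuousAt.eventually_const_lt (half_lt_self excess_pos)] with x hx
  exact ⟨w, y, hw, hy, lt_sub_iff_add_lt'.1 hx⟩

lemma exists_forall_rateExceeds_add {X : Type*} [TopologicalSpace X] {K : Set X} (hK : IsCompact K)
    {H m z : X → ℝ} {D : ℝ} (hH : Continuous H) (hm : Continuous m) (hz : Continuous z)
    (h : ∀ x ∈ K, RateExceeds (H x) (m x) (z x) D) :
    ∃ c > 0, ∀ x ∈ K, RateExceeds (H x + c) (m x) (z x) D := by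
  refine hK.induction_on (p := fun s => ∃ c > 0, ∀ x ∈ s, RateExceeds (H x + c) (m x) (z x) D)
    ⟨1, one_pos, by simp⟩ ?_ ?_ ?_
  · rintro s t hst ⟨c, hc, ht⟩
    exact ⟨c, hc, fun x hx => ht x (hst hx)⟩
  · rintro s t ⟨c, hc, hs⟩ ⟨c', hc', ht⟩
    refine ⟨min c c', lt_min hc hc', ?_⟩
    rintro x (hx | hx)
    · exact (hs x hx).mono (by gcongr; exact min_le_left _ _) le_rfl
    · exact (ht x hx).mono (by gcongr; exact min_le_right _ _) le_rfl
  · intro x hx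
    obtain ⟨c, hc, hev⟩ := (h x hx).exists_eventually hH hm hz
    exact ⟨_, mem_nhdsWithin_of_mem_nhds hev, c, hc, fun _ h => h⟩

/-- Uniform gap in the rate inequality for sets that meet two classes of relative sizes `α` and
`1 - α` in the proportions `p` and `q`, have relative size at least `ε` and at most `1 - ε`, and
span `a` edges per vertex plus `b` edges per vertex of the first class. -/
def RateGap (α a b D ε c : ℝ) : Prop :=
  ∀ p ∈ Set.Icc (0 : ℝ) 1, ∀ q ∈ Set.Icc (0 : ℝ) 1, α * p + (1 - α) * q ∈ Set.Icc ε (1 - ε) →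
    RateExceeds (α * binEntropy p + (1 - α) * binEntropy q + c)
      (a * (α * p + (1 - α) * q) + b * (α * p)) (α * p + (1 - α) * q) D

lemma exists_rateGap {α a b D ε : ℝ}
    (h : ∀ p ∈ Set.Icc (0 : ℝ) 1, ∀ q ∈ Set.Icc (0 : ℝ) 1,
      α * p + (1 - α) * q ∈ Set.Icc ε (1 - ε) →
      RateExceeds (α * binEntropy p + (1 - α) * binEntropy q)
        (a * (α * p + (1 - α) * q) + b * (α * p)) (α * p + (1 - α) * q) D) :
    ∃ c > 0, RateGap α a b D ε c := by
  let z : ℝ × ℝ → ℝ := fun x => α * x.1 + (1 - α) * x.2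
  have z_cont : Continuous z := by fun_prop
  have hK : IsCompact ((Set.Icc 0 1 ×ˢ Set.Icc 0 1) ∩ z ⁻¹' Set.Icc ε (1 - ε)) :=
    (isCompact_Icc.prod isCompact_Icc).inter_right (isClosed_Icc.preimage z_cont)
  obtain ⟨c, hc, hgap⟩ := exists_forall_rateExceeds_add hK
    (H := fun x => α * binEntropy x.1 + (1 - α) * binEntropy x.2)
    (m := fun x => a * z x + b * (α * x.1)) (by fun_prop) (by fun_prop) z_cont
    fun x hx => h x.1 hx.1.1 x.2 hx.1.2 hx.2
  exact ⟨c, hc, fun p hp q hq hz => hgap (p, q) ⟨⟨hp, hq⟩, hz⟩⟩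

end Compactness

section MediumSets

lemma sum_powerset_exp_neg_mul_binEntropy_le {V : Type*} (A : Finset V) :
    ∑ X ∈ A.powerset, exp (-(A.card * binEntropy (X.card / A.card))) ≤ A.card + 1 := by
  rw [Finset.sum_powerset_apply_card (fun n => exp (-(A.card * binEntropy ((n : ℝ) / A.card))))]
  refine (Finset.sum_le_card_nsmul _ _ 1 fun n hn => ?_).trans (by simp)
  have hn : n ≤ A.card := Nat.lt_succ_iff.1 (Finset.mem_range.1 hn)
  have hn' : (n : ℝ) ≤ A.card := by exact_mod_cast hn
  rw [nsmul_eq_mul]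
  refine choose_mul_exp_le_one (by positivity) (div_le_one_of_le₀ hn' (Nat.cast_nonneg _)) ?_
  rw [mul_div_cancel_of_imp']
  exact fun h => le_antisymm (hn'.trans_eq h) (Nat.cast_nonneg _)

lemma card_inter_div_card_mem_Icc {V : Type*} [DecidableEq V] (S B : Finset V) :
    ((S ∩ B).card / B.card : ℝ) ∈ Set.Icc (0 : ℝ) 1 :=
  ⟨by positivity, div_le_one_of_le₀
    (Nat.cast_le.2 (Finset.card_le_card Finset.inter_subset_right)) (Nat.cast_nonneg _)⟩

lemma card_inter_eq_mul_div {V : Type*} [DecidableEq V] {S B : Finset V} {N β : ℝ}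
    (hB : (B.card : ℝ) = β * N) :
    ((S ∩ B).card : ℝ) = β * ((S ∩ B).card / B.card : ℝ) * N := by
  rw [mul_right_comm, ← hB, mul_div_cancel_of_imp']
  intro h
  rw [Finset.card_eq_zero.1 (Nat.cast_eq_zero.1 h), Finset.inter_empty, Finset.card_empty,
    Nat.cast_zero]

variable {V : Type*} [Fintype V] [DecidableEq V]

lemma sum_inter_mul_inter_compl {R : Type*} [CommSemiring R] (A : Finset V)
    (f g : Finset V → R) :
    ∑ S, f (S ∩ A) * g (S ∩ Aᶜ) = (∑ X ∈ A.powerset, f X) * ∑ Y ∈ Aᶜ.powerset, g Y := by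
  rw [Finset.sum_mul_sum, ← Finset.sum_product']
  refine Finset.sum_nbij' (fun S => (S ∩ A, S ∩ Aᶜ)) (fun X => X.1 ∪ X.2) ?_ ?_ ?_ ?_ ?_
  · simp [Finset.inter_subset_right]
  · simp
  · intro S _
    rw [← Finset.inter_union_distrib_left, Finset.union_compl, Finset.inter_univ]
  · rintro ⟨X, Y⟩ h
    simp only [Finset.mem_product, Finset.mem_powerset] at h
    have hX : X ∩ Aᶜ = ∅ :=
      Finset.disjoint_iff_inter_eq_empty.1 (disjoint_compl_right.mono_left h.1)
    have hY : Y ∩ A = ∅ :=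
      Finset.disjoint_iff_inter_eq_empty.1 (disjoint_compl_left.mono_left h.2)
    simp only [Finset.union_inter_distrib_right, Finset.inter_eq_left.2 h.1,
      Finset.inter_eq_left.2 h.2, hX, hY, Finset.union_empty, Finset.empty_union]
  · simp

/-- The logarithm, to leading order, of the number of sets that have as many vertices in `A`, and
as many outside `A`, as `S`. -/
noncomputable def splitEntropy (A S : Finset V) : ℝ :=
  A.card * binEntropy ((S ∩ A).card / A.card) + Aᶜ.card * binEntropy ((S ∩ Aᶜ).card / Aᶜ.card)

lemma sum_exp_neg_splitEntropy_le (A : Finset V) :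
    ∑ S, exp (-splitEntropy A S) ≤ (Fintype.card V + 1) ^ 2 := by
  have card_le (B : Finset V) : (B.card : ℝ) ≤ Fintype.card V := by
    exact_mod_cast B.card_le_univ
  simp only [splitEntropy, neg_add, exp_add]
  rw [sum_inter_mul_inter_compl A (fun X => exp (-(A.card * binEntropy (X.card / A.card))))
    fun Y => exp (-(Aᶜ.card * binEntropy (Y.card / Aᶜ.card))), sq]
  gcongr
  · exact (sum_powerset_exp_neg_mul_binEntropy_le A).trans (add_le_add_left (card_le _) 1)
  · exact (sum_powerset_exp_neg_mul_binEntropy_le Aᶜ).trans (add_le_add_left (card_le _) 1)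

variable {ι : Type*} [Fintype ι] [DecidableEq ι] {d : ℕ}

lemma card_innerCount_ge_le_exp_splitEntropy [Nonempty V] {α ε c : ℝ} {a b : ℕ} (hα : 0 ≤ α)
    (hα1 : α ≤ 1) (hgap : RateGap α a b (d / 2) ε c) {A : Finset V}
    (hA : (A.card : ℝ) = α * Fintype.card V) (hc : 2 * Fintype.card ι = Fintype.card V * d)
    {S : Finset V} (hS : ε * Fintype.card V ≤ S.card)
    (hS1 : (S.card : ℝ) ≤ (1 - ε) * Fintype.card V) :
    (((configs ι V d).filter fun g =>
      a * S.card + b * (S ∩ A).card ≤ innerCount g S).card : ℝ) ≤ (configs ι V d).card *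
        ((Fintype.card V * d + 1) * exp (-(splitEntropy A S + Fintype.card V * c))) := by
  have hN : (0 : ℝ) < Fintype.card V := by exact_mod_cast Fintype.card_pos
  have hAc : (Aᶜ.card : ℝ) = (1 - α) * Fintype.card V := by
    rw [Finset.card_compl, Nat.cast_sub A.card_le_univ, hA]; ring
  have half_degree : (Fintype.card ι : ℝ) = Fintype.card V * (d / 2) := by
    have : (2 * Fintype.card ι : ℝ) = Fintype.card V * d := by exact_mod_cast hc
    linarith
  have card_inter := card_inter_eq_mul_div (S := S) hA
  have card_inter_compl := card_inter_eq_mul_div (S := S) hAc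
  have hp := card_inter_div_card_mem_Icc S A
  have hq := card_inter_div_card_mem_Icc S Aᶜ
  set p : ℝ := (S ∩ A).card / A.card with p_eq
  set q : ℝ := (S ∩ Aᶜ).card / Aᶜ.card with q_eq
  have hz := convex_Icc 0 1 hp hq hα (sub_nonneg.2 hα1) (add_sub_cancel α 1)
  have card_eq : (S.card : ℝ) = (α * p + (1 - α) * q) * Fintype.card V := by
    rw [add_mul, ← card_inter, ← card_inter_compl, ← Finset.sdiff_eq_inter_compl]
    exact_mod_cast (Finset.card_inter_add_card_sdiff S A).symm
  rw [card_eq, mul_le_mul_iff_left₀ hN] at hS hS1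
  obtain ⟨w, x, hw, hx, hlt⟩ := hgap p hp q hq ⟨hS, hS1⟩
  refine (card_innerCount_ge_le_exp hw hx hz.1 hz.2 hc S (card_eq.trans (mul_comm _ _)) _).trans ?_
  refine mul_le_mul_of_nonneg_left (mul_le_mul_of_nonneg_left (exp_le_exp.2 (neg_le_neg ?_))
    (by positivity)) (Nat.cast_nonneg _)
  calc splitEntropy A S + Fintype.card V * c
      = Fintype.card V * (α * binEntropy p + (1 - α) * binEntropy q + c) := by
        rw [splitEntropy, ← p_eq, ← q_eq, hA, hAc]; ring
    _ ≤ Fintype.card V * dualRate w x (a * (α * p + (1 - α) * q) + b * (α * p))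
          (α * p + (1 - α) * q) (d / 2) := by gcongr
    _ = _ := by
        rw [← dualRate_mul, half_degree]
        push_cast
        rw [card_eq, card_inter]
        congr 1; ring

/-- Some set `S` of at least `ε * |V|` and at most `(1 - ε) * |V|` vertices induces at least `a`
edges per vertex and `b` further edges per vertex of `S ∩ A`. -/
def HasMediumDenseSet (ε : ℝ) (a b : ℕ) (A : Finset V) (g : ι × Bool → V) : Prop :=
  ∃ S : Finset V, (ε * Fintype.card V ≤ S.card ∧ (S.card : ℝ) ≤ (1 - ε) * Fintype.card V) ∧
    a * S.card + b * (S ∩ A).card ≤ innerCount g S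

open Classical in
lemma card_hasMediumDenseSet_le [Nonempty V] {α ε c : ℝ} {a b : ℕ} (hα : 0 ≤ α)
    (hα1 : α ≤ 1) (hgap : RateGap α a b (d / 2) ε c) {A : Finset V}
    (hA : (A.card : ℝ) = α * Fintype.card V)
    (hc : 2 * Fintype.card ι = Fintype.card V * d) :
    (((configs ι V d).filter (HasMediumDenseSet ε a b A)).card : ℝ) ≤ (configs ι V d).card *
      ((Fintype.card V * d + 1) * (Fintype.card V + 1) ^ 2 * exp (-(Fintype.card V * c))) := by
  let bound : Finset V → ℝ := fun S => (configs ι V d).card *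
    ((Fintype.card V * d + 1) * exp (-(splitEntropy A S + Fintype.card V * c)))
  calc (((configs ι V d).filter (HasMediumDenseSet ε a b A)).card : ℝ)
      ≤ ∑ S with ε * Fintype.card V ≤ (S : Finset V).card ∧
            (S.card : ℝ) ≤ (1 - ε) * Fintype.card V,
          (((configs ι V d).filter fun g =>
            a * S.card + b * (S ∩ A).card ≤ innerCount g S).card : ℝ) := by
        unfold HasMediumDenseSet
        convert card_filter_exists_le_sum (configs ι V d)
          (fun S : Finset V =>
            ε * Fintype.card V ≤ S.card ∧ (S.card : ℝ) ≤ (1 - ε) * Fintype.card V)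
          fun S g => a * S.card + b * (S ∩ A).card ≤ innerCount g S
    _ ≤ ∑ S, bound S :=
        (Finset.sum_le_sum fun S hS => card_innerCount_ge_le_exp_splitEntropy hα hα1 hgap hA hc
          (Finset.mem_filter.1 hS).2.1 (Finset.mem_filter.1 hS).2.2).trans
          (Finset.sum_le_sum_of_subset_of_nonneg (Finset.filter_subset _ _) fun S _ _ => by
            positivity)
    _ = (configs ι V d).card * ((Fintype.card V * d + 1) * (∑ S, exp (-splitEntropy A S)) *
          exp (-(Fintype.card V * c))) := by
        simp only [bound, neg_add, exp_add]
        rw [← Finset.mul_sum, ← Finset.mul_sum, ← Finset.sum_mul, mul_assoc]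
    _ ≤ _ := by
        gcongr
        exact sum_exp_neg_splitEntropy_le A

end MediumSets

section HallViolations

variable {ι V : Type*} [Fintype ι] [DecidableEq V] {g : ι × Bool → V}

lemma card_halfEdgesIn_eq_sum (S : Finset V) (g : ι × Bool → V) :
    (halfEdgesIn S g).card =
      ∑ i, ((if g (i, false) ∈ S then 1 else 0) + if g (i, true) ∈ S then 1 else 0) := by
  rw [halfEdgesIn, Finset.card_filter, Fintype.sum_prod_type]
  exact Finset.sum_congr rfl fun i _ => by rw [Fintype.sum_bool, add_comm]

variable [Fintype V] {d k s : ℕ}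

lemma two_mul_innerCount_le [DecidableEq ι] (hg : g ∈ configs ι V d) (S : Finset V) :
    2 * innerCount g S ≤ d * S.card := by
  rw [← card_halfEdgesIn hg, card_halfEdgesIn_eq_sum, innerCount, Finset.card_filter,
    Finset.mul_sum]
  exact Finset.sum_le_sum fun i _ => by split_ifs <;> simp_all

lemma innerCount_add_mul_card_compl [DecidableEq ι] (hg : g ∈ configs ι V d) (S : Finset V) :
    innerCount g S + d * Sᶜ.card = Fintype.card ι + innerCount g Sᶜ := by
  rw [← card_halfEdgesIn hg, card_halfEdgesIn_eq_sum, innerCount, innerCount, Finset.card_filter,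
    Finset.card_filter, ← Finset.card_univ, Finset.card_eq_sum_ones, ← Finset.sum_add_distrib,
    ← Finset.sum_add_distrib]
  refine Finset.sum_congr rfl fun i _ => ?_
  simp only [Finset.mem_compl]
  split_ifs <;> simp_all

lemma sum_mul_ite_mem {V : Type*} [DecidableEq V] (k s : ℕ) (A T : Finset V) :
    ∑ v ∈ T, k * (if v ∈ A then s + 1 else s) = k * s * T.card + k * (T ∩ A).card := by
  have ite_eq (v : V) : (if v ∈ A then s + 1 else s) = s + if v ∈ A then 1 else 0 := by
    split_ifs <;> rfl
  simp only [ite_eq, ← Finset.mul_sum, Finset.sum_add_distrib, Finset.sum_const, smul_eq_mul,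
    Finset.sum_ite_mem, mul_one]
  ring

lemma Represents.exists_lt_innerCount {G : SimpleGraph V} (h : Represents g G) (hk : 0 < k)
    {m : V → ℕ} (hm : Fintype.card ι = ∑ v, k * m v) (hD : ¬ HasStarDecomp G k m) :
    ∃ T : Finset V, ∑ v ∈ T, k * m v < innerCount g T := by
  classical
  by_contra! hle
  refine hD (HasStarDecomp.of_card_le hk ?_ fun T => (h.innerCount_eq T).symm.trans_le (hle T))
  simpa [innerCount, ← hm] using (h.innerCount_eq Finset.univ).symm

lemma IsRegularGraph.hasStarDecomp {V : Type*} [Finite V] [DecidableEq V] {G : SimpleGraph V}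
    (hG : IsRegularGraph G (2 * (k * s))) (hk : 0 < k) : HasStarDecomp G k fun _ => s := by
  classical
  cases nonempty_fintype V
  by_contra hD
  let g : G.edgeSet × Bool → V := configOf (Equiv.refl G.edgeSet) fun _ => true
  have hg : Represents g G := represents_configOf _ _
  have card_edges : Fintype.card G.edgeSet = ∑ _ : V, k * s := by
    have := hG.natCard_edgeSet
    rw [Finset.sum_const, smul_eq_mul, Finset.card_univ, ← Nat.card_eq_fintype_card]
    linarith
  obtain ⟨T, hT⟩ := hg.exists_lt_innerCount hk card_edges hD
  have := two_mul_innerCount_le (hg.mem_configs_iff.2 hG) T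
  rw [Finset.sum_const, smul_eq_mul] at hT
  linarith

lemma HasSmallDenseSet.of_lt {ε : ℝ} {S : Finset V} (hS : (S.card : ℝ) ≤ ε * Fintype.card V)
    (hlt : 2 * S.card < innerCount g S) : HasSmallDenseSet ε g := by
  refine ⟨S, ⟨Finset.nonempty_iff_ne_empty.2 ?_, hS⟩, hlt⟩
  rintro rfl
  simp [innerCount] at hlt

-- A violation at a large set `T` makes `Tᶜ` a small dense set: `Tᶜ` then spans more than
-- `(d - k * s - k) * #Tᶜ ≥ 2 * #Tᶜ` edges.
lemma hasSmallDenseSet_or_hasMediumDenseSet [DecidableEq ι] (hg : g ∈ configs ι V d)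
    (hks : 2 ≤ k * s) (hd : k * s + k + 2 ≤ d) {A T : Finset V}
    (hA : k * s * Fintype.card V + k * A.card = Fintype.card ι)
    (hT : k * s * T.card + k * (T ∩ A).card < innerCount g T) (ε : ℝ) :
    HasSmallDenseSet ε g ∨ HasMediumDenseSet ε (k * s) k A g := by
  rcases le_total (T.card : ℝ) (ε * Fintype.card V) with hsmall | hsmall
  · exact Or.inl (.of_lt hsmall (by nlinarith))
  rcases le_total (T.card : ℝ) ((1 - ε) * Fintype.card V) with hlarge | hlarge
  · exact Or.inr ⟨T, ⟨hsmall, hlarge⟩, hT.le⟩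
  have card_V : T.card + Tᶜ.card = Fintype.card V := Finset.card_add_card_compl T
  have card_A : (T ∩ A).card + (Tᶜ ∩ A).card = A.card := by
    rw [Finset.inter_comm T, Finset.inter_comm Tᶜ, ← Finset.sdiff_eq_inter_compl,
      Finset.card_inter_add_card_sdiff]
  refine Or.inl (.of_lt (S := Tᶜ) ?_ ?_)
  · have : (T.card : ℝ) + Tᶜ.card = Fintype.card V := by exact_mod_cast card_V
    linarith
  · have := innerCount_add_mul_card_compl hg T
    have : (Tᶜ ∩ A).card ≤ Tᶜ.card := Finset.card_le_card Finset.inter_subset_left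
    rw [← card_V, ← card_A] at hA
    nlinarith

end HallViolations

section Counting

lemma natCard_subtype_eq_add {α : Type*} [Finite α] (P Q : α → Prop) :
    Nat.card {x // P x} = Nat.card {x // P x ∧ Q x} + Nat.card {x // P x ∧ ¬ Q x} :=
  (Set.ncard_inter_add_ncard_sdiff_eq_ncard {x | P x} {x | Q x}).symm

/-- The bound on the proportion of `d`-regular graphs on `N` vertices without a decomposition that
results from the union bounds over small and over medium sets. -/
noncomputable def failureBound (d : ℕ) (c : ℝ) (N : ℕ) : ℝ :=
  switchingConstant d * (d ^ 4 * exp 3 / N + (N * d + 1) * (N + 1) ^ 2 * exp (-(N * c)))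

lemma tendsto_failureBound (d : ℕ) {c : ℝ} (hc : 0 < c) :
    Filter.Tendsto (failureBound d c) Filter.atTop (nhds 0) := by
  have hpow : ∀ n : ℕ, Filter.Tendsto (fun N : ℕ => (N : ℝ) ^ n * exp (-(N * c)))
      Filter.atTop (nhds 0) := fun n => by
    have := ((isLittleO_pow_exp_pos_mul_atTop (k := n) hc).tendsto_div_nhds_zero).comp
      (tendsto_natCast_atTop_atTop (R := ℝ))
    refine this.congr fun N => ?_
    simp [exp_neg, div_eq_mul_inv, mul_comm]
  have h := ((tendsto_const_div_atTop_nhds_zero_nat (d ^ 4 * exp 3)).add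
    ((((hpow 3).const_mul (d : ℝ)).add ((hpow 2).const_mul (2 * d + 1 : ℝ))).add
      (((hpow 1).const_mul (d + 2 : ℝ)).add (hpow 0)))).const_mul (switchingConstant d : ℝ)
  simp only [mul_zero, add_zero] at h
  refine h.congr fun N => ?_
  unfold failureBound
  ring

variable {ι V : Type*} [Fintype ι] [Fintype V] [DecidableEq V] {d k s : ℕ}

lemma natCard_regular_le_of_card_configs_le [DecidableEq ι] {P : SimpleGraph V → Prop}
    {Q : (ι × Bool → V) → Prop} [DecidablePred Q] (hc : 2 * Fintype.card ι = Fintype.card V * d)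
    (hι : 4 * (d * (d + 1)) < Fintype.card ι)
    (hPQ : ∀ g G, IsRegularGraph G d → P G → Represents g G → Q g) {η : ℝ} (hη : 0 ≤ η)
    (hQ : (((configs ι V d).filter Q).card : ℝ) ≤ (configs ι V d).card * η) :
    (Nat.card {G : SimpleGraph V // IsRegularGraph G d ∧ P G} : ℝ) ≤
      switchingConstant d * η * Nat.card {G : SimpleGraph V // IsRegularGraph G d} := by
  classical
  have card_edges (G : SimpleGraph V) (hG : IsRegularGraph G d ∧ P G) :
      Nat.card G.edgeSet = Fintype.card ι := by
    have := hG.1.natCard_edgeSet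
    omega
  have graphs_le := mul_natCard_le_card (S := (configs ι V d).filter Q) card_edges fun g G hG hg =>
    Finset.mem_filter.2 ⟨hg.mem_configs_iff.2 hG.1, hPQ g G hG.1 hG.2 hg⟩
  have configs_le := (card_configs_le_mul_card_simple (V := V) (d := d) hι).trans
    (Nat.mul_le_mul_left _ (card_simple_le_mul_natCard_regular hc))
  set K := (Fintype.card ι).factorial * 2 ^ Fintype.card ι
  have hK : (0 : ℝ) < K := Nat.cast_pos.2 (by positivity)
  refine le_of_mul_le_mul_left ?_ hK
  calc (K : ℝ) * Nat.card {G : SimpleGraph V // IsRegularGraph G d ∧ P G}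
      ≤ (configs ι V d).card * η := le_trans (by exact_mod_cast graphs_le) hQ
    _ ≤ switchingConstant d * (K * Nat.card {G : SimpleGraph V // IsRegularGraph G d}) * η := by
        gcongr
        exact_mod_cast configs_le
    _ = _ := by ring

lemma natCard_not_hasStarDecomp_le [Nonempty V] {α ε c : ℝ} (hα : 0 ≤ α) (hα1 : α ≤ 1)
    (hk : 0 < k) (hks : 2 ≤ k * s) (hd : k * s + k + 2 ≤ d)
    (hgap : RateGap α (k * s : ℕ) k (d / 2) ε c)
    (hε : (d : ℝ) ^ 2 * exp 3 * ε ≤ 1) (hε1 : ε < 1) {A : Finset V}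
    (hA : (A.card : ℝ) = α * Fintype.card V)
    (hE : k * s * Fintype.card V + k * A.card = Fintype.card ι)
    (hc : 2 * Fintype.card ι = Fintype.card V * d) (hι : 4 * (d * (d + 1)) < Fintype.card ι) :
    (Nat.card {G : SimpleGraph V // IsRegularGraph G d ∧
      ¬ HasStarDecomp G k fun v => if v ∈ A then s + 1 else s} : ℝ) ≤
      failureBound d c (Fintype.card V) *
        Nat.card {G : SimpleGraph V // IsRegularGraph G d} := by
  classical
  have sum_stars := sum_mul_ite_mem k s A
  refine natCard_regular_le_of_card_configs_le hc hι
    (Q := fun g => HasSmallDenseSet ε g ∨ HasMediumDenseSet ε (k * s) k A g) ?_ (by positivity) ?_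
  · intro g G hG hD hg
    obtain ⟨T, hT⟩ := hg.exists_lt_innerCount hk
      (by rw [sum_stars, Finset.univ_inter, Finset.card_univ, hE]) hD
    rw [sum_stars] at hT
    exact hasSmallDenseSet_or_hasMediumDenseSet (hg.mem_configs_iff.2 hG) hks hd hE hT ε
  · rw [mul_add]
    refine le_trans ?_ (add_le_add (card_hasSmallDenseSet_le hε hε1 hc (by omega))
      (card_hasMediumDenseSet_le hα hα1 hgap hA hc))
    rw [Finset.filter_or]
    exact_mod_cast Finset.card_union_le _ _

end Counting

section Main

lemma exists_rateGap_of_remainder {k s r : ℕ} (hk : 2 ≤ k) (hs : 1 ≤ s) (hr : 0 < r)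
    (hrk : r < 2 * k) (hd : 2 * k + 2 < 2 * k * s + r) {ε : ℝ} (hε : 0 < ε) :
    ∃ c > 0, RateGap (r / (2 * k)) (k * s : ℕ) k ((2 * k * s + r : ℕ) / 2) ε c := by
  refine exists_rateGap fun p hp q hq hz => ?_
  have := rateExceeds_of_remainder hk hs hr hrk hd rfl hp.1 hp.2 hq.1 hq.2 rfl
    (hε.trans_le hz.1) (by linarith [hz.2])
  convert this using 1 <;> push_cast <;> ring

lemma natCard_not_hasStarDecomp_eq_zero {V : Type*} [Finite V] [DecidableEq V] {k : ℕ} (hk : 0 < k)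
    (s : ℕ) :
    Nat.card {G : SimpleGraph V // IsRegularGraph G (2 * (k * s)) ∧
      ¬ HasStarDecomp G k fun _ => s} = 0 :=
  have : IsEmpty {G : SimpleGraph V // IsRegularGraph G (2 * (k * s)) ∧
      ¬ HasStarDecomp G k fun _ => s} := ⟨fun G => G.2.2 (G.2.1.hasStarDecomp hk)⟩
  Nat.card_of_isEmpty

lemma eventually_natCard_not_hasStarDecomp_le_of_pos {k s r : ℕ} (hk : 2 ≤ k) (hs : 1 ≤ s)
    (hr : 0 < r) (hrk : r < 2 * k) (hd : 2 * k + 2 < 2 * k * s + r) {δ : ℝ} (hδ : 0 < δ) :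
    ∀ᶠ N in Filter.atTop, ∀ A : Finset (Fin N), 2 * k * A.card = r * N →
      (Nat.card {G : SimpleGraph (Fin N) // IsRegularGraph G (2 * k * s + r) ∧
        ¬ HasStarDecomp G k fun v => if v ∈ A then s + 1 else s} : ℝ) ≤
        δ * Nat.card {G : SimpleGraph (Fin N) // IsRegularGraph G (2 * k * s + r)} := by
  have hks : 2 ≤ k * s := by nlinarith
  have hds : k * s + k + 2 ≤ 2 * k * s + r := by
    rcases hs.eq_or_lt with rfl | _
    · omega
    · nlinarith
  set d := 2 * k * s + r with d_eq
  have hd1 : (1 : ℝ) ≤ d := by exact_mod_cast (by omega : 1 ≤ d)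
  have hD : 1 < (d : ℝ) ^ 2 * exp 3 := by
    nlinarith [one_lt_exp_iff.2 (by norm_num : (0 : ℝ) < 3), one_le_pow₀ hd1 (n := 2)]
  obtain ⟨c, hc, hgap⟩ := exists_rateGap_of_remainder hk hs hr hrk hd
    (ε := 1 / ((d : ℝ) ^ 2 * exp 3)) (by positivity)
  filter_upwards [(tendsto_failureBound d hc).eventually_le_const hδ,
    Filter.eventually_gt_atTop (8 * (d + 1))] with N hbound hN A hA
  have : Nonempty (Fin N) := ⟨⟨0, by omega⟩⟩
  have hc : 2 * (k * s * N + k * A.card) = N * d := by rw [d_eq]; linarith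
  have hle := natCard_not_hasStarDecomp_le (V := Fin N) (ι := Fin (k * s * N + k * A.card)) (A := A)
    (by positivity) (div_le_one_of_le₀ (by exact_mod_cast hrk.le) (by positivity)) (by omega) hks
    hds hgap (mul_one_div_cancel (by positivity)).le ((div_lt_one (by positivity)).2 hD)
    (by
      rw [Fintype.card_fin, div_mul_eq_mul_div, eq_div_iff (by positivity)]
      exact_mod_cast (mul_comm _ _).trans hA)
    (by simp) (by simpa using hc) (by rw [Fintype.card_fin]; nlinarith)
  rw [Fintype.card_fin] at hle
  exact hle.trans (by gcongr)

lemma eventually_natCard_not_hasStarDecomp_le {k s r : ℕ} (hk : 2 ≤ k) (hrk : r < 2 * k)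
    (hd : 2 * k + 2 < 2 * k * s + r) {δ : ℝ} (hδ : 0 < δ) :
    ∀ᶠ N in Filter.atTop, ∀ A : Finset (Fin N), 2 * k * A.card = r * N →
      (Nat.card {G : SimpleGraph (Fin N) // IsRegularGraph G (2 * k * s + r) ∧
        ¬ HasStarDecomp G k fun v => if v ∈ A then s + 1 else s} : ℝ) ≤
        δ * Nat.card {G : SimpleGraph (Fin N) // IsRegularGraph G (2 * k * s + r)} := by
  have hk0 : k ≠ 0 := by omega
  rcases Nat.eq_zero_or_pos r with rfl | hr
  · refine Filter.Eventually.of_forall fun N A hA => ?_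
    obtain rfl : A = ∅ := by simpa [hk0] using hA
    have := natCard_not_hasStarDecomp_eq_zero (V := Fin N) (Nat.pos_of_ne_zero hk0) s
    simp only [Finset.notMem_empty, if_false, add_zero, mul_assoc, this, Nat.cast_zero]
    positivity
  · have hs : s ≠ 0 := by
      rintro rfl
      omega
    exact eventually_natCard_not_hasStarDecomp_le_of_pos hk (Nat.one_le_iff_ne_zero.2 hs) hr hrk hd
      hδ

end Main

theorem stmt_0 (d k : ℕ) (hk : 2 ≤ k) (hd : 2 * k + 2 < d) (δ : ℝ) (hδ : 0 < δ) :
    ∃ N₀ : ℕ, ∀ N : ℕ, N₀ ≤ N → 2 * k ∣ N * d →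
      ∀ A : Finset (Fin N),
        (A.card : ℝ) = ((d : ℝ) / (2 * k) - (d / (2 * k) : ℕ)) * N →
        (1 - δ) * (Nat.card {G : SimpleGraph (Fin N) // IsRegularGraph G d} : ℝ) ≤
          (Nat.card {G : SimpleGraph (Fin N) // IsRegularGraph G d ∧
            HasStarDecomp G k
              (fun v => if v ∈ A then d / (2 * k) + 1 else d / (2 * k))} : ℝ) := by
  have div_add_mod : 2 * k * (d / (2 * k)) + d % (2 * k) = d := Nat.div_add_mod d (2 * k)
  have few_failures := eventually_natCard_not_hasStarDecomp_le (s := d / (2 * k)) hk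
    (Nat.mod_lt d (by omega)) (by rwa [div_add_mod]) hδ
  rw [div_add_mod, Filter.eventually_atTop] at few_failures
  obtain ⟨N₀, hN₀⟩ := few_failures
  refine ⟨N₀, fun N hN _ A hA => ?_⟩
  have card_A : 2 * k * A.card = d % (2 * k) * N := by
    have hd' : (2 * k * (d / (2 * k) : ℕ) + (d % (2 * k) : ℕ) : ℝ) = d := by
      exact_mod_cast div_add_mod
    have hk0 : (k : ℝ) ≠ 0 := by
      exact_mod_cast (by omega : k ≠ 0)
    field_simp at hA
    have : (2 * k * A.card : ℝ) = (d % (2 * k) : ℕ) * N := by linear_combination hA - N * hd'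
    exact_mod_cast this
  have total := natCard_subtype_eq_add (fun G : SimpleGraph (Fin N) => IsRegularGraph G d) fun G =>
    HasStarDecomp G k fun v => if v ∈ A then d / (2 * k) + 1 else d / (2 * k)
  have total_real := congrArg (Nat.cast (R := ℝ)) total
  push_cast at total_real
  linarith [hN₀ N hN A card_A]
end

section
/- Let d and k be positive integers with 2k ∣ d. Then every finite d-regular simple graph G admits a k-star decomposition in which exactly d/(2k) stars are centered at each vertex of G. -/
/-!
By Hall's theorem with capacities, a graph with all degrees even has an orientation in which every
vertex `v` has outdegree `deg v / 2`: a set `F` of edges has `2 * #F` incidences with its endpoints,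
so `#F` is at most the total capacity of these endpoints. If `2 * k` divides every degree, then `k`
divides every outdegree, and cutting the edges leaving each vertex into blocks of size `k` gives
the stars.
-/

open Finset

section Hall

variable {ι α : Type*} [Fintype ι] [DecidableEq α]

theorem exists_card_fiber_le_of_card_le_sum_biUnion (r : ι → Finset α) (c : α → ℕ)
    (h : ∀ s : Finset ι, #s ≤ ∑ a ∈ s.biUnion r, c a) :
    ∃ f : ι → α, (∀ i, f i ∈ r i) ∧ ∀ a, #{i | f i = a} ≤ c a := by
  let copies (i : ι) : Finset (Σ a, Fin (c a)) := (r i).sigma fun _ => univ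
  have card_le_copies (s : Finset ι) : #s ≤ #(s.biUnion copies) := by
    have : s.biUnion copies = (s.biUnion r).sigma fun _ => univ := by
      ext
      simp [copies]
    simpa [this] using h s
  obtain ⟨g, hg_inj, hg_mem⟩ :=
    (all_card_le_biUnion_card_iff_exists_injective copies).1 card_le_copies
  refine ⟨fun i => (g i).1, fun i => (mem_sigma.1 (hg_mem i)).1, fun a => ?_⟩
  calc #{i | (g i).1 = a}
      ≤ #(({a} : Finset α).sigma fun a => (univ : Finset (Fin (c a)))) :=
        card_le_card_of_injOn g (fun i hi => by simpa using hi) hg_inj.injOn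
    _ = c a := by simp

theorem exists_card_fiber_eq_of_card_le_sum_biUnion [Fintype α] (r : ι → Finset α) (c : α → ℕ)
    (h : ∀ s : Finset ι, #s ≤ ∑ a ∈ s.biUnion r, c a) (hsum : ∑ a, c a = Fintype.card ι) :
    ∃ f : ι → α, (∀ i, f i ∈ r i) ∧ ∀ a, #{i | f i = a} = c a := by
  obtain ⟨f, hf_mem, hf_le⟩ := exists_card_fiber_le_of_card_le_sum_biUnion r c h
  have sum_fiber : ∑ a, #{i | f i = a} = ∑ a, c a := by
    rw [hsum, ← card_univ, card_eq_sum_card_fiberwise fun i _ => mem_univ (f i)]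
  exact ⟨f, hf_mem, fun a =>
    (sum_eq_sum_iff_of_le fun a _ => hf_le a).1 sum_fiber a (mem_univ a)⟩

end Hall

theorem exists_finpartition_forall_card_eq {α : Type*} [DecidableEq α] {s : Finset α} {n k : ℕ}
    (hk : k ≠ 0) (hs : #s = n * k) :
    ∃ P : Finpartition s, #P.parts = n ∧ ∀ t ∈ P.parts, #t = k := by
  have hcard : n * k + 0 * (k + 1) = #s := by simp [hs]
  let P := (⊥ : Finpartition s).equitabilise hcard
  refine ⟨P, Finpartition.card_parts_equitabilise _ hcard hk, fun t ht => ?_⟩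
  have no_big : #{u ∈ P.parts | #u = k + 1} = 0 :=
    Finpartition.card_filter_equitabilise_big _ hcard
  exact (Finpartition.card_eq_of_mem_parts_equitabilise ht).resolve_right
    (filter_eq_empty_iff.1 (card_eq_zero.1 no_big) ht)

section Graph

variable {V : Type*} {G : SimpleGraph V}

theorem IsRegularGraph.degree_eq [G.LocallyFinite] {d : ℕ} (hreg : IsRegularGraph G d) (v : V) :
    G.degree v = d := by
  rw [← hreg v, ← Nat.card_coe_set_eq, Nat.card_eq_fintype_card, G.card_neighborSet_eq_degree]

/-- An orientation of `G`, given by the choice of one endpoint of each edge as its tail. -/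
structure EdgeOrientation (G : SimpleGraph V) where
  tail : G.edgeSet → V
  tail_mem : ∀ e : G.edgeSet, tail e ∈ (e : Sym2 V)

namespace EdgeOrientation

variable [DecidableEq V] [Fintype G.edgeSet]

/-- The edges of `G` leaving `v` in the orientation `o`, as unordered pairs. -/
def outEdges (o : EdgeOrientation G) (v : V) : Finset (Sym2 V) :=
  ({e | o.tail e = v} : Finset G.edgeSet).map (.subtype _)

theorem mem_outEdges {o : EdgeOrientation G} {v : V} {e : Sym2 V} :
    e ∈ o.outEdges v ↔ ∃ he : e ∈ G.edgeSet, o.tail ⟨e, he⟩ = v := by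
  simp [outEdges, and_comm]

theorem hasStarDecomp [Finite V] (o : EdgeOrientation G) {k : ℕ} (hk : k ≠ 0) {m : V → ℕ}
    (ho : ∀ v, #(o.outEdges v) = m v * k) : HasStarDecomp G k m := by
  have := Fintype.ofFinite V
  choose P hP_parts hP_card using fun v => exists_finpartition_forall_card_eq hk (ho v)
  refine ⟨({p | p.2 ∈ (P p.1).parts} : Finset (V × Finset (Sym2 V))), ?stars, ?cover, ?centers⟩
  case stars =>
    rintro ⟨v, A⟩ hA
    replace hA : A ∈ (P v).parts := by simpa using hA
    have hA_out {e : Sym2 V} (he : e ∈ A) := mem_outEdges.1 ((P v).le hA he)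
    refine ⟨hP_card v A hA, fun e he => (hA_out he).1, fun e he => ?_⟩
    obtain ⟨he_edge, rfl⟩ := hA_out he
    exact o.tail_mem ⟨e, he_edge⟩
  case cover =>
    intro e he
    obtain ⟨A, ⟨hA, heA⟩, hA_unique⟩ :=
      (P (o.tail ⟨e, he⟩)).existsUnique_mem (mem_outEdges.2 ⟨he, rfl⟩)
    refine ⟨(o.tail ⟨e, he⟩, A), ⟨by simpa using hA, heA⟩, ?_⟩
    rintro ⟨v, B⟩ ⟨hB, heB⟩
    replace hB : B ∈ (P v).parts := by simpa using hB
    obtain ⟨_, rfl⟩ := mem_outEdges.1 ((P v).le hB heB)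
    rw [hA_unique B ⟨hB, heB⟩]
  case centers =>
    intro v
    rw [← hP_parts v, ← card_map (.sectR v (Finset (Sym2 V)))]
    congr 1
    ext ⟨w, A⟩
    simp only [mem_filter, mem_univ, true_and, mem_map, Function.Embedding.sectR_apply,
      Prod.mk.injEq]
    grind

end EdgeOrientation

variable [DecidableEq V]

theorem two_mul_card_le_sum_degree_endpoints [G.LocallyFinite] (F : Finset G.edgeSet) :
    2 * #F ≤ ∑ v ∈ F.biUnion fun e => e.1.toFinset, G.degree v := by
  set U := F.biUnion fun e => e.1.toFinset
  have two_endpoints (e : G.edgeSet) (he : e ∈ F) :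
      #(U.bipartiteAbove (fun e v => v ∈ e.1) e) = 2 := by
    rw [← Sym2.card_toFinset_of_not_isDiag _ (G.not_isDiag_of_mem_edgeSet e.2)]
    congr 1
    ext v
    simp only [U, mem_bipartiteAbove, mem_biUnion, Sym2.mem_toFinset, and_iff_right_iff_imp]
    exact fun hv => ⟨e, he, hv⟩
  have card_incident_le (v : V) :
      #(F.bipartiteBelow (fun e v => v ∈ e.1) v) ≤ G.degree v := by
    rw [← G.card_incidenceFinset_eq_degree v]
    refine card_le_card_of_injOn Subtype.val (fun e he => ?_) Subtype.val_injective.injOn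
    simpa using ⟨e.2, (mem_bipartiteBelow _).1 he |>.2⟩
  calc 2 * #F = ∑ e ∈ F, #(U.bipartiteAbove (fun e v => v ∈ e.1) e) := by
        rw [sum_congr rfl two_endpoints, sum_const, smul_eq_mul, mul_comm]
    _ = ∑ v ∈ U, #(F.bipartiteBelow (fun e v => v ∈ e.1) v) :=
        sum_card_bipartiteAbove_eq_sum_card_bipartiteBelow _
    _ ≤ ∑ v ∈ U, G.degree v := sum_le_sum fun v _ => card_incident_le v

variable [Fintype V] [DecidableRel G.Adj]

theorem exists_edgeOrientation_two_mul_card_outEdges_eq_degree (hG : ∀ v, Even (G.degree v)) :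
    ∃ o : EdgeOrientation G, ∀ v, 2 * #(o.outEdges v) = G.degree v := by
  have two_mul_half (v : V) : 2 * (G.degree v / 2) = G.degree v :=
    Nat.two_mul_div_two_of_even (hG v)
  have hall (F : Finset G.edgeSet) :
      #F ≤ ∑ v ∈ F.biUnion fun e => e.1.toFinset, G.degree v / 2 := by
    refine Nat.le_of_mul_le_mul_left ?_ two_pos
    simpa only [mul_sum, two_mul_half] using two_mul_card_le_sum_degree_endpoints F
  have sum_half : ∑ v, G.degree v / 2 = Fintype.card G.edgeSet := by
    refine Nat.eq_of_mul_eq_mul_left two_pos ?_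
    simpa only [mul_sum, two_mul_half, SimpleGraph.edgeFinset_card] using
      G.sum_degrees_eq_twice_card_edges
  obtain ⟨tail, htail_mem, htail_card⟩ :=
    exists_card_fiber_eq_of_card_le_sum_biUnion _ _ hall sum_half
  refine ⟨⟨tail, fun e => Sym2.mem_toFinset.1 (htail_mem e)⟩, fun v => ?_⟩
  rw [EdgeOrientation.outEdges, card_map, htail_card, two_mul_half]

end Graph

theorem stmt_2_general {V : Type*} [Fintype V] [DecidableEq V] (k : ℕ) (hk : 0 < k)
    (G : SimpleGraph V) [DecidableRel G.Adj] (hG : ∀ v, 2 * k ∣ G.degree v) :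
    HasStarDecomp G k fun v => G.degree v / (2 * k) := by
  obtain ⟨o, ho⟩ := exists_edgeOrientation_two_mul_card_outEdges_eq_degree fun v =>
    even_iff_two_dvd.2 (dvd_of_mul_right_dvd (hG v))
  refine o.hasStarDecomp hk.ne' fun v => Nat.eq_of_mul_eq_mul_left two_pos ?_
  calc 2 * #(o.outEdges v) = G.degree v / (2 * k) * (2 * k) := by rw [ho, Nat.div_mul_cancel (hG v)]
    _ = 2 * (G.degree v / (2 * k) * k) := by ring

theorem stmt_2 {V : Type*} [Fintype V] [DecidableEq V] (d k : ℕ) (hk : 0 < k)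
    (hd : 0 < d) (hdvd : 2 * k ∣ d) (G : SimpleGraph V) (hreg : IsRegularGraph G d) :
    HasStarDecomp G k (fun _ => d / (2 * k)) := by
  classical
  simpa only [hreg.degree_eq] using
    stmt_2_general k hk G fun v => by rwa [hreg.degree_eq v]
end
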